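/- Let β be an irrational real number, let λ1, λ2, λ3 ≥ 0 with at least one of them positive, and suppose max{1, λ2} ≤ λ1 + λ3 (region III of extended Harper's model). Let θ ∈ ℝ and let H be any bounded linear operator on ℓ²(ℤ, ℂ) satisfying (Hψ)_k = 2cos(2π(θ+βk))·ψ_k + c(θ+βk)·ψ_{k+1} + conj(c(θ+β(k−1)))·ψ_{k−1} for all ψ ∈ ℓ²(ℤ,ℂ) and k ∈ ℤ. Then for every real E in the spectrum of H, the Lyapunov exponent of the transfer-matrix cocycle satisfies L(β, A^E) = log(max{λ1, λ3}); equivalently, the Lyapunov exponent of extended Harper's model on the spectrum is zero throughout region III. -/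

import Mathlib

open MeasureTheory Filter Complex
open scoped ENNReal Real NNReal

noncomputable section

attribute [local instance] Matrix.frobeniusNormedAddCommGroup

/-- The `n`-step cocycle iterate `D^{(n)}_β(x) = D(x+(n-1)β)⋯D(x)`. -/
def cocycleIter (D : ℝ → Matrix (Fin 2) (Fin 2) ℂ) (β : ℝ) : ℕ → ℝ → Matrix (Fin 2) (Fin 2) ℂ
  | 0, _ => 1
  | n + 1, x => cocycleIter D β n (x + β) * D x

/-- The extended-real-valued integral `∫₀¹ log (g x) dx`, with value `-∞` allowed
(the positive and negative parts are integrated separately; `log 0 = -∞`). -/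
def logIntegral (g : ℝ → ℝ) : EReal :=
  ((∫⁻ x in Set.Ioc (0 : ℝ) 1, ENNReal.ofReal (Real.log (g x))) : EReal) -
    ((∫⁻ x in Set.Ioc (0 : ℝ) 1,
        if g x = 0 then (⊤ : ℝ≥0∞) else ENNReal.ofReal (-Real.log (g x))) : EReal)

/-- The Lyapunov exponent `L(β, D) = inf_{n ≥ 1} (1/n) ∫₀¹ log ‖D^{(n)}_β(x)‖ dx ∈ ℝ ∪ {-∞}`. -/
def lyapunov (β : ℝ) (D : ℝ → Matrix (Fin 2) (Fin 2) ℂ) : EReal :=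
  ⨅ n : ℕ, ((((n : ℝ) + 1)⁻¹ : ℝ) : EReal) * logIntegral fun x => ‖cocycleIter D β (n + 1) x‖

/-- `c(z) = λ₃ e^{-2πi(z+β/2)} + λ₂ + λ₁ e^{2πi(z+β/2)}` of extended Harper's model. -/
def harperC (lam1 lam2 lam3 β : ℝ) (z : ℂ) : ℂ :=
  (lam3 : ℂ) * Complex.exp (-(2 * (π : ℂ) * Complex.I) * (z + (β : ℂ) / 2)) + (lam2 : ℂ) +
    (lam1 : ℂ) * Complex.exp ((2 * (π : ℂ) * Complex.I) * (z + (β : ℂ) / 2))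

/-- `c̃(z) = λ₃ e^{2πi(z+β/2)} + λ₂ + λ₁ e^{-2πi(z+β/2)}`, the entire extension of
`x ↦ conj (c x)` from `ℝ`. -/
def harperCt (lam1 lam2 lam3 β : ℝ) (z : ℂ) : ℂ :=
  (lam3 : ℂ) * Complex.exp ((2 * (π : ℂ) * Complex.I) * (z + (β : ℂ) / 2)) + (lam2 : ℂ) +
    (lam1 : ℂ) * Complex.exp (-(2 * (π : ℂ) * Complex.I) * (z + (β : ℂ) / 2))

/-- The transfer matrix `A^E(z) = [[E - 2cos(2πz), -c̃(z-β)], [c(z), 0]]`. -/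
def harperA (lam1 lam2 lam3 β : ℝ) (E : ℂ) (z : ℂ) : Matrix (Fin 2) (Fin 2) ℂ :=
  !![E - 2 * Complex.cos (2 * (π : ℂ) * z), -harperCt lam1 lam2 lam3 β (z - (β : ℂ));
     harperC lam1 lam2 lam3 β z, 0]

namespace ExtendedHarper

/-- The character `e(z) = exp(2πiz)`. -/
def ee (z : ℂ) : ℂ := Complex.exp (2 * π * I * z)

lemma ee_add (z w : ℂ) : ee (z + w) = ee z * ee w := by
  simp only [ee, mul_add, Complex.exp_add]

@[simp] lemma ee_zero : ee 0 = 1 := by simp [ee]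

lemma ee_ne_zero (z : ℂ) : ee z ≠ 0 := Complex.exp_ne_zero _

lemma ee_neg (z : ℂ) : ee (-z) = (ee z)⁻¹ := by
  simp only [ee, mul_neg, Complex.exp_neg]

lemma ee_nat_mul (n : ℕ) (z : ℂ) : ee (n * z) = ee z ^ n := by
  simp only [ee, ← Complex.exp_nat_mul]
  congr 1; ring

lemma norm_ee (z : ℂ) : ‖ee z‖ = Real.exp (-2 * π * z.im) := by
  simp [ee, Complex.norm_exp]

@[simp] lemma norm_ee_ofReal (x : ℝ) : ‖ee x‖ = 1 := by simp [norm_ee]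

lemma ee_int (k : ℤ) : ee k = 1 := by
  simp only [ee]
  rw [Complex.exp_eq_one_iff]
  exact ⟨k, by ring⟩

lemma ee_nat (k : ℕ) : ee k = 1 := by
  simpa using ee_int k

lemma norm_ee_sub_ee_le (x y : ℝ) : ‖ee x - ee y‖ ≤ 2 * π * |x - y| := by
  have h : ee x - ee y = ee y * (Complex.exp (I * (2 * π * (x - y) : ℝ)) - 1) := by
    have : (x : ℂ) = y + (x - y : ℝ) := by push_cast; ring
    rw [mul_sub, mul_one]
    conv_lhs => rw [this, ee_add]
    congr 2
    unfold ee
    congr 1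
    push_cast; ring
  rw [h, norm_mul, norm_ee_ofReal, one_mul]
  refine Real.norm_exp_I_mul_ofReal_sub_one_le.trans ?_
  rw [Real.norm_eq_abs, abs_mul, abs_of_pos Real.two_pi_pos]

/-- Rational approximations of an irrational number with large denominator. -/
lemma exists_rat_near {β : ℝ} (hβ : Irrational β) (Q : ℕ) {η : ℝ} (hη : 0 < η) :
    ∃ r : ℚ, Q ≤ r.den ∧ |β - r| < 1 / (r.den : ℝ) ^ 2 ∧ |β - r| < η := by
  obtain ⟨Q', hQ'⟩ : ∃ Q' : ℕ, Q ≤ Q' ∧ 1 / (Q' : ℝ) < η ∧ 1 ≤ Q' := by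
    obtain ⟨k, hk⟩ := exists_nat_gt (1 / η)
    refine ⟨max Q (max k 1), le_max_left _ _, ?_, by simp⟩
    have h1 : (1 : ℝ) ≤ max Q (max k 1) := by exact_mod_cast (by simp)
    rw [div_lt_comm₀ (by linarith) hη]
    refine hk.trans_le ?_
    exact_mod_cast (le_max_left k 1).trans (le_max_right _ _)
  have hinf := Real.infinite_rat_abs_sub_lt_one_div_den_sq_of_irrational hβ
  by_contra! hcon
  refine hinf (Set.Finite.subset (s := (fun p : ℤ × ℕ => (p.1 / p.2 : ℚ)) ''
    ((Set.Icc (-⌈(|β| + 1) * Q'⌉) ⌈(|β| + 1) * Q'⌉) ×ˢ Set.Icc 0 Q')) ?_ ?_)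
  · exact Set.Finite.image _ ((Set.finite_Icc _ _).prod (Set.finite_Icc _ _))
  · intro r hr
    have hr' : |β - r| < 1 / (r.den : ℝ) ^ 2 := hr
    have hd : (1 : ℝ) ≤ r.den := by exact_mod_cast r.pos
    have hden : r.den ≤ Q' := by
      by_contra! hlt
      have hlt' : (Q' : ℝ) < r.den := by exact_mod_cast hlt
      have hQ1 : (1 : ℝ) ≤ Q' := by exact_mod_cast hQ'.2.2
      have h1 := hcon r (hQ'.1.trans hlt.le) hr'
      have h2 : 1 / (r.den : ℝ) ^ 2 ≤ 1 / Q' := by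
        apply one_div_le_one_div_of_le (by linarith)
        nlinarith
      linarith [hQ'.2.1]
    have h1 : 1 / (r.den : ℝ) ^ 2 ≤ 1 := by
      rw [div_le_one (by positivity)]; nlinarith
    have hra : |(r : ℝ)| ≤ |β| + 1 := by
      have := abs_sub_abs_le_abs_sub (r : ℝ) β
      rw [abs_sub_comm] at this
      linarith
    have hnum : |(r.num : ℝ)| ≤ (|β| + 1) * Q' := by
      have : (r.num : ℝ) = r * r.den := by exact_mod_cast (Rat.mul_den_eq_num r).symm
      rw [this, abs_mul, Nat.abs_cast]
      have : (r.den : ℝ) ≤ Q' := by exact_mod_cast hden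
      gcongr
    refine ⟨(r.num, r.den), ⟨⟨?_, ?_⟩, by simp, hden⟩, Rat.num_div_den r⟩
    · have := (abs_le.mp hnum).1
      have h3 := Int.le_ceil ((|β| + 1) * (Q' : ℝ))
      have : (-⌈(|β| + 1) * (Q' : ℝ)⌉ : ℝ) ≤ r.num := by linarith
      exact_mod_cast this
    · have := (abs_le.mp hnum).2
      have h3 := Int.le_ceil ((|β| + 1) * (Q' : ℝ))
      have : (r.num : ℝ) ≤ ⌈(|β| + 1) * (Q' : ℝ)⌉ := by linarith
      exact_mod_cast this

lemma isPrimitiveRoot_ee (r : ℚ) : IsPrimitiveRoot (ee (r : ℝ)) r.den := by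
  simpa [ee] using Complex.isPrimitiveRoot_exp_rat r

/-- Product of `x ζ^l - u` over a full period of a primitive root `ζ`. -/
lemma prod_sub_primitiveRoot {q : ℕ} (hq : 0 < q) {ζ : ℂ} (hζ : IsPrimitiveRoot ζ q) (x u : ℂ) :
    ∏ l ∈ Finset.range q, ‖x * ζ ^ l - u‖ = ‖x ^ q - u ^ q‖ := by
  have h := congrArg (Polynomial.eval u) (X_pow_sub_C_eq_prod hζ hq (rfl : x ^ q = x ^ q))
  simp only [Polynomial.eval_sub, Polynomial.eval_pow, Polynomial.eval_X, Polynomial.eval_C,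
    Polynomial.eval_prod] at h
  rw [norm_sub_rev, h, norm_prod]
  exact Finset.prod_congr rfl fun l _ => by rw [norm_sub_rev, mul_comm]

lemma norm_sub_le_norm_smul_sub {w u : ℂ} (hw : ‖w‖ = 1) (hu : ‖u‖ ≤ 1) {R : ℝ} (hR : 1 ≤ R) :
    ‖w - u‖ ≤ ‖(R : ℂ) * w - u‖ := by
  rw [← sq_le_sq₀ (norm_nonneg _) (norm_nonneg _), ← Complex.normSq_eq_norm_sq,
    ← Complex.normSq_eq_norm_sq, Complex.normSq_sub, Complex.normSq_sub, map_mul,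
    Complex.normSq_ofReal, Complex.normSq_eq_norm_sq w, hw, mul_assoc (R : ℂ),
    Complex.re_ofReal_mul]
  have : (w * (starRingEnd ℂ) u).re ≤ 1 := by
    refine (Complex.re_le_norm _).trans ?_
    rw [norm_mul, hw, RCLike.norm_conj]; linarith
  nlinarith

/-- Product over one period of a good rational approximation. -/
lemma prod_block_le {h : ℝ} (hh : 0 < h) {b : ℝ} {r : ℚ} (hb : |b - r| < 1 / (r.den : ℝ) ^ 2)
    {w u : ℂ} (hw : ‖w‖ = 1) (hu : ‖u‖ ≤ 1) :
    ∏ l ∈ Finset.range r.den, ‖w * ee ((l * b : ℝ)) - u‖ ≤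
      2 * (1 + h) ^ r.den * Real.exp (2 * π * (1 + h) / h) := by
  set q := r.den with hq
  set R := 1 + h with hR
  have hq0 : 0 < q := r.pos
  have hqR : (0 : ℝ) < q := by exact_mod_cast hq0
  have hpi := Real.pi_pos
  have key : ∀ l ∈ Finset.range q, ‖w * ee ((l * b : ℝ)) - u‖ ≤
      ‖((R : ℂ) * w) * ee (r : ℝ) ^ l - u‖ * Real.exp (2 * π * R / (q * h)) := by
    intro l hl
    have hl' : (l : ℝ) ≤ q := by exact_mod_cast (Finset.mem_range.mp hl).le
    have h1 : ‖w * ee ((l * b : ℝ)) - u‖ ≤ ‖(R : ℂ) * (w * ee ((l * b : ℝ))) - u‖ :=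
      norm_sub_le_norm_smul_sub (by rw [norm_mul, hw, norm_ee_ofReal, one_mul]) hu (by linarith)
    have h2 : ee (r : ℝ) ^ l = ee ((l * r : ℝ)) := by
      rw [← ee_nat_mul]; push_cast; rfl
    have h3 : h ≤ ‖((R : ℂ) * w) * ee (r : ℝ) ^ l - u‖ := by
      have := norm_sub_norm_le (((R : ℂ) * w) * ee (r : ℝ) ^ l) u
      rw [norm_mul, norm_mul, hw, norm_pow, norm_ee_ofReal, one_pow, Complex.norm_real,
        Real.norm_of_nonneg (by linarith)] at this
      linarith
    have h4 : ‖(R : ℂ) * (w * ee ((l * b : ℝ))) - u‖ ≤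
        ‖((R : ℂ) * w) * ee (r : ℝ) ^ l - u‖ + R * (2 * π / q) := by
      have e1 : (R : ℂ) * (w * ee ((l * b : ℝ))) - u = (((R : ℂ) * w) * ee (r : ℝ) ^ l - u) +
          (R : ℂ) * w * (ee ((l * b : ℝ)) - ee ((l * r : ℝ))) := by rw [h2]; ring
      rw [e1]
      refine (norm_add_le _ _).trans ?_
      rw [norm_mul ((R : ℂ) * w), norm_mul, hw, Complex.norm_real, Real.norm_of_nonneg (by linarith),
        mul_one]
      gcongr
      refine (norm_ee_sub_ee_le _ _).trans ?_
      rw [← mul_sub, abs_mul, Nat.abs_cast]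
      have : (l : ℝ) * |b - r| ≤ q * (1 / (q : ℝ) ^ 2) := by gcongr
      calc 2 * π * (l * |b - r|) ≤ 2 * π * (q * (1 / (q : ℝ) ^ 2)) := by gcongr
        _ = 2 * π / q := by field_simp
    have h5 : R * (2 * π / q) ≤ ‖((R : ℂ) * w) * ee (r : ℝ) ^ l - u‖ * (2 * π * R / (q * h)) := by
      calc R * (2 * π / q) = h * (2 * π * R / (q * h)) := by field_simp
        _ ≤ _ := by gcongr
    have h6 := Real.add_one_le_exp (2 * π * R / (q * h))
    calc _ ≤ ‖((R : ℂ) * w) * ee (r : ℝ) ^ l - u‖ * (2 * π * R / (q * h) + 1) := by linarith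
      _ ≤ _ := by gcongr
  refine (Finset.prod_le_prod (fun _ _ => norm_nonneg _) key).trans ?_
  rw [Finset.prod_mul_distrib, prod_sub_primitiveRoot hq0 (isPrimitiveRoot_ee r),
    Finset.prod_const, Finset.card_range, ← Real.exp_nat_mul]
  have e1 : (q : ℝ) * (2 * π * R / (q * h)) = 2 * π * R / h := by field_simp
  rw [e1]
  gcongr
  refine (norm_sub_le _ _).trans ?_
  rw [norm_pow, norm_pow, norm_mul, hw, Complex.norm_real, Real.norm_of_nonneg (by linarith),
    mul_one]
  have h1 : ‖u‖ ^ q ≤ 1 := pow_le_one₀ (norm_nonneg _) hu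
  have h2 : 1 ≤ R ^ q := one_le_pow₀ (by linarith)
  linarith

lemma norm_rot_sub_le_two {w u : ℂ} (hw : ‖w‖ = 1) (hu : ‖u‖ ≤ 1) (x : ℝ) :
    ‖w * ee x - u‖ ≤ 2 := by
  refine (norm_sub_le _ _).trans ?_
  rw [norm_mul, hw, norm_ee_ofReal]; linarith

/-- Subexponential upper bound for rotation products of `|w - u|`, uniform for frequencies
near an irrational one. -/
lemma prod_rotation_le {β : ℝ} (hβ : Irrational β) {κ : ℝ} (hκ : 0 < κ) :
    ∃ K η : ℝ, 1 ≤ K ∧ 0 < η ∧ ∀ b, |b - β| < η → ∀ w u : ℂ, ‖w‖ = 1 → ‖u‖ ≤ 1 → ∀ L : ℕ,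
      ∏ l ∈ Finset.range L, ‖w * ee ((l * b : ℝ)) - u‖ ≤ K * Real.exp (κ * L) := by
  have hpi := Real.pi_pos
  set h := κ / 2 with hh
  have hh0 : 0 < h := by positivity
  obtain ⟨Q, hQ⟩ := exists_nat_gt ((Real.log 2 + 2 * π * (1 + h) / h) / (κ / 2))
  obtain ⟨r, hrQ, hr, -⟩ := exists_rat_near hβ Q one_pos
  have hblock : ∀ b, |b - β| < 1 / (r.den : ℝ) ^ 2 - |β - r| → ∀ w u : ℂ, ‖w‖ = 1 → ‖u‖ ≤ 1 →
      ∏ l ∈ Finset.range r.den, ‖w * ee ((l * b : ℝ)) - u‖ ≤ Real.exp (κ * r.den) := by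
    intro b hb w u hw hu
    have hbr : |b - r| < 1 / (r.den : ℝ) ^ 2 := by
      have := abs_sub_le b β r; linarith
    refine (prod_block_le hh0 hbr hw hu).trans ?_
    have h1 : (1 + h) ^ r.den ≤ Real.exp (κ / 2 * r.den) := by
      rw [mul_comm, Real.exp_nat_mul]
      gcongr
      linarith [Real.add_one_le_exp (κ / 2)]
    have h2 : Real.log 2 + 2 * π * (1 + h) / h ≤ κ / 2 * r.den := by
      rw [div_lt_iff₀ (by positivity)] at hQ
      have : (Q : ℝ) ≤ r.den := by exact_mod_cast hrQ
      nlinarith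
    calc _ ≤ Real.exp (Real.log 2) * Real.exp (κ / 2 * r.den) *
          Real.exp (2 * π * (1 + h) / h) := by
          rw [Real.exp_log two_pos]; gcongr
      _ = Real.exp (Real.log 2 + 2 * π * (1 + h) / h + κ / 2 * r.den) := by
          rw [← Real.exp_add, ← Real.exp_add]; ring_nf
      _ ≤ _ := by
          apply Real.exp_le_exp.mpr; linarith
  refine ⟨2 ^ r.den, 1 / (r.den : ℝ) ^ 2 - |β - r|, one_le_pow₀ one_le_two, by linarith, ?_⟩
  intro b hb w u hw hu L
  induction L using Nat.strong_induction_on generalizing w with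
  | _ L ih =>
    rcases lt_or_ge L r.den with hL | hL
    · have h1 : ∏ l ∈ Finset.range L, ‖w * ee ((l * b : ℝ)) - u‖ ≤ ∏ l ∈ Finset.range L, (2 : ℝ) :=
        Finset.prod_le_prod (fun _ _ => norm_nonneg _) fun l _ => norm_rot_sub_le_two hw hu _
      rw [Finset.prod_const, Finset.card_range] at h1
      have h2 : (2 : ℝ) ^ L ≤ 2 ^ r.den := pow_le_pow_right₀ one_le_two hL.le
      have h3 : 1 ≤ Real.exp (κ * L) := Real.one_le_exp (by positivity)
      calc _ ≤ (2 : ℝ) ^ r.den * 1 := by linarith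
        _ ≤ _ := by gcongr
    · obtain ⟨M, rfl⟩ := Nat.exists_eq_add_of_le hL
      rw [Finset.prod_range_add]
      have h1 := hblock b hb w u hw hu
      have hw' : ‖w * ee ((r.den * b : ℝ))‖ = 1 := by rw [norm_mul, hw, norm_ee_ofReal, one_mul]
      have h2 := ih M (by have := r.pos; omega) (w * ee ((r.den * b : ℝ))) hw'
      have h3 : ∀ l : ℕ, w * ee ((r.den * b : ℝ)) * ee ((l * b : ℝ)) =
          w * ee (((r.den + l : ℕ) * b : ℝ)) := by
        intro l
        rw [mul_assoc, ← ee_add]; congr 2; push_cast; ring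
      simp only [h3] at h2
      calc _ ≤ Real.exp (κ * r.den) * (2 ^ r.den * Real.exp (κ * M)) := by
            gcongr
        _ = _ := by
            push_cast
            rw [mul_add, Real.exp_add]; ring

end ExtendedHarper

namespace ExtendedHarper

lemma four_div_le_norm_one_sub_pow {q : ℕ} {ζ : ℂ} (hζ : IsPrimitiveRoot ζ q) {l : ℕ}
    (hl0 : 0 < l) (hlq : l < q) : 4 / (q : ℝ) ≤ ‖1 - ζ ^ l‖ := by
  have hq : 0 < q := by omega
  have hqR : (0 : ℝ) < q := by exact_mod_cast hq
  have hpi := Real.pi_pos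
  have hne : NeZero q := ⟨hq.ne'⟩
  obtain ⟨k, hk, hkl⟩ := (Complex.isPrimitiveRoot_exp q hq.ne').eq_pow_of_pow_eq_one
    (ξ := ζ ^ l) (by rw [← pow_mul, mul_comm, pow_mul, hζ.pow_eq_one, one_pow])
  have hk0 : 0 < k := by
    rcases Nat.eq_zero_or_pos k with h | h
    · rw [h, pow_zero] at hkl
      exact absurd hkl.symm (hζ.pow_ne_one_of_pos_of_lt hl0.ne' hlq)
    · exact h
  have hexp : ζ ^ l = Complex.exp (I * (2 * (π * k / q) : ℝ)) := by
    rw [← hkl, ← Complex.exp_nat_mul]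
    congr 1; push_cast; ring
  rw [hexp, norm_sub_rev, Complex.norm_exp_I_mul_ofReal_sub_one, mul_div_cancel_left₀ _ two_ne_zero]
  have hkR : (1 : ℝ) ≤ k := by exact_mod_cast hk0
  have hkq : (k : ℝ) + 1 ≤ q := by exact_mod_cast hk
  have hsin : 2 / q ≤ Real.sin (π * k / q) := by
    rcases le_total (2 * (k : ℝ)) q with h | h
    · refine le_trans ?_ (Real.mul_le_sin (by positivity) ?_)
      · rw [show 2 / π * (π * k / q) = 2 * k / q by field_simp]
        gcongr; linarith
      · rw [div_le_div_iff₀ hqR two_pos]; nlinarith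
    · rw [← Real.sin_pi_sub]
      have e : π - π * k / q = π * (q - k) / q := by field_simp
      rw [e]
      refine le_trans ?_ (Real.mul_le_sin (div_nonneg (mul_nonneg hpi.le (by linarith)) hqR.le) ?_)
      · rw [show 2 / π * (π * ((q : ℝ) - k) / q) = 2 * (q - k) / q by field_simp]
        gcongr; linarith
      · rw [div_le_div_iff₀ hqR two_pos]; nlinarith
  rw [norm_mul, Real.norm_two]
  have := Real.le_norm_self (Real.sin (π * k / q))
  calc 4 / (q : ℝ) = 2 * (2 / q) := by ring
    _ ≤ _ := by linarith

lemma exp_neg_four_mul_le {τ : ℝ} (h0 : 0 ≤ τ) (h1 : τ ≤ 1 / 4) :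
    Real.exp (-(4 * τ)) ≤ 1 - 2 * τ := by
  rw [Real.exp_neg]
  have h2 := Real.add_one_le_exp (4 * τ)
  refine (inv_anti₀ (by linarith) h2).trans ?_
  rw [inv_le_iff_one_le_mul₀ (by linarith)]
  nlinarith

/-- Along suitable lengths the products `∏ |1 - e(lβ)|` are not exponentially small. -/
lemma exists_prod_one_sub_ge {β : ℝ} (hβ : Irrational β) {κ : ℝ} (hκ : 0 < κ) (N₀ : ℕ) :
    ∃ N : ℕ, N₀ ≤ N ∧ ∀ L < N,
      Real.exp (-(κ * N)) ≤ ∏ l ∈ Finset.range L, ‖1 - ee (((l + 1 : ℕ) * β : ℝ))‖ := by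
  have hpi := Real.pi_pos
  set τ := min (κ / 16) (1 / 8) with hτ
  have hτ0 : 0 < τ := by positivity
  have hτ1 : τ ≤ 1 / 8 := min_le_right _ _
  have hτκ : τ ≤ κ / 16 := min_le_left _ _
  obtain ⟨K, η, hK, hη, hU⟩ := prod_rotation_le hβ (κ := κ * τ / 8) (by positivity)
  obtain ⟨Q, hQ⟩ := exists_nat_gt ((N₀ + 1 + (κ / 8 + Real.log K) / (κ / 2)) / τ)
  obtain ⟨r, hrQ, hr, hrη⟩ := exists_rat_near hβ Q hη
  set q := r.den with hq
  have hq0 : 0 < q := r.pos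
  have hqR : (0 : ℝ) < q := by exact_mod_cast hq0
  have hlogK : 0 ≤ Real.log K := Real.log_nonneg hK
  have hτq : N₀ + 1 + (κ / 8 + Real.log K) / (κ / 2) < τ * q := by
    rw [div_lt_iff₀ hτ0] at hQ
    have : (Q : ℝ) ≤ q := by exact_mod_cast hrQ
    nlinarith
  have hN1 := Nat.floor_le (mul_nonneg hτ0.le hqR.le)
  have hN2 := Nat.lt_floor_add_one (τ * q)
  set N := ⌊τ * q⌋₊ with hN
  have hfrac : 0 ≤ (κ / 8 + Real.log K) / (κ / 2) := by positivity
  refine ⟨N, ?_, ?_⟩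
  · have : (N₀ : ℝ) < N := by linarith
    exact_mod_cast this.le
  intro L hL
  have hLN : (L : ℝ) + 1 ≤ N := by exact_mod_cast hL
  have hLq : L < q := by
    have : (L : ℝ) < q := by nlinarith
    exact_mod_cast this
  set ζ := ee (r : ℝ) with hζdef
  have hζ : IsPrimitiveRoot ζ q := isPrimitiveRoot_ee r
  have hpow : ∀ l : ℕ, ζ ^ l = ee ((l * r : ℝ)) := fun l => by
    rw [hζdef, ← ee_nat_mul]; push_cast; rfl
  have hone : ∀ l ∈ Finset.range L, ‖1 - ζ ^ (l + 1)‖ * Real.exp (-(4 * τ)) ≤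
      ‖1 - ee (((l + 1 : ℕ) * β : ℝ))‖ := by
    intro l hl
    have hl' := Finset.mem_range.mp hl
    have hlL : ((l + 1 : ℕ) : ℝ) ≤ L := by exact_mod_cast hl'
    have h4 := four_div_le_norm_one_sub_pow hζ (Nat.succ_pos l) (by omega)
    have h5 : ‖ee (((l + 1 : ℕ) * β : ℝ)) - ζ ^ (l + 1)‖ ≤ 2 * τ * (4 / q) := by
      rw [hpow]
      refine (norm_ee_sub_ee_le _ _).trans ?_
      rw [← mul_sub, abs_mul, Nat.abs_cast]
      have h6 : ((l + 1 : ℕ) : ℝ) * |β - r| ≤ (τ * q) * (1 / (q : ℝ) ^ 2) := by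
        gcongr; linarith
      calc 2 * π * (((l + 1 : ℕ) : ℝ) * |β - r|) ≤ 2 * 4 * ((τ * q) * (1 / (q : ℝ) ^ 2)) := by
            have := Real.pi_le_four
            gcongr
        _ = 2 * τ * (4 / q) := by field_simp
    have h7 : ‖1 - ζ ^ (l + 1)‖ ≤ ‖1 - ee (((l + 1 : ℕ) * β : ℝ))‖ +
        ‖ee (((l + 1 : ℕ) * β : ℝ)) - ζ ^ (l + 1)‖ := by
      refine le_trans (le_of_eq ?_) (norm_add_le _ _)
      congr 1; ring
    have h8 := exp_neg_four_mul_le hτ0.le (by linarith : τ ≤ 1 / 4)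
    calc _ ≤ ‖1 - ζ ^ (l + 1)‖ * (1 - 2 * τ) := by gcongr
      _ ≤ _ := by nlinarith
  have hprod := Finset.prod_le_prod (fun l _ => by positivity) hone
  rw [Finset.prod_mul_distrib, Finset.prod_const, Finset.card_range, ← Real.exp_nat_mul] at hprod
  refine le_trans ?_ hprod
  -- the full product over a period equals `q`
  obtain ⟨n, hn⟩ : ∃ n, q = n + 1 := ⟨q - 1, by omega⟩
  obtain ⟨M, hM⟩ : ∃ M, n = L + M := ⟨n - L, by omega⟩
  have hfull : ‖∏ k ∈ Finset.range n, (1 - ζ ^ (k + 1))‖ = q := by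
    rw [(hn ▸ hζ : IsPrimitiveRoot ζ (n + 1)).prod_one_sub_pow_eq_order, hn]
    rw [← Nat.cast_add_one, Complex.norm_natCast]
  rw [norm_prod, hM, Finset.prod_range_add] at hfull
  have htail : ∏ k ∈ Finset.range M, ‖1 - ζ ^ (L + k + 1)‖ ≤ K * Real.exp (κ * τ / 8 * q) := by
    have h1 := hU r (by rwa [abs_sub_comm]) (ζ ^ (L + 1)) 1
      (by rw [norm_pow, hζdef, norm_ee_ofReal, one_pow]) (by simp) M
    have h2 : ∀ k ∈ Finset.range M, ‖1 - ζ ^ (L + k + 1)‖ =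
        ‖ζ ^ (L + 1) * ee ((k * (r : ℝ) : ℝ)) - 1‖ := by
      intro k _
      rw [← hpow, ← pow_add, norm_sub_rev]; ring_nf
    rw [Finset.prod_congr rfl h2]
    refine h1.trans ?_
    have : (M : ℝ) ≤ q := by exact_mod_cast (by omega : M ≤ q)
    gcongr
  have hKe : 0 < K * Real.exp (κ * τ / 8 * q) := by positivity
  have hq1 : (1 : ℝ) ≤ q := by exact_mod_cast hq0
  have hlow : (K * Real.exp (κ * τ / 8 * q))⁻¹ ≤ ∏ k ∈ Finset.range L, ‖1 - ζ ^ (k + 1)‖ := by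
    rw [inv_le_iff_one_le_mul₀ hKe]
    refine (hq1.trans_eq hfull.symm).trans ?_
    gcongr
  calc Real.exp (-(κ * N)) ≤ (Real.exp (Real.log K) * Real.exp (κ * τ / 8 * q))⁻¹ *
        Real.exp (L * -(4 * τ)) := by
        rw [← Real.exp_add, ← Real.exp_neg, ← Real.exp_add]
        apply Real.exp_le_exp.mpr
        have h1 : κ * τ / 8 * q ≤ κ / 8 * (N + 1) := by nlinarith
        have h2 : (L : ℝ) * (4 * τ) ≤ N * (κ / 4) := by
          apply mul_le_mul <;> first | positivity | linarith
        have h3 : κ / 8 + Real.log K ≤ κ / 2 * N := by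
          have : (κ / 8 + Real.log K) / (κ / 2) ≤ N := by
            have : (0 : ℝ) ≤ N₀ := by positivity
            linarith
          rwa [div_le_iff₀' (by positivity)] at this
        nlinarith
    _ = (K * Real.exp (κ * τ / 8 * q))⁻¹ * Real.exp (L * -(4 * τ)) := by
        rw [Real.exp_log (by linarith)]
    _ ≤ _ := by gcongr

/-- Exponentials absorb polynomial factors. -/
lemma eventually_mul_pow_le_exp {κ : ℝ} (hκ : 0 < κ) (C : ℝ) (k : ℕ) :
    ∀ᶠ n : ℕ in atTop, C * ((n : ℝ) + 1) ^ k ≤ Real.exp (κ * n) := by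
  have h := (isLittleO_pow_exp_pos_mul_atTop k hκ).bound
    (c := Real.exp (-κ) / (|C| + 1)) (by positivity)
  have ht : Tendsto (fun n : ℕ => (n : ℝ) + 1) atTop atTop :=
    tendsto_atTop_add_const_right _ _ tendsto_natCast_atTop_atTop
  filter_upwards [ht.eventually h] with n hn
  rw [Real.norm_of_nonneg (by positivity), Real.norm_of_nonneg (by positivity)] at hn
  have h1 : C * ((n : ℝ) + 1) ^ k ≤ (|C| + 1) * ((n : ℝ) + 1) ^ k := by
    gcongr; linarith [le_abs_self C]
  refine h1.trans ?_
  calc _ ≤ (|C| + 1) * (Real.exp (-κ) / (|C| + 1) * Real.exp (κ * ((n : ℝ) + 1))) := by gcongr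
    _ = Real.exp (-κ) * Real.exp (κ * ((n : ℝ) + 1)) := by field_simp
    _ = Real.exp (κ * n) := by rw [← Real.exp_add]; ring_nf

lemma prod_range_erase {f : ℕ → ℝ} {i M : ℕ} :
    ∏ j ∈ (Finset.range (i + 1 + M)).erase i, f j =
      (∏ j ∈ Finset.range i, f j) * ∏ j ∈ Finset.range M, f (i + 1 + j) := by
  classical
  have h1 : ∏ j ∈ (Finset.range (i + 1 + M)).erase i, f j =
      ∏ j ∈ (Finset.range (i + 1 + M)).erase i, (if j = i then 1 else f j) :=
    Finset.prod_congr rfl fun j hj => by rw [if_neg (Finset.ne_of_mem_erase hj)]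
  rw [h1, Finset.prod_erase _ (by simp), Finset.prod_range_add, Finset.prod_range_succ, if_pos rfl,
    mul_one]
  congr 1
  · exact Finset.prod_congr rfl fun j hj => by
      rw [if_neg (Finset.mem_range.mp hj).ne]
  · exact Finset.prod_congr rfl fun j _ => by rw [if_neg (by omega)]

lemma norm_ee_sub_ee (x y : ℝ) : ‖ee x - ee y‖ = ‖1 - ee ((x - y : ℝ))‖ := by
  have : ee x - ee y = ee y * (ee ((x - y : ℝ)) - 1) := by
    rw [mul_sub, ← ee_add]; congr 2 <;> [(push_cast; ring); simp]
  rw [this, norm_mul, norm_ee_ofReal, one_mul, norm_sub_rev]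

/-- Along suitable lengths, a polynomial is controlled on the whole circle by its values on an
orbit segment of the irrational rotation. -/
lemma exists_norm_eval_le_of_orbit {β : ℝ} (hβ : Irrational β) {κ : ℝ} (hκ : 0 < κ) (N₀ : ℕ) :
    ∃ N : ℕ, N₀ ≤ N ∧ ∀ p : Polynomial ℂ, p.degree < N → ∀ (r y η : ℝ),
      (∀ j < N, ‖p.eval (r * ee ((y + j * β : ℝ)))‖ ≤ η) →
      ∀ y' : ℝ, ‖p.eval (r * ee y')‖ ≤ η * Real.exp (κ * N) := by
  obtain ⟨K, η₀, hK, hη₀, hU⟩ := prod_rotation_le hβ (κ := κ / 8) (by positivity)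
  obtain ⟨N₁, hN₁⟩ := eventually_atTop.mp
    (eventually_mul_pow_le_exp (κ := κ / 4) (by positivity) (K ^ 2) 1)
  obtain ⟨N, hN, hden⟩ := exists_prod_one_sub_ge hβ (κ := κ / 8) (by positivity) (max N₀ (max N₁ 1))
  have hNN₁ : N₁ ≤ N := (le_max_left _ _).trans ((le_max_right _ _).trans hN)
  refine ⟨N, (le_max_left _ _).trans hN, ?_⟩
  -- it suffices to treat the unit circle
  suffices hunit : ∀ p : Polynomial ℂ, p.degree < N → ∀ (y η : ℝ),
      (∀ j < N, ‖p.eval (ee ((y + j * β : ℝ)))‖ ≤ η) →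
      ∀ y' : ℝ, ‖p.eval (ee y')‖ ≤ η * Real.exp (κ * N) by
    intro p hp r y η hη y'
    have h1 : ∀ w, (p.comp (Polynomial.C (r : ℂ) * Polynomial.X)).eval w = p.eval (r * w) := by
      intro w; simp
    simp only [← h1] at hη ⊢
    refine hunit _ ?_ y η hη y'
    refine lt_of_le_of_lt ?_ hp
    by_cases hp0 : p = 0
    · simp [hp0]
    rw [Polynomial.degree_eq_natDegree hp0]
    refine Polynomial.degree_le_of_natDegree_le (Polynomial.natDegree_comp_le.trans ?_)
    have := Polynomial.natDegree_C_mul_le (r : ℂ) (Polynomial.X)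
    rw [Polynomial.natDegree_X] at this
    nlinarith
  intro p hp y η hη y'
  set v : ℕ → ℂ := fun j => ee ((y + j * β : ℝ)) with hv
  have hterm : ∀ i < N, Real.exp (-(κ / 4 * N)) ≤
      ∏ j ∈ (Finset.range N).erase i, ‖v i - v j‖ := by
    intro i hi
    obtain ⟨M, rfl⟩ : ∃ M, N = i + 1 + M := ⟨N - (i + 1), by omega⟩
    rw [prod_range_erase]
    have h1 : ∏ j ∈ Finset.range i, ‖v i - v j‖ =
        ∏ l ∈ Finset.range i, ‖1 - ee (((l + 1 : ℕ) * β : ℝ))‖ := by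
      rw [← Finset.prod_range_reflect]
      refine Finset.prod_congr rfl fun j hj => ?_
      have hj' := Finset.mem_range.mp hj
      simp only [hv]
      rw [norm_ee_sub_ee]
      congr 4
      have : ((i - 1 - j : ℕ) : ℝ) = i - (j + 1) := by
        rw [Nat.sub_sub, Nat.cast_sub (by omega)]; push_cast; ring
      rw [this]; push_cast; ring
    have h2 : ∏ j ∈ Finset.range M, ‖v i - v (i + 1 + j)‖ =
        ∏ l ∈ Finset.range M, ‖1 - ee (((l + 1 : ℕ) * β : ℝ))‖ := by
      refine Finset.prod_congr rfl fun j _ => ?_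
      simp only [hv]
      rw [norm_sub_rev, norm_ee_sub_ee]
      congr 4
      push_cast; ring
    rw [h1, h2]
    have h3 := hden i hi
    have h4 := hden M (by omega)
    calc Real.exp (-(κ / 4 * (i + 1 + M : ℕ))) = Real.exp (-(κ / 8 * (i + 1 + M : ℕ))) *
          Real.exp (-(κ / 8 * (i + 1 + M : ℕ))) := by rw [← Real.exp_add]; ring_nf
      _ ≤ _ := by gcongr
  have hne : ∀ i < N, ∀ j < N, i ≠ j → v i ≠ v j := by
    intro i hi j hj hij heq
    have h1 := hterm i hi
    rw [Finset.prod_eq_zero (i := j) (Finset.mem_erase.mpr ⟨hij.symm, Finset.mem_range.mpr hj⟩)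
      (by rw [heq, sub_self, norm_zero])] at h1
    exact absurd h1 (not_le.mpr (Real.exp_pos _))
  have hinj : Set.InjOn v (Finset.range N) := by
    intro i hi j hj hij
    by_contra h
    exact hne i (by simpa using hi) j (by simpa using hj) h hij
  have hnum : ∀ i < N, ∏ j ∈ (Finset.range N).erase i, ‖ee y' - v j‖ ≤
      K ^ 2 * Real.exp (κ / 4 * N) := by
    intro i hi
    obtain ⟨M, rfl⟩ : ∃ M, N = i + 1 + M := ⟨N - (i + 1), by omega⟩
    rw [prod_range_erase]
    have hb : ∀ (x : ℝ) (L : ℕ), L ≤ i + 1 + M → ∏ j ∈ Finset.range L,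
        ‖ee y' - ee ((x + j * β : ℝ))‖ ≤ K * Real.exp (κ / 8 * (i + 1 + M : ℕ)) := by
      intro x L hL
      have h1 := hU β (by simpa using hη₀) (ee x) (ee y') (norm_ee_ofReal _) (norm_ee_ofReal _).le L
      have h2 : ∀ j : ℕ, ‖ee y' - ee ((x + j * β : ℝ))‖ = ‖ee x * ee ((j * β : ℝ)) - ee y'‖ := by
        intro j
        rw [norm_sub_rev, ← ee_add]; push_cast; rfl
      simp only [h2]
      refine h1.trans ?_
      gcongr
    have h1 := hb y i (by omega)
    have h2 := hb (y + (i + 1 : ℕ) * β) M (by omega)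
    have h3 : ∀ j : ℕ, v (i + 1 + j) = ee ((y + (i + 1 : ℕ) * β + j * β : ℝ)) := by
      intro j; simp only [hv]; congr 2; push_cast; ring
    simp only [h3]
    calc _ ≤ (K * Real.exp (κ / 8 * (i + 1 + M : ℕ))) * (K * Real.exp (κ / 8 * (i + 1 + M : ℕ))) := by
          gcongr
      _ = K ^ 2 * (Real.exp (κ / 8 * (i + 1 + M : ℕ)) * Real.exp (κ / 8 * (i + 1 + M : ℕ))) := by
          ring
      _ = _ := by rw [← Real.exp_add]; ring_nf
  have hη0 : 0 ≤ η := by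
    have h1N : 1 ≤ N := (le_max_right _ _).trans ((le_max_right _ _).trans hN)
    exact (norm_nonneg _).trans (hη 0 h1N)
  rw [Lagrange.eq_interpolate (f := p) hinj (by rwa [Finset.card_range]), Lagrange.interpolate_apply,
    Polynomial.eval_finsetSum]
  have hsum : ∀ i ∈ Finset.range N, ‖(Polynomial.C (p.eval (v i)) *
      Lagrange.basis (Finset.range N) v i).eval (ee y')‖ ≤ η * (K ^ 2 * Real.exp (κ / 2 * N)) := by
    intro i hi
    have hi' := Finset.mem_range.mp hi
    rw [Polynomial.eval_mul, Polynomial.eval_C, norm_mul]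
    refine mul_le_mul (hη i hi') ?_ (norm_nonneg _) hη0
    rw [Lagrange.basis, Polynomial.eval_prod, norm_prod]
    have h1 : ∀ j ∈ (Finset.range N).erase i, ‖(Lagrange.basisDivisor (v i) (v j)).eval (ee y')‖ =
        ‖ee y' - v j‖ / ‖v i - v j‖ := by
      intro j _
      simp [Lagrange.basisDivisor, div_eq_inv_mul]
    rw [Finset.prod_congr rfl h1, Finset.prod_div_distrib,
      div_le_iff₀ ((Real.exp_pos _).trans_le (hterm i hi'))]
    refine (hnum i hi').trans ?_
    calc _ = K ^ 2 * Real.exp (κ / 2 * N) * Real.exp (-(κ / 4 * N)) := by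
          rw [mul_assoc, ← Real.exp_add]; ring_nf
      _ ≤ _ := by gcongr; exact hterm i hi'
  refine (norm_sum_le_of_le _ hsum).trans ?_
  rw [Finset.sum_const, Finset.card_range, nsmul_eq_mul]
  have h5 := hN₁ N hNN₁
  rw [pow_one] at h5
  calc (N : ℝ) * (η * (K ^ 2 * Real.exp (κ / 2 * N)))
      = η * ((K ^ 2 * N) * Real.exp (κ / 2 * N)) := by ring
    _ ≤ η * (Real.exp (κ / 4 * N) * Real.exp (κ / 2 * N)) := by
        gcongr
        refine le_trans ?_ h5
        gcongr; linarith
    _ ≤ η * Real.exp (κ * N) := by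
        rw [← Real.exp_add]
        gcongr
        have : (0 : ℝ) ≤ κ * N := by positivity
        nlinarith

end ExtendedHarper

namespace ExtendedHarper

/-- The point `x + iε`. -/
def pt (x ε : ℝ) : ℂ := x + ε * I

lemma pt_add (x ε b : ℝ) : pt x ε + b = pt (x + b) ε := by
  simp only [pt]; push_cast; ring

@[simp] lemma pt_zero (x : ℝ) : pt x 0 = x := by simp [pt]

@[simp] lemma pt_im (x ε : ℝ) : (pt x ε).im = ε := by simp [pt]

lemma ee_pt (x ε : ℝ) : ee (pt x ε) = (Real.exp (-2 * π * ε) : ℝ) * ee x := by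
  rw [pt, ee_add, mul_comm]
  congr 1
  rw [ee, Complex.ofReal_exp]
  congr 1
  push_cast
  linear_combination (2 * π * ε) * Complex.I_mul_I

lemma exists_ee_eq {w : ℂ} (hw : ‖w‖ = 1) : ∃ x : ℝ, ee x = w := by
  refine ⟨w.arg / (2 * π), ?_⟩
  have h := Complex.norm_mul_exp_arg_mul_I w
  rw [hw, Complex.ofReal_one, one_mul] at h
  refine Eq.trans ?_ h
  rw [ee]
  congr 1
  have : (π : ℂ) ≠ 0 := by exact_mod_cast Real.pi_ne_zero
  push_cast
  field_simp

lemma norm_coeff_mul_le (P : Polynomial ℂ) {r B : ℝ} (hr : 0 ≤ r)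
    (hB : ∀ x : ℝ, ‖P.eval (r * ee x)‖ ≤ B) (i : ℕ) : ‖P.coeff i‖ * r ^ i ≤ B := by
  have hB0 : 0 ≤ B := (norm_nonneg _).trans (hB 0)
  set p := P.comp (Polynomial.C (r : ℂ) * Polynomial.X) with hp
  have hpe : ∀ w, p.eval w = P.eval (r * w) := by intro w; simp [hp]
  have hpc : p.coeff i = P.coeff i * (r : ℂ) ^ i := by
    rw [hp, Polynomial.comp_C_mul_X_coeff]
  have h1 : Real.circleAverage (fun z => ‖p.eval z‖ ^ 2) 0 1 ≤ B ^ 2 := by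
    refine Real.circleAverage_mono_on_of_le_circle ?_ ?_
    · exact ContinuousOn.circleIntegrable zero_le_one (by fun_prop)
    · intro w hw
      obtain ⟨x, rfl⟩ := exists_ee_eq (w := w) (by simpa using hw)
      have := hB x
      simp only [hpe]
      gcongr
  rw [← p.sum_sq_norm_coeff_eq_circleAverage] at h1
  have h2 : ‖p.coeff i‖ ^ 2 ≤ B ^ 2 := by
    by_cases hi : i ∈ p.support
    · exact (Finset.single_le_sum (f := fun i => ‖p.coeff i‖ ^ 2)
        (fun _ _ => by positivity) hi).trans h1
    · rw [Polynomial.notMem_support_iff.mp hi]; simp; positivity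
  have h3 := abs_le_of_sq_le_sq h2 hB0
  rwa [abs_norm, hpc, norm_mul, norm_pow, Complex.norm_real, Real.norm_of_nonneg hr] at h3

/-- `P` represents `F` as a Laurent polynomial of degree at most `n` in `e(z)`. -/
def LaurentRep (n : ℕ) (P : Polynomial ℂ) (F : ℂ → ℂ) : Prop :=
  P.natDegree ≤ 2 * n ∧ ∀ z, F z = ee (-(n * z)) * P.eval (ee z)

/-- `F` is a Laurent polynomial of degree at most `n` in `e(z)`. -/
def IsLaurent (n : ℕ) (F : ℂ → ℂ) : Prop := ∃ P, LaurentRep n P F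

lemma IsLaurent.add {n : ℕ} {F G : ℂ → ℂ} (hF : IsLaurent n F) (hG : IsLaurent n G) :
    IsLaurent n (fun z => F z + G z) := by
  obtain ⟨P, hP, hFP⟩ := hF
  obtain ⟨Q, hQ, hGQ⟩ := hG
  refine ⟨P + Q, (Polynomial.natDegree_add_le _ _).trans (max_le hP hQ), fun z => ?_⟩
  dsimp only
  rw [hFP, hGQ, Polynomial.eval_add]; ring

lemma IsLaurent.mul {n m : ℕ} {F G : ℂ → ℂ} (hF : IsLaurent n F) (hG : IsLaurent m G) :
    IsLaurent (n + m) (fun z => F z * G z) := by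
  obtain ⟨P, hP, hFP⟩ := hF
  obtain ⟨Q, hQ, hGQ⟩ := hG
  refine ⟨P * Q, Polynomial.natDegree_mul_le.trans (by omega), fun z => ?_⟩
  have : -(((n + m : ℕ) : ℂ) * z) = -(n * z) + -(m * z) := by push_cast; ring
  dsimp only
  rw [hFP, hGQ, Polynomial.eval_mul, this, ee_add]; ring

lemma isLaurent_const (n : ℕ) (a : ℂ) : IsLaurent n (fun _ => a) := by
  refine ⟨Polynomial.C a * Polynomial.X ^ n,
    (Polynomial.natDegree_C_mul_X_pow_le a n).trans (by omega), fun z => ?_⟩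
  simp only [Polynomial.eval_mul, Polynomial.eval_C, Polynomial.eval_pow, Polynomial.eval_X]
  rw [← ee_nat_mul, mul_left_comm, ← ee_add]; simp

lemma IsLaurent.const_mul {n : ℕ} {F : ℂ → ℂ} (hF : IsLaurent n F) (a : ℂ) :
    IsLaurent n (fun z => a * F z) := by
  simpa using (isLaurent_const 0 a).mul hF

lemma isLaurent_ee : IsLaurent 1 ee := by
  refine ⟨Polynomial.X ^ 2, by simp, fun z => ?_⟩
  simp only [Polynomial.eval_pow, Polynomial.eval_X, Nat.cast_one, one_mul]
  rw [← ee_nat_mul, ← ee_add]; congr 1; push_cast; ring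

lemma isLaurent_ee_neg : IsLaurent 1 (fun z => ee (-z)) :=
  ⟨1, by simp, fun z => by simp⟩

lemma IsLaurent.comp_add {n : ℕ} {F : ℂ → ℂ} (hF : IsLaurent n F) (a : ℂ) :
    IsLaurent n (fun z => F (z + a)) := by
  obtain ⟨P, hP, hFP⟩ := hF
  refine ⟨Polynomial.C (ee (-(n * a))) * P.comp (Polynomial.C (ee a) * Polynomial.X), ?_, ?_⟩
  · refine (Polynomial.natDegree_C_mul_le _ _).trans (Polynomial.natDegree_comp_le.trans ?_)
    have := Polynomial.natDegree_C_mul_le (ee a) (Polynomial.X)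
    rw [Polynomial.natDegree_X] at this
    nlinarith
  · intro z
    have : -((n : ℂ) * (z + a)) = -(n * z) + -(n * a) := by ring
    dsimp only
    rw [hFP, this, ee_add, ee_add]
    simp only [Polynomial.eval_mul, Polynomial.eval_C, Polynomial.eval_comp, Polynomial.eval_X]
    rw [mul_comm (ee z)]; ring

lemma LaurentRep.norm_eval_eq {n : ℕ} {P : Polynomial ℂ} {F : ℂ → ℂ} (h : LaurentRep n P F)
    (x ε : ℝ) : ‖P.eval ((Real.exp (-2 * π * ε) : ℝ) * ee x)‖ =
      Real.exp (-2 * π * ε * n) * ‖F (pt x ε)‖ := by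
  have him : (-((n : ℂ) * pt x ε)).im = -(n * ε) := by simp [pt]
  rw [h.2, norm_mul, norm_ee, him, ← ee_pt, ← mul_assoc, ← Real.exp_add]
  rw [show -2 * π * ε * n + -2 * π * -(n * ε) = 0 by ring, Real.exp_zero, one_mul]

/-- Cauchy's estimate for the coefficients on a horizontal line. -/
lemma LaurentRep.norm_coeff_le {n : ℕ} {P : Polynomial ℂ} {F : ℂ → ℂ} (h : LaurentRep n P F)
    {ε B : ℝ} (hB : ∀ x, ‖F (pt x ε)‖ ≤ B) (i : ℕ) :
    ‖P.coeff i‖ * Real.exp (-2 * π * ε * ((i : ℝ) - n)) ≤ B := by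
  have h1 := norm_coeff_mul_le P (r := Real.exp (-2 * π * ε)) (B := Real.exp (-2 * π * ε * n) * B)
    (Real.exp_pos _).le (fun x => by rw [h.norm_eval_eq]; gcongr; exact hB x) i
  rw [← Real.exp_nat_mul] at h1
  rw [mul_sub, Real.exp_sub, ← mul_div_assoc, div_le_iff₀ (Real.exp_pos _), mul_comm B]
  rwa [mul_comm (-2 * π * ε) (i : ℝ)]

lemma LaurentRep.eq_sum {n : ℕ} {P : Polynomial ℂ} {F : ℂ → ℂ} (h : LaurentRep n P F) (z : ℂ) :
    F z = ∑ i ∈ Finset.range (2 * n + 1), P.coeff i * ee (((i : ℂ) - n) * z) := by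
  rw [h.2, Polynomial.eval_eq_sum_range' (n := 2 * n + 1) (by have := h.1; omega), Finset.mul_sum]
  refine Finset.sum_congr rfl fun i _ => ?_
  rw [← ee_nat_mul, mul_left_comm, ← ee_add]
  congr 2; ring

lemma norm_ee_mul_pt (t x ε : ℝ) : ‖ee ((t : ℂ) * pt x ε)‖ = Real.exp (-2 * π * ε * t) := by
  rw [norm_ee]
  congr 1
  simp [pt]; ring

/-- Change of horizontal line. -/
lemma IsLaurent.norm_le_of_line {n : ℕ} {F : ℂ → ℂ} (h : IsLaurent n F)
    {ε B : ℝ} (hB : ∀ x, ‖F (pt x ε)‖ ≤ B) (x ε' : ℝ) :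
    ‖F (pt x ε')‖ ≤ (2 * n + 1) * (B * Real.exp (2 * π * n * |ε - ε'|)) := by
  obtain ⟨P, hP⟩ := h
  rw [hP.eq_sum]
  have hterm : ∀ i ∈ Finset.range (2 * n + 1), ‖P.coeff i * ee (((i : ℂ) - n) * pt x ε')‖ ≤
      B * Real.exp (2 * π * n * |ε - ε'|) := by
    intro i hi
    have h1 := norm_ee_mul_pt ((i : ℝ) - n) x ε'
    push_cast at h1
    rw [norm_mul, h1]
    have h2 := hP.norm_coeff_le hB i
    have h3 : Real.exp (-2 * π * ε' * ((i : ℝ) - n)) = Real.exp (-2 * π * ε * ((i : ℝ) - n)) *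
        Real.exp (2 * π * (((i : ℝ) - n) * (ε - ε'))) := by
      rw [← Real.exp_add]; ring_nf
    rw [h3, ← mul_assoc]
    have hi2 : (i : ℝ) ≤ 2 * n := by
      have := Finset.mem_range.mp hi
      exact_mod_cast (by omega : i ≤ 2 * n)
    have habs : |(i : ℝ) - n| ≤ n := by
      rw [abs_le]; constructor <;> linarith [(Nat.cast_nonneg i : (0 : ℝ) ≤ i)]
    have h4 : ((i : ℝ) - n) * (ε - ε') ≤ n * |ε - ε'| := by
      refine (le_abs_self _).trans ?_
      rw [abs_mul]; gcongr
    have hB0 : 0 ≤ B := (norm_nonneg _).trans (hB 0)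
    have := Real.pi_pos
    rw [mul_assoc (2 * π)]
    gcongr
  refine (norm_sum_le_of_le _ hterm).trans ?_
  rw [Finset.sum_const, Finset.card_range, nsmul_eq_mul]
  push_cast; rfl

end ExtendedHarper

namespace ExtendedHarper

lemma norm_mat_eq (M : Matrix (Fin 2) (Fin 2) ℂ) :
    ‖M‖ = √(‖M 0 0‖ ^ 2 + ‖M 0 1‖ ^ 2 + (‖M 1 0‖ ^ 2 + ‖M 1 1‖ ^ 2)) := by
  rw [Matrix.frobenius_norm_def, Real.sqrt_eq_rpow]
  simp only [Fin.sum_univ_two, Real.rpow_two]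

lemma norm_entry_le (M : Matrix (Fin 2) (Fin 2) ℂ) (i j : Fin 2) : ‖M i j‖ ≤ ‖M‖ := by
  rw [norm_mat_eq]
  apply Real.le_sqrt_of_sq_le
  fin_cases i <;> fin_cases j <;> simp <;> nlinarith [sq_nonneg ‖M 0 0‖, sq_nonneg ‖M 0 1‖,
    sq_nonneg ‖M 1 0‖, sq_nonneg ‖M 1 1‖]

lemma norm_mat_le {M : Matrix (Fin 2) (Fin 2) ℂ} {B : ℝ} (h : ∀ i j, ‖M i j‖ ≤ B) :
    ‖M‖ ≤ 2 * B := by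
  have hB : 0 ≤ B := (norm_nonneg _).trans (h 0 0)
  rw [norm_mat_eq]
  refine Real.sqrt_le_iff.mpr ⟨by positivity, ?_⟩
  have h1 : ∀ i j, ‖M i j‖ ^ 2 ≤ B ^ 2 := fun i j => by gcongr; exact h i j
  nlinarith [h1 0 0, h1 0 1, h1 1 0, h1 1 1]

lemma norm_one_mat_le : ‖(1 : Matrix (Fin 2) (Fin 2) ℂ)‖ ≤ 2 := by
  have := norm_mat_le (M := 1) (B := 1) (fun i j => by
    fin_cases i <;> fin_cases j <;> simp)
  linarith

lemma norm_smul_mat (a : ℂ) (M : Matrix (Fin 2) (Fin 2) ℂ) : ‖a • M‖ = ‖a‖ * ‖M‖ :=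
  @norm_smul ℂ (Matrix (Fin 2) (Fin 2) ℂ) _ _ _ Matrix.frobeniusNormedSpace.toNormSMulClass a M

lemma norm_mul_mat_le (M N : Matrix (Fin 2) (Fin 2) ℂ) : ‖M * N‖ ≤ ‖M‖ * ‖N‖ :=
  Matrix.frobenius_norm_mul M N

lemma continuous_norm_mat {X : Type*} [TopologicalSpace X] {f : X → Matrix (Fin 2) (Fin 2) ℂ}
    (hf : Continuous f) : Continuous fun x => ‖f x‖ := by
  simp only [norm_mat_eq]
  fun_prop

/-- Iterates of a matrix function on the complex plane along the shift by `b`. -/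
def it (A : ℂ → Matrix (Fin 2) (Fin 2) ℂ) (b : ℝ) : ℕ → ℂ → Matrix (Fin 2) (Fin 2) ℂ
  | 0, _ => 1
  | n + 1, z => it A b n (z + b) * A z

variable {A : ℂ → Matrix (Fin 2) (Fin 2) ℂ}

lemma cocycleIter_eq_it (b : ℝ) (n : ℕ) (x : ℝ) :
    cocycleIter (fun x : ℝ => A x) b n x = it A b n x := by
  induction n generalizing x with
  | zero => rfl
  | succ n ih => rw [cocycleIter, it, ih]; push_cast; rfl

lemma it_add (b : ℝ) (m n : ℕ) (z : ℂ) :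
    it A b (m + n) z = it A b m (z + n * b) * it A b n z := by
  induction n generalizing z with
  | zero => simp [it]
  | succ n ih =>
    rw [← Nat.add_assoc, it, it, ih, ← mul_assoc]
    congr 3
    push_cast; ring

lemma it_one (b : ℝ) (z : ℂ) : it A b 1 z = A z := by simp [it]

lemma it_succ' (b : ℝ) (n : ℕ) (z : ℂ) : it A b (n + 1) z = A (z + n * b) * it A b n z := by
  rw [add_comm, it_add, it_one]

lemma it_add_int (hA : ∀ z, A (z + 1) = A z) (b : ℝ) (n : ℕ) (z : ℂ) (k : ℤ) :
    it A b n (z + k) = it A b n z := by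
  have hA' : ∀ z, A (z + k) = A z := by
    have hp : Function.Periodic A 1 := hA
    intro z
    simpa using hp.int_mul k z
  induction n generalizing z with
  | zero => rfl
  | succ n ih => rw [it, it, hA', add_right_comm, ih]

lemma det_it (b : ℝ) (n : ℕ) (z : ℂ) :
    (it A b n z).det = ∏ j ∈ Finset.range n, (A (z + j * b)).det := by
  induction n with
  | zero => simp [it]
  | succ n ih => rw [it_succ', Matrix.det_mul, ih, Finset.prod_range_succ, mul_comm]

lemma isLaurent_it (hA : ∀ i j, IsLaurent 1 (fun z => A z i j)) (b : ℝ) (n : ℕ) (i j : Fin 2) :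
    IsLaurent n (fun z => it A b n z i j) := by
  induction n generalizing i j with
  | zero => exact isLaurent_const 0 _
  | succ n ih =>
    simp only [it, Matrix.mul_apply, Fin.sum_univ_two]
    exact (((ih i 0).comp_add b).mul (hA 0 j)).add (((ih i 1).comp_add b).mul (hA 1 j))

lemma continuous_it (hA : Continuous A) (n : ℕ) :
    Continuous fun p : ℝ × ℂ => it A p.1 n p.2 := by
  induction n with
  | zero => simp only [it]; fun_prop
  | succ n ih =>
    simp only [it]
    have h1 : Continuous fun p : ℝ × ℂ => it A p.1 n (p.2 + p.1) :=
      ih.comp (f := fun p : ℝ × ℂ => (p.1, p.2 + (p.1 : ℂ))) (by fun_prop)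
    exact h1.mul (hA.comp continuous_snd)

lemma continuous_pt (ε : ℝ) : Continuous fun x : ℝ => pt x ε := by
  unfold pt; fun_prop

lemma exists_bound_line (hA : ∀ z, A (z + 1) = A z) (hc : Continuous A) (ε : ℝ) :
    ∃ C : ℝ, 1 ≤ C ∧ ∀ x, ‖A (pt x ε)‖ ≤ C := by
  have hf : Continuous fun x : ℝ => ‖A (pt x ε)‖ :=
    continuous_norm_mat (hc.comp (continuous_pt ε))
  have hper : Function.Periodic (fun x : ℝ => ‖A (pt x ε)‖) 1 := by
    intro x
    simp only
    rw [← pt_add]; simp [hA]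
  obtain ⟨C, hC⟩ := (isCompact_Icc (a := (0 : ℝ)) (b := 1)).exists_bound_of_continuousOn
    hf.continuousOn
  refine ⟨max C 1, le_max_right _ _, fun x => ?_⟩
  obtain ⟨y, hy, hxy⟩ := hper.exists_mem_Ico₀ one_pos x
  rw [hxy]
  have := hC y ⟨hy.1, hy.2.le⟩
  rw [norm_norm] at this
  exact this.trans (le_max_left _ _)

lemma norm_it_le {ε C : ℝ} (hC1 : 1 ≤ C) (hC : ∀ x, ‖A (pt x ε)‖ ≤ C) (b : ℝ) (n : ℕ) (x : ℝ) :
    ‖it A b n (pt x ε)‖ ≤ 2 * C ^ n := by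
  induction n generalizing x with
  | zero => simpa [it] using norm_one_mat_le
  | succ n ih =>
    rw [it, pt_add]
    calc _ ≤ _ := norm_mul_mat_le _ _
      _ ≤ (2 * C ^ n) * C := by gcongr; exacts [ih _, hC x]
      _ = _ := by ring

/-- An open `1`-periodic condition valid for one frequency on the whole line persists for nearby
frequencies. -/
lemma exists_forall_near {P : ℝ → ℝ → Prop} {β : ℝ}
    (hper : ∀ b x (k : ℤ), P b x → P b (x + k))
    (hP : ∀ x, ∀ᶠ p : ℝ × ℝ in nhds (β, x), P p.1 p.2) :
    ∃ η > 0, ∀ b, |b - β| < η → ∀ x, P b x := by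
  have h := (isCompact_Icc (a := (0 : ℝ)) (b := 1)).eventually_forall_of_forall_eventually
    (x₀ := β) (P := P) (fun x _ => hP x)
  obtain ⟨η, hη, h⟩ := Metric.eventually_nhds_iff.mp h
  refine ⟨η, hη, fun b hb x => ?_⟩
  have h1 := h (y := b) (by rwa [Real.dist_eq]) (Int.fract x)
    ⟨Int.fract_nonneg x, (Int.fract_lt_one x).le⟩
  simpa using hper b _ ⌊x⌋ h1

/-- A strict exponential bound at one time gives uniform exponential growth bounds for all times,
locally uniformly in the frequency. -/
lemma exists_growth_bound (hA : ∀ z, A (z + 1) = A z) (hc : Continuous A) {β ε a : ℝ} {n : ℕ}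
    (hn : 1 ≤ n) (h : ∀ x, ‖it A β n (pt x ε)‖ < Real.exp (a * n)) :
    ∃ K η : ℝ, 1 ≤ K ∧ 0 < η ∧ ∀ b, |b - β| < η → ∀ (l : ℕ) (x : ℝ),
      ‖it A b l (pt x ε)‖ ≤ K * Real.exp (a * l) := by
  obtain ⟨C, hC1, hC⟩ := exists_bound_line hA hc ε
  obtain ⟨η, hη, hb⟩ := exists_forall_near (β := β)
    (P := fun b x => ‖it A b n (pt x ε)‖ < Real.exp (a * n)) (fun b x k hx => by
      have : pt (x + k) ε = pt x ε + k := by simp only [pt]; push_cast; ring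
      rwa [this, it_add_int hA]) (fun x => by
      have hcont : Continuous fun p : ℝ × ℝ => ‖it A p.1 n (pt p.2 ε)‖ :=
        continuous_norm_mat ((continuous_it hc n).comp (f := fun p : ℝ × ℝ => (p.1, pt p.2 ε))
          (continuous_fst.prodMk ((continuous_pt ε).comp continuous_snd)))
      exact hcont.continuousAt.eventually_lt continuousAt_const (h x))
  have hK1 : (1 : ℝ) ≤ 2 * C ^ n := by
    have := one_le_pow₀ hC1 (n := n); linarith
  refine ⟨2 * C ^ n * Real.exp (|a| * n), η, ?_, hη, ?_⟩
  · have := Real.one_le_exp (x := |a| * n) (by positivity)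
    nlinarith
  intro b hbη l
  induction l using Nat.strong_induction_on with
  | _ l ih =>
    intro x
    rcases lt_or_ge l n with hl | hl
    · refine (norm_it_le hC1 hC b l x).trans ?_
      have h1 : C ^ l ≤ C ^ n := pow_le_pow_right₀ hC1 hl.le
      have h2 : 1 ≤ Real.exp (|a| * n) * Real.exp (a * l) := by
        rw [← Real.exp_add]
        apply Real.one_le_exp
        have h3 : -(|a| * l) ≤ a * l := by nlinarith [neg_abs_le a, (Nat.cast_nonneg l : (0 : ℝ) ≤ l)]
        have h4 : |a| * (l : ℝ) ≤ |a| * n := by gcongr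
        linarith
      calc 2 * C ^ l ≤ 2 * C ^ n * 1 := by linarith
        _ ≤ 2 * C ^ n * (Real.exp (|a| * n) * Real.exp (a * l)) := by gcongr
        _ = _ := by ring
    · obtain ⟨m, rfl⟩ := Nat.exists_eq_add_of_le' hl
      rw [it_add, show pt x ε + (n : ℂ) * b = pt (x + n * b) ε by
        rw [← pt_add]; push_cast; rfl]
      refine (norm_mul_mat_le _ _).trans ?_
      calc _ ≤ (2 * C ^ n * Real.exp (|a| * n) * Real.exp (a * m)) * Real.exp (a * n) := by
            gcongr
            · exact ih m (by omega) _
            · exact (hb b hbη x).le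
        _ = _ := by
            rw [mul_assoc, ← Real.exp_add]; push_cast; ring_nf

end ExtendedHarper

namespace ExtendedHarper

section Coefficients

variable {l1 l2 l3 β : ℝ}

lemma harperC_eq (z : ℂ) :
    harperC l1 l2 l3 β z = l3 * ee (-(z + β / 2)) + l2 + l1 * ee (z + β / 2) := by
  simp only [harperC, ee]
  congr 3
  congr 1; ring

lemma harperCt_eq_harperC (z : ℂ) : harperCt l1 l2 l3 β z = harperC l3 l2 l1 β z := by
  simp only [harperC, harperCt]; ring

lemma harperC_neg (z : ℂ) : harperC l1 l2 l3 β (-z) = harperCt l1 l2 l3 β (z - β) := by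
  rw [harperCt_eq_harperC, harperC_eq, harperC_eq,
    show -(-z + (β : ℂ) / 2) = z - β + β / 2 by ring,
    show -z + (β : ℂ) / 2 = -(z - β + β / 2) by ring]
  ring

lemma conj_ee (x : ℝ) : (starRingEnd ℂ) (ee x) = ee (-x) := by
  simp only [ee, ← Complex.exp_conj]
  congr 1
  simp [Complex.conj_ofNat]

lemma conj_harperC (x : ℝ) :
    (starRingEnd ℂ) (harperC l1 l2 l3 β x) = harperCt l1 l2 l3 β x := by
  have h := conj_ee (x + β / 2)
  have h' := conj_ee (-(x + β / 2))
  push_cast at h h'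
  rw [harperCt_eq_harperC, harperC_eq, harperC_eq]
  simp only [map_add, map_mul, Complex.conj_ofReal, h, h', neg_neg]
  ring

lemma norm_harperCt (x : ℝ) : ‖harperCt l1 l2 l3 β x‖ = ‖harperC l1 l2 l3 β x‖ := by
  rw [← conj_harperC, RCLike.norm_conj]

lemma isLaurent_harperC : IsLaurent 1 (harperC l1 l2 l3 β) := by
  have h : harperC l1 l2 l3 β = fun z => (fun z => (fun z => (l3 * ee (-(β / 2)) : ℂ) * ee (-z)) z
      + (fun _ => (l2 : ℂ)) z) z + (fun z => (l1 * ee (β / 2) : ℂ) * ee z) z := by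
    funext z
    rw [harperC_eq, neg_add, ee_add, ee_add]; ring
  rw [h]
  exact ((isLaurent_ee_neg.const_mul _).add (isLaurent_const 1 _)).add (isLaurent_ee.const_mul _)

lemma harperC_add_one (z : ℂ) : harperC l1 l2 l3 β (z + 1) = harperC l1 l2 l3 β z := by
  have h1 : ee 1 = 1 := by simpa using ee_nat 1
  rw [harperC_eq, harperC_eq, show z + 1 + (β : ℂ) / 2 = z + β / 2 + 1 by ring, ee_neg, ee_neg,
    ee_add, h1, mul_one]

lemma norm_le_one_of_root (h1 : 0 < l1) (h2 : 0 ≤ l2) (h3 : 0 ≤ l3) (h31 : l3 ≤ l1)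
    (h : l2 ≤ l1 + l3) {u : ℂ} (hu : l1 * u ^ 2 + l2 * u + l3 = 0) : ‖u‖ ≤ 1 := by
  have hre := congrArg Complex.re hu
  have him := congrArg Complex.im hu
  simp [pow_two] at hre him
  rw [← sq_le_one_iff₀ (norm_nonneg _), ← Complex.normSq_eq_norm_sq, Complex.normSq_apply]
  by_cases hy : u.im = 0
  · simp only [hy, mul_zero, sub_zero, add_zero] at hre ⊢
    by_contra hx
    push Not at hx
    rcases le_or_gt 0 u.re with h0 | h0
    · nlinarith [mul_nonneg h2 h0]
    · have hlt : u.re < -1 := by nlinarith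
      nlinarith [mul_pos (show 0 < -u.re - 1 by linarith) (show 0 < l1 * (-u.re) - l3 by nlinarith)]
  · have h4 : l2 = -2 * l1 * u.re := by
      have : u.im * (l2 - -2 * l1 * u.re) = 0 := by linarith
      rcases mul_eq_zero.mp this with h5 | h5
      · exact absurd h5 hy
      · linarith
    subst h4
    have : l1 * (u.re * u.re + u.im * u.im) = l3 := by linarith
    nlinarith

lemma exists_norm_harperC_eq_of_le (h1 : 0 < l1) (h2 : 0 ≤ l2) (h3 : 0 ≤ l3) (h31 : l3 ≤ l1)
    (h : l2 ≤ l1 + l3) : ∃ u₁ u₂ : ℂ, ‖u₁‖ ≤ 1 ∧ ‖u₂‖ ≤ 1 ∧ ∀ x : ℝ,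
      ‖harperC l1 l2 l3 β x‖ =
        l1 * (‖ee ((x + β / 2 : ℝ)) - u₁‖ * ‖ee ((x + β / 2 : ℝ)) - u₂‖) := by
  obtain ⟨s, hs⟩ := IsAlgClosed.exists_pow_nat_eq ((l2 : ℂ) ^ 2 - 4 * l1 * l3) (n := 2)
    (by norm_num)
  have hl : (l1 : ℂ) ≠ 0 := by exact_mod_cast h1.ne'
  have hfac : ∀ w : ℂ, l1 * w ^ 2 + l2 * w + l3 =
      l1 * ((w - (-l2 + s) / (2 * l1)) * (w - (-l2 - s) / (2 * l1))) := by
    intro w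
    field_simp
    linear_combination hs
  refine ⟨(-l2 + s) / (2 * l1), (-l2 - s) / (2 * l1),
    norm_le_one_of_root h1 h2 h3 h31 h (by rw [hfac]; ring),
    norm_le_one_of_root h1 h2 h3 h31 h (by rw [hfac]; ring), fun x => ?_⟩
  set w := ee ((x + β / 2 : ℝ)) with hw
  have hw1 : ‖w‖ = 1 := norm_ee_ofReal _
  have hw0 : w ≠ 0 := ee_ne_zero _
  have hC : harperC l1 l2 l3 β x = w⁻¹ * (l1 * w ^ 2 + l2 * w + l3) := by
    rw [harperC_eq, ee_neg, show (x : ℂ) + β / 2 = ((x + β / 2 : ℝ) : ℂ) by push_cast; rfl, ← hw]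
    field_simp
    ring
  rw [hC, hfac, norm_mul, norm_mul, norm_mul, norm_inv, hw1, Complex.norm_real,
    Real.norm_of_nonneg h1.le]
  ring

/-- In the region `l2 ≤ l1 + l3`, on the circle `c` is `max l1 l3` times two linear factors with
roots in the closed unit disc. -/
lemma exists_norm_harperC_eq (hm : 0 < max l1 l3) (h1 : 0 ≤ l1) (h2 : 0 ≤ l2) (h3 : 0 ≤ l3)
    (h : l2 ≤ l1 + l3) : ∃ u₁ u₂ : ℂ, ‖u₁‖ ≤ 1 ∧ ‖u₂‖ ≤ 1 ∧ ∀ x : ℝ,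
      ‖harperC l1 l2 l3 β x‖ =
        max l1 l3 * (‖ee ((x + β / 2 : ℝ)) - u₁‖ * ‖ee ((x + β / 2 : ℝ)) - u₂‖) := by
  rcases le_total l3 l1 with h31 | h31
  · rw [max_eq_left h31] at hm ⊢
    exact exists_norm_harperC_eq_of_le hm h2 h3 h31 h
  · rw [max_eq_right h31] at hm ⊢
    obtain ⟨u₁, u₂, hu₁, hu₂, hu⟩ :=
      exists_norm_harperC_eq_of_le (β := β) hm h2 h1 h31 (by linarith)
    refine ⟨u₁, u₂, hu₁, hu₂, fun x => ?_⟩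
    rw [← hu, ← harperCt_eq_harperC, norm_harperCt]

/-- Exponential upper bounds for products of `c` along orbits. -/
lemma exists_prod_harperC_le (hβ : Irrational β) (hm : 0 < max l1 l3) (h1 : 0 ≤ l1) (h2 : 0 ≤ l2)
    (h3 : 0 ≤ l3) (h : l2 ≤ l1 + l3) {κ : ℝ} (hκ : 0 < κ) :
    ∃ K η : ℝ, 1 ≤ K ∧ 0 < η ∧ ∀ b, |b - β| < η → ∀ (L : ℕ) (x : ℝ),
      ∏ l ∈ Finset.range L, ‖harperC l1 l2 l3 β ((x + l * b : ℝ))‖ ≤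
        K * Real.exp ((Real.log (max l1 l3) + κ) * L) := by
  obtain ⟨u₁, u₂, hu₁, hu₂, hu⟩ := exists_norm_harperC_eq (β := β) hm h1 h2 h3 h
  obtain ⟨K, η, hK, hη, hU⟩ := prod_rotation_le hβ (κ := κ / 2) (by positivity)
  refine ⟨K * K, η, by nlinarith, hη, fun b hb L x => ?_⟩
  have hx : ∀ l : ℕ, ee ((x + l * b + β / 2 : ℝ)) = ee ((x + β / 2 : ℝ)) * ee ((l * b : ℝ)) := by
    intro l; rw [← ee_add]; congr 1; push_cast; ring
  simp only [hu, hx, Finset.prod_mul_distrib, Finset.prod_const, Finset.card_range]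
  have e1 := hU b hb _ u₁ (norm_ee_ofReal (x + β / 2)) hu₁ L
  have e2 := hU b hb _ u₂ (norm_ee_ofReal (x + β / 2)) hu₂ L
  have e3 : Real.exp ((Real.log (max l1 l3) + κ) * L) =
      max l1 l3 ^ L * (Real.exp (κ / 2 * L) * Real.exp (κ / 2 * L)) := by
    rw [add_mul, Real.exp_add, mul_comm _ (L : ℝ), Real.exp_nat_mul, Real.exp_log hm,
      ← Real.exp_add]
    ring_nf
  rw [e3]
  calc _ ≤ max l1 l3 ^ L * ((K * Real.exp (κ / 2 * L)) * (K * Real.exp (κ / 2 * L))) := by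
        gcongr
    _ = _ := by ring

end Coefficients

section TransferMatrix

variable {l1 l2 l3 β : ℝ} {E : ℂ}

lemma harperA_add_one (z : ℂ) : harperA l1 l2 l3 β E (z + 1) = harperA l1 l2 l3 β E z := by
  simp only [harperA, harperCt_eq_harperC, harperC_add_one]
  rw [show z + 1 - (β : ℂ) = z - β + 1 by ring, harperC_add_one, mul_add, mul_one,
    Complex.cos_add_two_pi]

lemma continuous_harperA : Continuous (harperA l1 l2 l3 β E) := by
  unfold harperA harperC harperCt
  refine continuous_pi fun i => continuous_pi fun j => ?_
  fin_cases i <;> fin_cases j <;> simp <;> fun_prop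

lemma two_mul_cos_eq (z : ℂ) : 2 * Complex.cos (2 * π * z) = ee z + ee (-z) := by
  rw [Complex.two_cos, ee, ee]
  congr 2 <;> ring

lemma isLaurent_harperA (i j : Fin 2) : IsLaurent 1 (fun z => harperA l1 l2 l3 β E z i j) := by
  fin_cases i <;> fin_cases j
  · have := ((isLaurent_const 1 E).add (isLaurent_ee.const_mul (-1))).add
      (isLaurent_ee_neg.const_mul (-1))
    refine (congrArg (IsLaurent 1) ?_).mp this
    funext z
    simp [harperA, two_mul_cos_eq]; ring
  · have := ((isLaurent_harperC (l1 := l3) (l2 := l2) (l3 := l1) (β := β)).comp_add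
      (-β)).const_mul (-1)
    refine (congrArg (IsLaurent 1) ?_).mp this
    funext z
    simp [harperA, harperCt_eq_harperC, sub_eq_add_neg]
  · exact isLaurent_harperC
  · exact isLaurent_const 1 _

lemma det_harperA (z : ℂ) : (harperA l1 l2 l3 β E z).det =
    harperC l1 l2 l3 β z * harperCt l1 l2 l3 β (z - β) := by
  rw [harperA, Matrix.det_fin_two_of]; ring

/-- The reflection symmetry of the transfer matrix. -/
lemma harperA_neg (z : ℂ) : harperA l1 l2 l3 β E (-z) =
    !![1, 0; 0, -1] * (harperA l1 l2 l3 β E z).transpose * !![1, 0; 0, -1] := by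
  have h1 : harperCt l1 l2 l3 β (-z - β) = harperC l1 l2 l3 β z := by
    rw [← harperC_neg, neg_neg]
  ext i j
  fin_cases i <;> fin_cases j <;>
    simp [harperA, Matrix.mul_apply, Matrix.vecMul, dotProduct, h1, harperC_neg]

lemma it_harperA_neg (n : ℕ) (b : ℝ) (z : ℂ) :
    it (harperA l1 l2 l3 β E) b (n + 1) (-z - n * b) =
    !![1, 0; 0, -1] * (it (harperA l1 l2 l3 β E) b (n + 1) z).transpose * !![1, 0; 0, -1] := by
  have hJ : (!![1, 0; 0, -1] : Matrix (Fin 2) (Fin 2) ℂ) * !![1, 0; 0, -1] = 1 := by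
    ext i j; fin_cases i <;> fin_cases j <;> simp
  induction n with
  | zero => simp [it_one, harperA_neg]
  | succ n ih =>
    rw [it, it_succ' b (n + 1) z,
      show -z - ((n + 1 : ℕ) : ℂ) * b + b = -z - n * b by push_cast; ring, ih,
      show -z - ((n + 1 : ℕ) : ℂ) * b = -(z + ((n + 1 : ℕ) : ℂ) * b) by ring, harperA_neg,
      Matrix.transpose_mul]
    simp only [Matrix.mul_assoc]
    rw [← Matrix.mul_assoc !![1, 0; 0, -1] !![1, 0; 0, -1], hJ, Matrix.one_mul]

lemma norm_it_harperA_neg (n : ℕ) (b x ε : ℝ) :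
    ‖it (harperA l1 l2 l3 β E) b (n + 1) (pt (-x - n * b) (-ε))‖ =
    ‖it (harperA l1 l2 l3 β E) b (n + 1) (pt x ε)‖ := by
  have : pt (-x - n * b) (-ε) = -pt x ε - n * b := by
    simp only [pt]; push_cast; ring
  rw [this, it_harperA_neg, norm_mat_eq, norm_mat_eq]
  congr 1
  simp [Matrix.mul_apply, Matrix.vecMul, dotProduct]
  ring

end TransferMatrix

end ExtendedHarper

namespace ExtendedHarper

section Determinant

variable {l1 l2 l3 β : ℝ} {E : ℂ}

/-- Exponential upper bounds for the determinants of the iterates on the real line. -/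
lemma exists_norm_det_it_le (hβ : Irrational β) (hm : 0 < max l1 l3) (h1 : 0 ≤ l1) (h2 : 0 ≤ l2)
    (h3 : 0 ≤ l3) (h : l2 ≤ l1 + l3) {κ : ℝ} (hκ : 0 < κ) :
    ∃ K η : ℝ, 1 ≤ K ∧ 0 < η ∧ ∀ b, |b - β| < η → ∀ (L : ℕ) (x : ℝ),
      ‖(it (harperA l1 l2 l3 β E) b L x).det‖ ≤
        K * Real.exp ((2 * Real.log (max l1 l3) + κ) * L) := by
  obtain ⟨K, η, hK, hη, hU⟩ := exists_prod_harperC_le (β := β) hβ hm h1 h2 h3 h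
    (κ := κ / 2) (by positivity)
  refine ⟨K * K, η, by nlinarith, hη, fun b hb L x => ?_⟩
  have e1 : ∀ j : ℕ, ‖(harperA l1 l2 l3 β E (x + j * b)).det‖ =
      ‖harperC l1 l2 l3 β ((x + j * b : ℝ))‖ * ‖harperC l1 l2 l3 β ((x - β + j * b : ℝ))‖ := by
    intro j
    rw [det_harperA, norm_mul, ← norm_harperCt (x - β + j * b)]
    congr 3 <;> push_cast <;> ring
  rw [det_it, norm_prod]
  simp only [e1, Finset.prod_mul_distrib]
  calc _ ≤ (K * Real.exp ((Real.log (max l1 l3) + κ / 2) * L)) *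
        (K * Real.exp ((Real.log (max l1 l3) + κ / 2) * L)) := by
        gcongr
        exacts [hU b hb L x, hU b hb L (x - β)]
    _ = K * K * Real.exp ((2 * Real.log (max l1 l3) + κ) * L) := by
        rw [mul_mul_mul_comm, ← Real.exp_add]; ring_nf

end Determinant

variable {A : ℂ → Matrix (Fin 2) (Fin 2) ℂ}

lemma isLaurent_det_it (hA : ∀ i j, IsLaurent 1 (fun z => A z i j)) (b : ℝ) (n : ℕ) :
    IsLaurent (n + n) (fun z => (it A b n z).det) := by
  have h := isLaurent_it hA b n
  have := ((h 0 0).mul (h 1 1)).add (((h 0 1).mul (h 1 0)).const_mul (-1))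
  refine (congrArg (IsLaurent (n + n)) ?_).mp this
  funext z
  rw [Matrix.det_fin_two]; ring

lemma norm_det_it_le_of_line (hA : ∀ i j, IsLaurent 1 (fun z => A z i j)) {b ε B : ℝ} {n : ℕ}
    (hB : ∀ x, ‖(it A b n (pt x ε)).det‖ ≤ B) (x ε' : ℝ) :
    ‖(it A b n (pt x ε')).det‖ ≤ (4 * n + 1) * (B * Real.exp (4 * π * n * |ε - ε'|)) := by
  have := (isLaurent_det_it hA b n).norm_le_of_line hB x ε'
  push_cast at this
  refine this.trans (le_of_eq ?_)
  ring_nf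

section Asymptotics

variable {l1 l2 l3 β : ℝ} {E : ℂ}

/-- Powers of a `2 × 2` matrix annihilated by `(X - t₁)(X - t₂)`. -/
lemma exists_pow_eq {M : Matrix (Fin 2) (Fin 2) ℂ} {t₁ t₂ : ℂ} {m : ℝ}
    (hM : (M - t₁ • 1) * M = t₂ • (M - t₁ • 1)) (h₁ : ‖t₁‖ ≤ m) (h₂ : ‖t₂‖ ≤ m) (N : ℕ) :
    ∃ h : ℂ, M ^ N = t₁ ^ N • 1 + h • (M - t₁ • 1) ∧ ‖h‖ * m ≤ N * m ^ N := by
  have hm : 0 ≤ m := (norm_nonneg _).trans h₁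
  induction N with
  | zero => exact ⟨0, by simp, by simp⟩
  | succ N ih =>
    obtain ⟨h, hMN, hh⟩ := ih
    refine ⟨t₁ ^ N + h * t₂, ?_, ?_⟩
    · rw [pow_succ, hMN, add_mul, Matrix.smul_mul, Matrix.smul_mul, hM, one_mul, smul_smul,
        add_smul, pow_succ, smul_sub (t₁ ^ N), smul_smul]
      abel
    · calc ‖t₁ ^ N + h * t₂‖ * m ≤ (‖t₁‖ ^ N + ‖h‖ * ‖t₂‖) * m := by
            gcongr; refine (norm_add_le _ _).trans ?_; rw [norm_pow, norm_mul]
        _ ≤ (m ^ N + ‖h‖ * m) * m := by gcongr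
        _ ≤ (m ^ N + N * m ^ N) * m := by gcongr
        _ = _ := by push_cast; ring

/-- The leading coefficient of the transfer matrix at `+i∞`. -/
def leadMat (l1 l3 β : ℝ) : Matrix (Fin 2) (Fin 2) ℂ :=
  !![-1, -(l1 * ee (β / 2)); l3 * ee (-(β / 2)), 0]

/-- The transfer matrix multiplied by `w = e(z)`, as a function of `w`. -/
def scaledMat (l1 l2 l3 β : ℝ) (E : ℂ) (w : ℂ) : Matrix (Fin 2) (Fin 2) ℂ :=
  !![E * w - w ^ 2 - 1, -(l3 * ee (-(β / 2)) * w ^ 2 + l2 * w + l1 * ee (β / 2));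
    l3 * ee (-(β / 2)) + l2 * w + l1 * ee (β / 2) * w ^ 2, 0]

lemma scaledMat_zero : scaledMat l1 l2 l3 β E 0 = leadMat l1 l3 β := by
  ext i j; fin_cases i <;> fin_cases j <;> simp [scaledMat, leadMat]

lemma scaledMat_ee (z : ℂ) :
    scaledMat l1 l2 l3 β E (ee z) = ee z • harperA l1 l2 l3 β E z := by
  have hz := ee_ne_zero z
  have hb := ee_ne_zero (β / 2)
  ext i j; fin_cases i <;> fin_cases j
  · simp [scaledMat, harperA, two_mul_cos_eq, ee_neg]; field_simp; ring
  · simp [scaledMat, harperA, harperCt_eq_harperC, harperC_eq]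
    rw [show z - (β : ℂ) + β / 2 = z + -(β / 2) by ring,
      show -((β : ℂ) / 2) + (β - z) = -z + β / 2 by ring, ee_add, ee_add, ee_neg, ee_neg]
    field_simp; ring
  · simp [scaledMat, harperA, harperC_eq]
    rw [show -((β : ℂ) / 2) + -z = -z + -(β / 2) by ring, ee_add, ee_add, ee_neg, ee_neg]
    field_simp
  · simp [scaledMat, harperA]

lemma norm_le_of_leadMat_root (hm : 0 < max l1 l3) (h1 : 0 ≤ l1) (h3 : 0 ≤ l3)
    (h : 1 ≤ l1 + l3) {t : ℂ} (ht : t ^ 2 + t + l1 * l3 = 0) : ‖t‖ ≤ max l1 l3 := by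
  set m := max l1 l3 with hmdef
  have hmC : (m : ℂ) ≠ 0 := by exact_mod_cast hm.ne'
  have hle1 : l1 ≤ m := le_max_left _ _
  have hle3 : l3 ≤ m := le_max_right _ _
  have hsum : m * (l1 + l3) = m ^ 2 + l1 * l3 := by
    rcases max_choice l1 l3 with h' | h' <;> rw [← hmdef] at h' <;> rw [h'] <;> ring
  have := norm_le_one_of_root (l1 := m ^ 2) (l2 := m) (l3 := l1 * l3) (by positivity) hm.le
    (by positivity) (by nlinarith) (by nlinarith) (u := t / m) (by
      push_cast; field_simp; linear_combination ht)
  rw [norm_div, Complex.norm_real, Real.norm_of_nonneg hm.le, div_le_one hm] at this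
  exact this

lemma exists_leadMat_pow_lt (hm : 0 < max l1 l3) (h1 : 0 ≤ l1) (h3 : 0 ≤ l3)
    (h : 1 ≤ l1 + l3) {κ : ℝ} (hκ : 0 < κ) :
    ∃ N : ℕ, 1 ≤ N ∧ ‖leadMat l1 l3 β ^ N‖ < Real.exp ((Real.log (max l1 l3) + κ) * N) := by
  obtain ⟨s, hs⟩ := IsAlgClosed.exists_pow_nat_eq (1 - 4 * l1 * l3 : ℂ) (n := 2) (by norm_num)
  have hroot : ∀ t : ℂ, t = (-1 + s) / 2 ∨ t = (-1 - s) / 2 → ‖t‖ ≤ max l1 l3 := by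
    rintro t (rfl | rfl) <;> refine norm_le_of_leadMat_root hm h1 h3 h ?_ <;>
      linear_combination hs / 4
  set t₁ := (-1 + s) / 2 with ht₁
  set t₂ := (-1 - s) / 2 with ht₂
  set m := max l1 l3 with hmdef
  set M := leadMat l1 l3 β with hMdef
  have hsum : t₁ + t₂ = -1 := by rw [ht₁, ht₂]; ring
  have hprod : t₁ * t₂ = l1 * l3 := by rw [ht₁, ht₂]; linear_combination -hs / 4
  have hb : ee (β / 2) * ee (-(β / 2)) = 1 := by rw [← ee_add]; simp
  have hM : (M - t₁ • 1) * M = t₂ • (M - t₁ • 1) := by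
    ext i j
    fin_cases i <;> fin_cases j <;>
      simp [M, leadMat, Matrix.mul_apply, Fin.sum_univ_two, Matrix.one_apply]
    · linear_combination (-(l1 : ℂ) * l3) * hb + hprod + hsum
    · left; linear_combination -hsum
    · linear_combination (-l3 * ee (-(β / 2)) : ℂ) * hsum
    · linear_combination (l1 * l3 : ℂ) * hb - hprod
  set C := 2 + ‖M - t₁ • 1‖ / m with hC
  have hC0 : 0 ≤ C := by positivity
  obtain ⟨N, hN⟩ := ((eventually_mul_pow_le_exp (κ := κ / 2) (by positivity) C 1).and
    (eventually_ge_atTop 1)).exists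
  refine ⟨N, hN.2, ?_⟩
  obtain ⟨g, hg, hgm⟩ := exists_pow_eq hM (hroot _ (Or.inl rfl)) (hroot _ (Or.inr rfl)) N
  have hN1 : (1 : ℝ) ≤ N := by exact_mod_cast hN.2
  have hexp : Real.exp ((Real.log m + κ) * N) = m ^ N * Real.exp (κ * N) := by
    rw [add_mul, Real.exp_add, mul_comm _ (N : ℝ), Real.exp_nat_mul, Real.exp_log hm]
  rw [hg, hexp]
  have hg' : ‖g‖ ≤ N * m ^ N / m := by rwa [le_div_iff₀ hm]
  calc _ ≤ ‖t₁ ^ N • (1 : Matrix (Fin 2) (Fin 2) ℂ)‖ + ‖g • (M - t₁ • 1)‖ := norm_add_le _ _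
    _ ≤ m ^ N * 2 + N * m ^ N / m * ‖M - t₁ • 1‖ := by
        rw [norm_smul_mat, norm_smul_mat, norm_pow]
        gcongr
        · exact hroot _ (Or.inl rfl)
        · exact norm_one_mat_le
    _ = m ^ N * (2 + N * (‖M - t₁ • 1‖ / m)) := by field_simp
    _ ≤ m ^ N * (C * ((N : ℝ) + 1) ^ 1) := by
        gcongr
        have : 0 ≤ ‖M - t₁ • 1‖ / m := by positivity
        rw [hC]; nlinarith
    _ ≤ m ^ N * Real.exp (κ / 2 * N) := by gcongr; exact hN.1
    _ < m ^ N * Real.exp (κ * N) := by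
        gcongr
        linarith

/-- Iterates of the scaled transfer matrix. -/
def scaledIt (l1 l2 l3 β : ℝ) (E : ℂ) : ℕ → ℂ → Matrix (Fin 2) (Fin 2) ℂ
  | 0, _ => 1
  | n + 1, w => scaledIt l1 l2 l3 β E n (w * ee β) * scaledMat l1 l2 l3 β E w

lemma scaledIt_zero (n : ℕ) : scaledIt l1 l2 l3 β E n 0 = leadMat l1 l3 β ^ n := by
  induction n with
  | zero => rfl
  | succ n ih => rw [scaledIt, zero_mul, ih, scaledMat_zero, pow_succ]

lemma norm_scaledIt_ee (n : ℕ) (z : ℂ) : ‖scaledIt l1 l2 l3 β E n (ee z)‖ =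
    ‖ee z‖ ^ n * ‖it (harperA l1 l2 l3 β E) β n z‖ := by
  have key : ∃ a : ℂ, ‖a‖ = ‖ee z‖ ^ n ∧
      scaledIt l1 l2 l3 β E n (ee z) = a • it (harperA l1 l2 l3 β E) β n z := by
    induction n generalizing z with
    | zero => exact ⟨1, by simp, by simp [scaledIt, it]⟩
    | succ n ih =>
      obtain ⟨a, ha, hs⟩ := ih (z + β)
      refine ⟨a * ee z, ?_, ?_⟩
      · rw [norm_mul, ha, ee_add, norm_mul, norm_ee_ofReal, mul_one, pow_succ]
      · rw [scaledIt, ← ee_add, hs, scaledMat_ee, it, Matrix.smul_mul, Matrix.mul_smul, smul_smul]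
  obtain ⟨a, ha, hs⟩ := key
  rw [hs, norm_smul_mat, ha]

lemma continuous_scaledMat : Continuous (scaledMat l1 l2 l3 β E) := by
  unfold scaledMat
  refine continuous_pi fun i => continuous_pi fun j => ?_
  fin_cases i <;> fin_cases j <;> simp <;> fun_prop

lemma continuous_scaledIt (n : ℕ) : Continuous (scaledIt l1 l2 l3 β E n) := by
  induction n with
  | zero => simp only [scaledIt]; exact continuous_const
  | succ n ih =>
    simp only [scaledIt]
    exact (ih.comp (by fun_prop : Continuous fun w : ℂ => w * ee β)).mul continuous_scaledMat

/-- Far up in the complex plane the iterates grow at most like `exp (n (log m + 2π ε + κ))`. -/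
lemma exists_norm_it_lt_far (hm : 0 < max l1 l3) (h1 : 0 ≤ l1) (h3 : 0 ≤ l3)
    (h : 1 ≤ l1 + l3) {κ : ℝ} (hκ : 0 < κ) (ε₀ : ℝ) :
    ∃ ε : ℝ, ε₀ ≤ ε ∧ ∃ n : ℕ, 1 ≤ n ∧ ∀ x, ‖it (harperA l1 l2 l3 β E) β n (pt x ε)‖ <
      Real.exp ((Real.log (max l1 l3) + κ + 2 * π * ε) * n) := by
  obtain ⟨N, hN1, hN⟩ := exists_leadMat_pow_lt (β := β) hm h1 h3 h hκ
  have hcont : ContinuousAt (fun w => ‖scaledIt l1 l2 l3 β E N w‖) 0 :=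
    (continuous_norm_mat (continuous_scaledIt N)).continuousAt
  have hev := hcont.eventually_lt (continuousAt_const (y := Real.exp ((Real.log (max l1 l3) + κ) * N)))
    (by rwa [scaledIt_zero])
  obtain ⟨ρ, hρ, hw⟩ := Metric.eventually_nhds_iff.mp hev
  have ht : Tendsto (fun ε : ℝ => Real.exp (-2 * π * ε)) atTop (nhds 0) := by
    refine Real.tendsto_exp_atBot.comp ?_
    exact tendsto_id.const_mul_atTop_of_neg (by have := Real.pi_pos; linarith)
  obtain ⟨ε, hε, hε₀⟩ := ((ht.eventually_lt_const hρ).and (eventually_ge_atTop ε₀)).exists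
  refine ⟨ε, hε₀, N, hN1, fun x => ?_⟩
  have hne : ‖ee (pt x ε)‖ = Real.exp (-2 * π * ε) := by rw [norm_ee, pt_im]
  have := hw (y := ee (pt x ε)) (by rwa [dist_zero_right, hne])
  rw [norm_scaledIt_ee, hne, ← Real.exp_nat_mul] at this
  rw [add_mul _ (2 * π * ε), Real.exp_add, ← div_lt_iff₀ (Real.exp_pos _), div_eq_mul_inv,
    ← Real.exp_neg, mul_comm]
  refine lt_of_eq_of_lt ?_ this
  congr 2; ring

end Asymptotics

end ExtendedHarper

namespace ExtendedHarper

lemma logIntegral_le_log {g : ℝ → ℝ} {S : ℝ} (hg0 : ∀ x, 0 ≤ g x) (hgS : ∀ x, g x ≤ S) :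
    logIntegral g ≤ (Real.log S : ℝ) := by
  have hlog : ∀ x, g x ≠ 0 → Real.log (g x) ≤ Real.log S := fun x hx =>
    Real.log_le_log (lt_of_le_of_ne (hg0 x) (Ne.symm hx)) (hgS x)
  have hup : ∫⁻ x in Set.Ioc (0 : ℝ) 1, ENNReal.ofReal (Real.log (g x)) ≤
      ENNReal.ofReal (Real.log S) := by
    calc _ ≤ ∫⁻ x in Set.Ioc (0 : ℝ) 1, ENNReal.ofReal (Real.log S) := by
          refine lintegral_mono fun x => ?_
          by_cases hx : g x = 0
          · simp [hx]
          · exact ENNReal.ofReal_le_ofReal (hlog x hx)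
      _ = _ := by simp
  have hlow : ENNReal.ofReal (-Real.log S) ≤ ∫⁻ x in Set.Ioc (0 : ℝ) 1,
      if g x = 0 then (⊤ : ℝ≥0∞) else ENNReal.ofReal (-Real.log (g x)) := by
    calc _ = ∫⁻ x in Set.Ioc (0 : ℝ) 1, ENNReal.ofReal (-Real.log S) := by simp
      _ ≤ _ := by
          refine lintegral_mono fun x => ?_
          by_cases hx : g x = 0
          · simp [hx]
          · simp only [hx, if_false]
            exact ENNReal.ofReal_le_ofReal (neg_le_neg (hlog x hx))
  refine (EReal.sub_le_sub (EReal.coe_ennreal_le_coe_ennreal_iff.mpr hup)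
    (EReal.coe_ennreal_le_coe_ennreal_iff.mpr hlow)).trans ?_
  rw [EReal.coe_ennreal_ofReal, EReal.coe_ennreal_ofReal, ← EReal.coe_sub,
    EReal.coe_le_coe_iff]
  rcases le_total 0 (Real.log S) with h | h
  · rw [max_eq_left h, max_eq_right (by linarith)]; linarith
  · rw [max_eq_right h, max_eq_left (by linarith)]; linarith

lemma integral_le_logIntegral {g h : ℝ → ℝ}
    (hh : Integrable h (volume.restrict (Set.Ioc (0 : ℝ) 1)))
    (hg : ∀ᵐ x ∂volume.restrict (Set.Ioc (0 : ℝ) 1), g x ≠ 0 ∧ h x ≤ Real.log (g x)) :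
    ((∫ x in Set.Ioc (0 : ℝ) 1, h x : ℝ) : EReal) ≤ logIntegral g := by
  have hup : ∫⁻ x in Set.Ioc (0 : ℝ) 1, ENNReal.ofReal (h x) ≤
      ∫⁻ x in Set.Ioc (0 : ℝ) 1, ENNReal.ofReal (Real.log (g x)) :=
    lintegral_mono_ae (hg.mono fun x hx => ENNReal.ofReal_le_ofReal hx.2)
  have hlow : (∫⁻ x in Set.Ioc (0 : ℝ) 1,
      if g x = 0 then (⊤ : ℝ≥0∞) else ENNReal.ofReal (-Real.log (g x))) ≤
      ∫⁻ x in Set.Ioc (0 : ℝ) 1, ENNReal.ofReal (-h x) :=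
    lintegral_mono_ae (hg.mono fun x hx => by
      simp only [hx.1, if_false]
      exact ENNReal.ofReal_le_ofReal (neg_le_neg hx.2))
  have hf1 : ∫⁻ x in Set.Ioc (0 : ℝ) 1, ENNReal.ofReal (h x) ≠ ⊤ := hh.lintegral_lt_top.ne
  have hf2 : ∫⁻ x in Set.Ioc (0 : ℝ) 1, ENNReal.ofReal (-h x) ≠ ⊤ := hh.neg.lintegral_lt_top.ne
  refine le_trans (le_of_eq ?_) (EReal.sub_le_sub (EReal.coe_ennreal_le_coe_ennreal_iff.mpr hup)
    (EReal.coe_ennreal_le_coe_ennreal_iff.mpr hlow))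
  rw [integral_eq_lintegral_pos_part_sub_lintegral_neg_part hh, EReal.coe_sub,
    EReal.coe_ennreal_toReal hf1, EReal.coe_ennreal_toReal hf2]

/-- `g` is a.e. nonzero on the unit interval and `log g` is integrable there with integral `a`. -/
def LogMean (g : ℝ → ℝ) (a : ℝ) : Prop :=
  (∀ᵐ x ∂volume.restrict (Set.Ioc (0 : ℝ) 1), g x ≠ 0) ∧
  Integrable (fun x => Real.log (g x)) (volume.restrict (Set.Ioc (0 : ℝ) 1)) ∧
  ∫ x in Set.Ioc (0 : ℝ) 1, Real.log (g x) = a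

lemma LogMean.mul {f g : ℝ → ℝ} {a b : ℝ} (hf : LogMean f a) (hg : LogMean g b) :
    LogMean (fun x => f x * g x) (a + b) := by
  have hae : (fun x => Real.log (f x) + Real.log (g x)) =ᵐ[volume.restrict (Set.Ioc (0 : ℝ) 1)]
      fun x => Real.log (f x * g x) := by
    filter_upwards [hf.1, hg.1] with x h1 h2
    rw [Real.log_mul h1 h2]
  refine ⟨?_, (hf.2.1.add hg.2.1).congr hae, ?_⟩
  · filter_upwards [hf.1, hg.1] with x h1 h2 using mul_ne_zero h1 h2
  · rw [← integral_congr_ae hae, integral_add hf.2.1 hg.2.1, hf.2.2, hg.2.2]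

lemma logMean_const {c : ℝ} (hc : c ≠ 0) : LogMean (fun _ => c) (Real.log c) :=
  ⟨Eventually.of_forall fun _ => hc, integrable_const _, by simp⟩

lemma LogMean.prod {f : ℕ → ℝ → ℝ} {a : ℝ} (hf : ∀ j, LogMean (f j) a) (n : ℕ) :
    LogMean (fun x => ∏ j ∈ Finset.range n, f j x) (n * a) := by
  induction n with
  | zero => simpa using logMean_const one_ne_zero
  | succ n ih =>
    simp only [Finset.prod_range_succ]
    have := ih.mul (hf n)
    convert this using 1
    push_cast; ring

lemma countable_ee_eq (u : ℂ) : {x : ℝ | ee x = u}.Countable := by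
  rcases Set.eq_empty_or_nonempty {x : ℝ | ee x = u} with h | ⟨x₀, hx₀⟩
  · rw [h]; exact Set.countable_empty
  refine (Set.countable_range fun k : ℤ => x₀ + k).mono fun x hx => ?_
  have h : ee x = ee x₀ := hx.trans hx₀.symm
  obtain ⟨k, hk⟩ := Complex.exp_eq_exp_iff_exists_int.mp h
  refine ⟨k, ?_⟩
  have h2 : (2 * π * I : ℂ) ≠ 0 := Complex.two_pi_I_ne_zero
  have h3 : (x : ℂ) = x₀ + k := mul_left_cancel₀ h2 (by rw [hk]; ring)
  exact_mod_cast h3.symm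

lemma logMean_norm_ee_sub {u : ℂ} (hu : ‖u‖ ≤ 1) (t : ℝ) :
    LogMean (fun x => ‖ee ((x + t : ℝ)) - u‖) 0 := by
  have hpi := Real.pi_pos
  set v := ee (-t) * u with hv
  have hv1 : ‖v‖ ≤ 1 := by
    rw [hv, norm_mul, show (-t : ℂ) = ((-t : ℝ) : ℂ) by push_cast; rfl, norm_ee_ofReal, one_mul]
    exact hu
  have hcm : ∀ x : ℝ, circleMap 0 1 (2 * π * x) = ee x := by
    intro x
    simp only [circleMap, ee]
    push_cast; rw [zero_add, one_mul]; congr 1; ring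
  have heq : ∀ x : ℝ, ‖ee ((x + t : ℝ)) - u‖ = ‖circleMap 0 1 (2 * π * x) - v‖ := by
    intro x
    have h2 : ee ((x + t : ℝ)) - u = ee t * (ee x - v) := by
      rw [hv, mul_sub, ← mul_assoc, ← ee_add, ← ee_add, add_neg_cancel, ee_zero, one_mul]
      push_cast; rw [add_comm]
    rw [hcm, h2, norm_mul, norm_ee_ofReal, one_mul]
  simp only [heq]
  have hlog : IntervalIntegrable (fun θ : ℝ => Real.log ‖circleMap 0 1 θ - v‖) volume 0 (2 * π) :=
    circleIntegrable_log_norm_sub_const (a := v) (c := 0) 1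
  have hlog' := hlog.comp_mul_left (c := 2 * π)
  have hne : (2 * π) ≠ 0 := by positivity
  rw [zero_div, div_self hne, intervalIntegrable_iff_integrableOn_Ioc_of_le zero_le_one] at hlog'
  refine ⟨?_, hlog', ?_⟩
  · refine ae_restrict_of_ae ?_
    filter_upwards [(countable_ee_eq v).ae_notMem volume] with x hx h0
    rw [hcm, norm_eq_zero, sub_eq_zero] at h0
    exact hx h0
  · rw [← intervalIntegral.integral_of_le zero_le_one]
    have h1 := intervalIntegral.integral_comp_mul_left (a := 0) (b := 1)
      (fun θ : ℝ => Real.log ‖circleMap 0 1 θ - v‖) hne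
    rw [mul_zero, mul_one] at h1
    rw [h1]
    have h2 := circleAverage_log_norm_sub_const_of_mem_closedBall (a := v) (c := 0) (R := 1)
      (by simpa using hv1)
    rw [Real.log_one] at h2
    exact h2

section Harper

variable {l1 l2 l3 β : ℝ} {E : ℂ}

lemma logMean_harperC (hm : 0 < max l1 l3) (h1 : 0 ≤ l1) (h2 : 0 ≤ l2)
    (h3 : 0 ≤ l3) (h : l2 ≤ l1 + l3) (t : ℝ) :
    LogMean (fun x => ‖harperC l1 l2 l3 β ((x + t : ℝ))‖) (Real.log (max l1 l3)) := by
  obtain ⟨u₁, u₂, hu₁, hu₂, hu⟩ := exists_norm_harperC_eq (β := β) hm h1 h2 h3 h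
  simp only [hu, add_assoc]
  have := (logMean_const hm.ne').mul
    ((logMean_norm_ee_sub hu₁ (t + β / 2)).mul (logMean_norm_ee_sub hu₂ (t + β / 2)))
  rw [add_zero, add_zero] at this
  exact this

lemma logMean_det_it (hm : 0 < max l1 l3) (h1 : 0 ≤ l1) (h2 : 0 ≤ l2)
    (h3 : 0 ≤ l3) (h : l2 ≤ l1 + l3) (b : ℝ) (n : ℕ) :
    LogMean (fun x : ℝ => ‖(it (harperA l1 l2 l3 β E) b n x).det‖)
      (n * (2 * Real.log (max l1 l3))) := by
  have e1 : ∀ (x : ℝ) (j : ℕ), ‖(harperA l1 l2 l3 β E (x + j * b)).det‖ =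
      ‖harperC l1 l2 l3 β ((x + j * b : ℝ))‖ * ‖harperC l1 l2 l3 β ((x + (j * b - β) : ℝ))‖ := by
    intro x j
    rw [det_harperA, norm_mul, ← norm_harperCt (x + (j * b - β))]
    congr 3 <;> push_cast <;> ring
  simp only [det_it, norm_prod, e1]
  refine LogMean.prod (fun j => ?_) n
  rw [two_mul]
  exact (logMean_harperC hm h1 h2 h3 h _).mul (logMean_harperC hm h1 h2 h3 h _)

lemma exists_le_norm_det_it (hm : 0 < max l1 l3) (h1 : 0 ≤ l1) (h2 : 0 ≤ l2)
    (h3 : 0 ≤ l3) (h : l2 ≤ l1 + l3) (b : ℝ) (n : ℕ) :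
    ∃ x : ℝ, Real.exp (2 * Real.log (max l1 l3) * n) ≤
      ‖(it (harperA l1 l2 l3 β E) b n x).det‖ := by
  obtain ⟨h0, hi, he⟩ := logMean_det_it (β := β) (E := E) hm h1 h2 h3 h b n
  have : IsProbabilityMeasure (volume.restrict (Set.Ioc (0 : ℝ) 1)) := ⟨by simp⟩
  obtain ⟨x, hx, hle⟩ := exists_notMem_null_integral_le hi (ae_iff.mp h0)
  refine ⟨x, ?_⟩
  have hx0 : ‖(it (harperA l1 l2 l3 β E) b n x).det‖ ≠ 0 := by simpa using hx
  rw [← Real.le_log_iff_exp_le (lt_of_le_of_ne (norm_nonneg _) (Ne.symm hx0))]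
  rw [he] at hle
  linarith

lemma norm_det_le_sq (M : Matrix (Fin 2) (Fin 2) ℂ) : ‖M.det‖ ≤ ‖M‖ ^ 2 := by
  rw [Matrix.det_fin_two, norm_mat_eq, Real.sq_sqrt (by positivity)]
  calc _ ≤ ‖M 0 0‖ * ‖M 1 1‖ + ‖M 0 1‖ * ‖M 1 0‖ := by
        refine (norm_sub_le _ _).trans ?_; rw [norm_mul, norm_mul]
    _ ≤ _ := by nlinarith [sq_nonneg (‖M 0 0‖ - ‖M 1 1‖), sq_nonneg (‖M 0 1‖ - ‖M 1 0‖),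
        sq_nonneg ‖M 0 0‖, sq_nonneg ‖M 0 1‖, sq_nonneg ‖M 1 0‖, sq_nonneg ‖M 1 1‖]

/-- The Lyapunov exponent is at least `log (max l1 l3)`. -/
lemma le_lyapunov (hm : 0 < max l1 l3) (h1 : 0 ≤ l1) (h2 : 0 ≤ l2)
    (h3 : 0 ≤ l3) (h : l2 ≤ l1 + l3) :
    ((Real.log (max l1 l3) : ℝ) : EReal) ≤
      lyapunov β (fun x : ℝ => harperA l1 l2 l3 β E (x : ℂ)) := by
  refine le_iInf fun n => ?_
  simp only [cocycleIter_eq_it]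
  obtain ⟨h0, hi, he⟩ := logMean_det_it (β := β) (E := E) hm h1 h2 h3 h β (n + 1)
  have key := integral_le_logIntegral (g := fun x : ℝ => ‖it (harperA l1 l2 l3 β E) β (n + 1) x‖)
    (hi.const_mul (1 / 2)) (by
      filter_upwards [h0] with x hx
      have hle := norm_det_le_sq (it (harperA l1 l2 l3 β E) β (n + 1) x)
      have hne : ‖it (harperA l1 l2 l3 β E) β (n + 1) x‖ ≠ 0 := by
        intro h0
        rw [h0] at hle
        exact hx (le_antisymm (by simpa using hle) (norm_nonneg _))
      refine ⟨hne, ?_⟩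
      have := Real.log_le_log (lt_of_le_of_ne (norm_nonneg _) (Ne.symm hx)) hle
      rw [Real.log_pow] at this
      push_cast at this
      linarith)
  rw [integral_const_mul, he] at key
  have hn : (0 : ℝ) < (n : ℝ) + 1 := by positivity
  calc ((Real.log (max l1 l3) : ℝ) : EReal)
      = ((((n : ℝ) + 1)⁻¹ : ℝ) : EReal) *
        ((1 / 2 * (((n + 1 : ℕ) : ℝ) * (2 * Real.log (max l1 l3))) : ℝ) : EReal) := by
        rw [← EReal.coe_mul]; congr 1; push_cast; field_simp
    _ ≤ _ := mul_le_mul_of_nonneg_left key (by exact_mod_cast (inv_pos.mpr hn).le)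

/-- If the Lyapunov exponent is not at most `a`, some larger exponential rate is attained at every
time. -/
lemma exists_rate_of_lt_lyapunov {A : ℂ → Matrix (Fin 2) (Fin 2) ℂ} {a : ℝ}
    (ha : (a : EReal) < lyapunov β (fun x : ℝ => A (x : ℂ))) :
    ∃ δ : ℝ, 0 < δ ∧ ∀ n : ℕ, 1 ≤ n → ∃ x : ℝ, Real.exp ((a + δ) * n) ≤ ‖it A β n x‖ := by
  obtain ⟨c, hac, hc⟩ := EReal.exists_between_coe_real ha
  have hac' : a < c := by exact_mod_cast hac
  refine ⟨c - a, by linarith, fun n hn => ?_⟩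
  by_contra hx
  push Not at hx
  obtain ⟨k, rfl⟩ := Nat.exists_eq_add_of_le' hn
  have h1 := logIntegral_le_log (g := fun x : ℝ => ‖it A β (k + 1) x‖) (fun x => norm_nonneg _)
    (fun x => (hx x).le)
  rw [Real.log_exp] at h1
  have h2 : lyapunov β (fun x : ℝ => A (x : ℂ)) ≤ (c : EReal) := by
    refine (iInf_le _ k).trans ?_
    simp only [cocycleIter_eq_it]
    have hk : (0 : ℝ) < (k : ℝ) + 1 := by positivity
    refine (mul_le_mul_of_nonneg_left h1 (by exact_mod_cast (inv_pos.mpr hk).le)).trans ?_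
    rw [← EReal.coe_mul]
    refine le_of_eq ?_
    congr 1; push_cast; field_simp; ring
  exact absurd hc (not_lt.mpr h2)

end Harper

end ExtendedHarper

namespace ExtendedHarper

/-- A Laurent polynomial whose coefficients outside a window of length `N` are small is controlled
on a horizontal line by its values along an orbit of length `N`. -/
lemma LaurentRep.norm_le_of_orbit {n N i₀ : ℕ} {P : Polynomial ℂ} {F : ℂ → ℂ} {β κ ε D : ℝ}
    (h : LaurentRep n P F)
    (hN : ∀ p : Polynomial ℂ, p.degree < N → ∀ (r y η : ℝ),
      (∀ j < N, ‖p.eval (r * ee ((y + j * β : ℝ)))‖ ≤ η) →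
      ∀ y' : ℝ, ‖p.eval (r * ee y')‖ ≤ η * Real.exp (κ * N))
    (hwin : i₀ + N ≤ 2 * n + 1)
    (hout : ∀ i : ℕ, i < i₀ ∨ i₀ + N ≤ i →
      ‖P.coeff i‖ * Real.exp (-2 * π * ε * ((i : ℝ) - n)) ≤ D)
    (hD : 0 ≤ D) {y η : ℝ} (hnode : ∀ j < N, ‖F (pt (y + j * β) ε)‖ ≤ η) (y' : ℝ) :
    ‖F (pt y' ε)‖ ≤ (η + (2 * n + 1) * D) * Real.exp (κ * N) + (2 * n + 1) * D := by
  classical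
  set p : Polynomial ℂ := ∑ j ∈ Finset.range N, Polynomial.C (P.coeff (i₀ + j)) * Polynomial.X ^ j
    with hp
  have hpdeg : p.degree < N := by
    rw [hp, Polynomial.degree_lt_iff_coeff_zero]
    intro k hk
    simp only [Polynomial.finsetSum_coeff, Polynomial.coeff_C_mul_X_pow]
    refine Finset.sum_eq_zero fun j hj => ?_
    rw [if_neg]
    have := Finset.mem_range.mp hj
    omega
  have hsub : Finset.Ico i₀ (i₀ + N) ⊆ Finset.range (2 * n + 1) := by
    intro i hi
    rw [Finset.mem_Ico] at hi
    rw [Finset.mem_range]; omega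
  set ρ := Real.exp (-2 * π * ε * ((i₀ : ℝ) - n)) with hρ
  have hρ0 : 0 < ρ := Real.exp_pos _
  have hsplit : ∀ x : ℝ, ‖F (pt x ε) - ee (((i₀ : ℝ) - n : ℝ) * pt x ε) * p.eval (ee (pt x ε))‖ ≤
      (2 * n + 1) * D := by
    intro x
    have e1 : F (pt x ε) - ee (((i₀ : ℝ) - n : ℝ) * pt x ε) * p.eval (ee (pt x ε)) =
        ∑ i ∈ Finset.range (2 * n + 1) \ Finset.Ico i₀ (i₀ + N),
          P.coeff i * ee (((i : ℂ) - n) * pt x ε) := by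
      rw [h.eq_sum, ← Finset.sum_sdiff hsub, Finset.sum_Ico_eq_sum_range, add_tsub_cancel_left, hp,
        Polynomial.eval_finsetSum, Finset.mul_sum, add_sub_assoc, ← Finset.sum_sub_distrib,
        Finset.sum_eq_zero (s := Finset.range N), add_zero]
      intro j _
      rw [Polynomial.eval_mul, Polynomial.eval_C, Polynomial.eval_pow, Polynomial.eval_X,
        ← ee_nat_mul, mul_left_comm, ← ee_add, ← mul_sub, sub_eq_zero.mpr, mul_zero]
      congr 1; push_cast; ring
    rw [e1]
    refine (norm_sum_le _ _).trans ((Finset.sum_le_sum (g := fun _ => D) fun i hi => ?_).trans ?_)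
    · rw [norm_mul, show ((i : ℂ) - n) = (((i : ℝ) - n : ℝ) : ℂ) by push_cast; rfl, norm_ee_mul_pt]
      refine hout i ?_
      simp only [Finset.mem_sdiff, Finset.mem_Ico, not_and_or, not_le, not_lt] at hi
      exact hi.2
    · rw [Finset.sum_const, nsmul_eq_mul]
      gcongr
      have := Finset.card_le_card
        (Finset.sdiff_subset (s := Finset.range (2 * n + 1)) (t := Finset.Ico i₀ (i₀ + N)))
      rw [Finset.card_range] at this
      exact_mod_cast this
  have hnorm : ∀ x : ℝ, ‖ee (((i₀ : ℝ) - n : ℝ) * pt x ε) * p.eval (ee (pt x ε))‖ =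
      ρ * ‖p.eval ((Real.exp (-2 * π * ε) : ℝ) * ee x)‖ := by
    intro x; rw [norm_mul, norm_ee_mul_pt, ee_pt]
  have hnode' : ∀ j < N, ‖p.eval ((Real.exp (-2 * π * ε) : ℝ) * ee ((y + j * β : ℝ)))‖ ≤
      (η + (2 * n + 1) * D) / ρ := by
    intro j hj
    rw [le_div_iff₀ hρ0, mul_comm, ← hnorm]
    have h1 := hsplit (y + j * β)
    have h2 := hnode j hj
    have h3 := norm_sub_norm_le (ee (((i₀ : ℝ) - n : ℝ) * pt (y + j * β) ε) *
      p.eval (ee (pt (y + j * β) ε))) (F (pt (y + j * β) ε))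
    rw [norm_sub_rev] at h3
    linarith
  have h4 := hN p hpdeg _ y _ hnode' y'
  have h5 := hsplit y'
  have h6 := norm_sub_norm_le (F (pt y' ε))
    (ee (((i₀ : ℝ) - n : ℝ) * pt y' ε) * p.eval (ee (pt y' ε)))
  rw [hnorm] at h6
  have h7 : ρ * ‖p.eval ((Real.exp (-2 * π * ε) : ℝ) * ee y')‖ ≤
      (η + (2 * n + 1) * D) * Real.exp (κ * N) := by
    calc _ ≤ ρ * ((η + (2 * n + 1) * D) / ρ * Real.exp (κ * N)) := by gcongr
      _ = _ := by field_simp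
  linarith

/-- The `2 × 2` inequality behind the block resolvent expansion. -/
lemma norm_mul_norm_le (P Q : Matrix (Fin 2) (Fin 2) ℂ) (v : Fin 2 → ℂ) :
    ‖P * Q‖ * ‖v‖ ≤ 2 * (‖Q‖ * ‖P.mulVec v‖ + ‖P‖ * ‖Q.adjugate.mulVec v‖) := by
  set B := ‖Q‖ * ‖P.mulVec v‖ + ‖P‖ * ‖Q.adjugate.mulVec v‖ with hB
  have hB0 : 0 ≤ B := by positivity
  have hgen : ∀ (a b k l : Fin 2) (s t X : ℂ), (s = 1 ∨ s = -1) →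
      X = P.mulVec v a * Q k b + P a l * (s * t) → ‖t‖ ≤ ‖Q.adjugate.mulVec v‖ → ‖X‖ ≤ B := by
    rintro a b k l s t X hs rfl ht
    have hs1 : ‖s‖ = 1 := by rcases hs with rfl | rfl <;> simp
    refine (norm_add_le _ _).trans ?_
    rw [norm_mul, norm_mul, norm_mul, hs1, one_mul, hB, mul_comm ‖P.mulVec v a‖]
    gcongr
    · exact norm_entry_le _ _ _
    · exact norm_le_pi_norm _ _
    · exact norm_entry_le _ _ _
  have key : ∀ i a b : Fin 2, ‖v i * (P * Q) a b‖ ≤ B := by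
    intro i a b
    have h0 : ‖Q 1 1 * v 0 - Q 0 1 * v 1‖ ≤ ‖Q.adjugate.mulVec v‖ := by
      have e : Q.adjugate.mulVec v 0 = Q 1 1 * v 0 - Q 0 1 * v 1 := by
        simp [Matrix.adjugate_fin_two, Matrix.mulVec, dotProduct, Fin.sum_univ_two, sub_eq_add_neg]
      rw [← e]; exact norm_le_pi_norm _ _
    have h1 : ‖Q 0 0 * v 1 - Q 1 0 * v 0‖ ≤ ‖Q.adjugate.mulVec v‖ := by
      have e : Q.adjugate.mulVec v 1 = Q 0 0 * v 1 - Q 1 0 * v 0 := by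
        simp [Matrix.adjugate_fin_two, Matrix.mulVec, dotProduct, Fin.sum_univ_two]; ring
      rw [← e]; exact norm_le_pi_norm _ _
    fin_cases i <;> fin_cases b
    · refine hgen a 0 0 1 (-1) _ _ (Or.inr rfl) ?_ h1
      simp [Matrix.mul_apply, Matrix.mulVec, dotProduct, Fin.sum_univ_two]; ring
    · refine hgen a 1 0 1 1 _ _ (Or.inl rfl) ?_ h0
      simp [Matrix.mul_apply, Matrix.mulVec, dotProduct, Fin.sum_univ_two]; ring
    · refine hgen a 0 1 0 1 _ _ (Or.inl rfl) ?_ h1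
      simp [Matrix.mul_apply, Matrix.mulVec, dotProduct, Fin.sum_univ_two]; ring
    · refine hgen a 1 1 0 (-1) _ _ (Or.inr rfl) ?_ h0
      simp [Matrix.mul_apply, Matrix.mulVec, dotProduct, Fin.sum_univ_two]; ring
  obtain ⟨i, hi⟩ : ∃ i, ‖v‖ = ‖v i‖ := by
    obtain ⟨i, hi⟩ := Finite.exists_max fun i => ‖v i‖
    exact ⟨i, le_antisymm ((pi_norm_le_iff_of_nonneg (norm_nonneg _)).mpr hi) (norm_le_pi_norm v i)⟩
  rcases eq_or_lt_of_le (norm_nonneg (v i)) with h0 | h0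
  · rw [hi, ← h0]; simpa using hB0
  rw [hi, ← le_div_iff₀ h0, mul_div_assoc]
  refine norm_mat_le fun a b => ?_
  rw [le_div_iff₀ h0, mul_comm, ← norm_mul]
  exact key i a b

lemma mul_exp_le_of_mul_exp_le {c K s t s' t' : ℝ} (h : c * Real.exp s ≤ K * Real.exp t)
    (hst : t + (s' - s) ≤ t') (hK : 0 ≤ K) :
    c * Real.exp s' ≤ K * Real.exp t' :=
  calc c * Real.exp s' = c * Real.exp s * Real.exp (s' - s) := by
        rw [mul_assoc, ← Real.exp_add]; ring_nf
    _ ≤ K * Real.exp t * Real.exp (s' - s) := by gcongr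
    _ = K * Real.exp (t + (s' - s)) := by rw [mul_assoc, ← Real.exp_add]
    _ ≤ K * Real.exp t' := by gcongr

variable {A : ℂ → Matrix (Fin 2) (Fin 2) ℂ}

set_option maxHeartbeats 1000000 in
/-- If the growth rate of the cocycle at height `ε` is nearly `Λ` and slightly convex-dominated by
its rates at heights `εm < ε < εp`, then every orbit segment contains, in its bulk, a starting point
of a long block with nearly maximal growth. -/
lemma exists_good_block {β : ℝ} (hβ : Irrational β) (hL : ∀ i j, IsLaurent 1 (fun z => A z i j))
    {ε εm εp am ap sm sp K Λ κ ν : ℝ} (hκ : 0 < κ) (hν : 0 < ν) (hεm : εm ≤ ε) (hεp : ε ≤ εp)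
    (hsm : 0 ≤ sm) (hsp : 0 ≤ sp) (hσ : sp + sm ≤ 1 - 8 * ν) (hK : 0 ≤ K)
    (hKm : ∀ (n : ℕ) (x : ℝ), ‖it A β n (pt x εm)‖ ≤ K * Real.exp (am * n))
    (hKp : ∀ (n : ℕ) (x : ℝ), ‖it A β n (pt x εp)‖ ≤ K * Real.exp (ap * n))
    (ham : am - 2 * π * sm * (ε - εm) ≤ Λ - 2 * κ)
    (hap : ap - 2 * π * sp * (εp - ε) ≤ Λ - 2 * κ)
    (hbig : ∀ n : ℕ, 1 ≤ n → ∃ x : ℝ, Real.exp ((Λ - κ / 4) * n) ≤ ‖it A β n (pt x ε)‖) (n₀ : ℕ) :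
    ∃ n : ℕ, n₀ ≤ n ∧ ∀ x : ℝ, ∃ n₂ : ℕ, ν * n ≤ n₂ ∧ n₂ ≤ (1 - ν) * n ∧
      Real.exp ((Λ - κ) * n) ≤ ‖it A β n (pt (x - n₂ * β) ε)‖ := by
  have hpi := Real.pi_pos
  obtain ⟨n₁, hn₁⟩ := eventually_atTop.mp ((eventually_mul_pow_le_exp hκ (2 * K) 1).and
    (eventually_mul_pow_le_exp (κ := κ / 2) (by positivity) 7 0))
  obtain ⟨N, hN₀, hN⟩ := exists_norm_eval_le_of_orbit hβ (κ := κ / 4) (by positivity)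
    (max (max n₀ n₁) (⌈1 / ν⌉₊ + 1))
  have hN1 : n₀ ≤ N := le_trans (by simp) hN₀
  have hN2 : n₁ ≤ N := le_trans (by simp) hN₀
  have hN3 : ⌈1 / ν⌉₊ + 1 ≤ N := le_trans (by simp) hN₀
  have hνN : 1 ≤ ν * N := by
    have h1 := Nat.le_ceil (1 / ν)
    have h2 : ((⌈1 / ν⌉₊ + 1 : ℕ) : ℝ) ≤ N := by exact_mod_cast hN3
    push_cast at h2
    rw [div_le_iff₀ hν] at h1
    nlinarith
  have hN0 : (0 : ℝ) ≤ N := by positivity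
  have hden : (0 : ℝ) < 1 - 4 * ν := by linarith
  set n := ⌊(N : ℝ) / (1 - 4 * ν)⌋₊ with hn
  have hn1 : (n : ℝ) * (1 - 4 * ν) ≤ N := by
    rw [← le_div_iff₀ hden]; exact Nat.floor_le (by positivity)
  have hn2 : (N : ℝ) < (n + 1) * (1 - 4 * ν) := by
    rw [← div_lt_iff₀ hden]; exact Nat.lt_floor_add_one _
  have hNn : N ≤ n := by
    rw [hn]
    refine Nat.le_floor ?_
    rw [le_div_iff₀ hden]
    nlinarith
  have hNnR : (N : ℝ) ≤ n := by exact_mod_cast hNn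
  have hnpos : 1 ≤ n := by omega
  have hNup : (N : ℝ) + 1 ≤ (1 - 2 * ν) * n := by nlinarith
  have hNlow : (n : ℝ) * (sp + sm) + 1 ≤ N := by
    have : (n : ℝ) * (sp + sm) ≤ n * (1 - 8 * ν) := by gcongr
    nlinarith
  refine ⟨n, by omega, ?_⟩
  by_contra hcon
  push Not at hcon
  obtain ⟨x, hx⟩ := hcon
  obtain ⟨hexp1, hexp2⟩ := hn₁ n (by omega)
  rw [pow_one] at hexp1
  rw [pow_zero, mul_one] at hexp2
  set G := Real.exp ((Λ - κ) * n) with hG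
  have hG0 : 0 < G := Real.exp_pos _
  set D := K * Real.exp ((Λ - 2 * κ) * n) with hD
  have hDG : (2 * n + 1) * D ≤ G := by
    calc (2 * n + 1) * D ≤ (2 * K * ((n : ℝ) + 1)) * Real.exp ((Λ - 2 * κ) * n) := by
          have h : (2 * n + 1) * K ≤ 2 * K * ((n : ℝ) + 1) := by nlinarith
          rw [hD, ← mul_assoc]; gcongr
      _ ≤ Real.exp (κ * n) * Real.exp ((Λ - 2 * κ) * n) := by gcongr
      _ = G := by rw [hG, ← Real.exp_add]; ring_nf
  set i₀ := ⌊(n : ℝ) * (1 - sp)⌋₊ with hi₀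
  have hi₀le : (i₀ : ℝ) ≤ n * (1 - sp) := Nat.floor_le (by
    have : 0 ≤ 1 - sp := by linarith
    positivity)
  have hi₀ge : (n : ℝ) * (1 - sp) < i₀ + 1 := Nat.lt_floor_add_one _
  set j₀ := ⌈ν * n⌉₊ with hj₀
  have hj₀ge : ν * n ≤ j₀ := Nat.le_ceil _
  have hj₀lt : (j₀ : ℝ) < ν * n + 1 := Nat.ceil_lt_add_one (by positivity)
  have hentry : ∀ (i j : Fin 2) (y' : ℝ), ‖it A β n (pt y' ε) i j‖ ≤
      (G + G) * Real.exp (κ / 4 * n) + G := by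
    intro i j y'
    obtain ⟨P, hP⟩ := isLaurent_it hL β n i j
    have hwin : i₀ + N ≤ 2 * n + 1 := by
      have : (i₀ : ℝ) + N ≤ 2 * n + 1 := by nlinarith [mul_nonneg hsp (Nat.cast_nonneg (α := ℝ) n)]
      exact_mod_cast this
    have hmain := hP.norm_le_of_orbit (β := β) (ε := ε) (D := D)
      (y := x - (j₀ + N - 1 : ℕ) * β) (η := G) hN hwin ?_ (by positivity) ?_ y'
    · refine hmain.trans ?_
      gcongr
    · rintro k (hk | hk)
      · have h1 := hP.norm_coeff_le (ε := εp) (B := K * Real.exp (ap * n))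
          (fun x => (norm_entry_le _ _ _).trans (hKp n x)) k
        have hk' : (k : ℝ) - n ≤ -(sp * n) := by
          have : (k : ℝ) < i₀ := by exact_mod_cast hk
          linarith
        refine mul_exp_le_of_mul_exp_le h1 ?_ hK
        have h2 := mul_nonneg hpi.le (sub_nonneg.mpr hεp)
        have h3 := mul_le_mul_of_nonneg_left hk' h2
        have h4 := mul_le_mul_of_nonneg_right hap (Nat.cast_nonneg (α := ℝ) n)
        linarith
      · have h1 := hP.norm_coeff_le (ε := εm) (B := K * Real.exp (am * n))
          (fun x => (norm_entry_le _ _ _).trans (hKm n x)) k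
        have hk' : sm * n ≤ (k : ℝ) - n := by
          have : (i₀ : ℝ) + N ≤ k := by exact_mod_cast hk
          linarith
        refine mul_exp_le_of_mul_exp_le h1 ?_ hK
        have h2 := mul_nonneg hpi.le (sub_nonneg.mpr hεm)
        have h3 := mul_le_mul_of_nonneg_left hk' h2
        have h4 := mul_le_mul_of_nonneg_right ham (Nat.cast_nonneg (α := ℝ) n)
        linarith
    · intro j' hj'
      have hcast : x - (j₀ + N - 1 : ℕ) * β + j' * β = x - (j₀ + N - 1 - j' : ℕ) * β := by
        rw [Nat.cast_sub (by omega : j' ≤ j₀ + N - 1)]; ring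
      rw [hcast]
      have hle : (j₀ : ℝ) ≤ (j₀ + N - 1 - j' : ℕ) := by exact_mod_cast (by omega)
      have hle' : ((j₀ + N - 1 - j' : ℕ) : ℝ) ≤ j₀ + N - 1 := by
        have h1 : (j₀ + N - 1 - j') + 1 ≤ j₀ + N := by omega
        have h2 : ((j₀ + N - 1 - j' : ℕ) : ℝ) + 1 ≤ j₀ + N := by exact_mod_cast h1
        linarith
      exact (norm_entry_le _ _ _).trans
        (hx _ (hj₀ge.trans hle) (hle'.trans (by linarith))).le
  obtain ⟨y, hy⟩ := hbig n hnpos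
  have h1 := norm_mat_le (M := it A β n (pt y ε)) (fun i j => hentry i j y)
  have h2 : 1 ≤ Real.exp (κ / 4 * n) := Real.one_le_exp (by positivity)
  have h3 : ‖it A β n (pt y ε)‖ ≤ 6 * (G * Real.exp (κ / 4 * n)) := by nlinarith
  have h4 : Real.exp ((Λ - κ / 4) * n) =
      Real.exp (κ / 2 * n) * (G * Real.exp (κ / 4 * n)) := by
    rw [hG, ← Real.exp_add, ← Real.exp_add]; ring_nf
  have h5 : 0 < G * Real.exp (κ / 4 * n) := by positivity
  rw [h4] at hy
  nlinarith

end ExtendedHarper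

namespace ExtendedHarper

variable {A : ℂ → Matrix (Fin 2) (Fin 2) ℂ}

lemma exists_eigen_pair (M : Matrix (Fin 2) (Fin 2) ℂ) :
    ∃ μ₁ μ₂ : ℂ, M.trace = μ₁ + μ₂ ∧ M.det = μ₁ * μ₂ ∧
      (∃ v ≠ 0, M.mulVec v = μ₁ • v) ∧ ∃ v ≠ 0, M.mulVec v = μ₂ • v := by
  obtain ⟨s, hs⟩ := IsAlgClosed.exists_pow_nat_eq (M.trace ^ 2 - 4 * M.det) two_pos
  have hdet : ∀ μ : ℂ, (M - μ • (1 : Matrix (Fin 2) (Fin 2) ℂ)).det =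
      μ ^ 2 - M.trace * μ + M.det := by
    intro μ
    simp only [Matrix.det_fin_two, Matrix.trace_fin_two, Matrix.sub_apply, Matrix.smul_apply,
      Matrix.one_apply, smul_eq_mul]
    simp
    ring
  have hvec : ∀ μ : ℂ, μ ^ 2 - M.trace * μ + M.det = 0 → ∃ v ≠ 0, M.mulVec v = μ • v := by
    intro μ h
    obtain ⟨v, hv, h0⟩ := Matrix.exists_mulVec_eq_zero_iff.mpr ((hdet μ).trans h)
    refine ⟨v, hv, ?_⟩
    rwa [Matrix.sub_mulVec, Matrix.smul_mulVec, Matrix.one_mulVec, sub_eq_zero] at h0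
  refine ⟨(M.trace + s) / 2, (M.trace - s) / 2, by ring, by linear_combination hs / 4,
    hvec _ (by linear_combination hs / 4), hvec _ (by linear_combination hs / 4)⟩

/-- If both eigenvalues avoid the range `[ρ, R]` and the determinant is too large for both of them
to be small and too small for both to be large, the trace is of size `R`. -/
lemma le_two_mul_norm_trace {M : Matrix (Fin 2) (Fin 2) ℂ} {ρ R : ℝ} (hρR : 2 * ρ ≤ R)
    (hdich : ∀ (μ : ℂ) (v : Fin 2 → ℂ), v ≠ 0 → M.mulVec v = μ • v → ‖μ‖ < ρ ∨ R < ‖μ‖)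
    (hlow : ρ ^ 2 ≤ ‖M.det‖) (hup : ‖M.det‖ ≤ R ^ 2) (hR : 0 ≤ R) : R ≤ 2 * ‖M.trace‖ := by
  obtain ⟨μ₁, μ₂, ht, hd, ⟨v₁, hv₁, h₁⟩, v₂, hv₂, h₂⟩ := exists_eigen_pair M
  rw [hd, norm_mul] at hlow hup
  rw [ht]
  have n₁ := norm_nonneg μ₁
  have n₂ := norm_nonneg μ₂
  have s₁ := norm_sub_norm_le μ₁ (-μ₂)
  have s₂ := norm_sub_norm_le μ₂ (-μ₁)
  rw [norm_neg, sub_neg_eq_add] at s₁ s₂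
  rw [add_comm μ₂] at s₂
  rcases hdich μ₁ v₁ hv₁ h₁ with a₁ | a₁ <;> rcases hdich μ₂ v₂ hv₂ h₂ with a₂ | a₂
  · nlinarith
  · linarith
  · linarith
  · nlinarith

lemma LaurentRep.coeff_eq_zero_of_invariant {r : ℚ} {P : Polynomial ℂ} {T : ℂ → ℂ}
    (h : LaurentRep r.den P T) (hinv : ∀ z, T (z + (r : ℝ)) = T z) {i : ℕ} (hi : ¬ r.den ∣ i) :
    P.coeff i = 0 := by
  have hζ := isPrimitiveRoot_ee r
  have h0 := norm_coeff_mul_le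
    (P.comp (Polynomial.C (ee (r : ℝ)) * Polynomial.X) - P) (r := 1) (B := 0) zero_le_one (by
      intro x
      have h1 := hinv x
      rw [h.2, h.2, mul_add, neg_add, ee_add, ee_neg, ee_add, ee_neg (_ * ((r : ℝ) : ℂ)),
        ee_nat_mul _ ((r : ℝ) : ℂ), hζ.pow_eq_one, inv_one, mul_one] at h1
      have h2 := mul_left_cancel₀ (inv_ne_zero (ee_ne_zero _)) h1
      simp only [Polynomial.eval_sub, Polynomial.eval_comp, Polynomial.eval_mul, Polynomial.eval_C,
        Polynomial.eval_X, Complex.ofReal_one, one_mul]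
      rw [mul_comm, h2, sub_self, norm_zero]) i
  rw [Polynomial.coeff_sub, Polynomial.comp_C_mul_X_coeff, one_pow, mul_one] at h0
  have h1 : P.coeff i * (ee (r : ℝ) ^ i - 1) = 0 := by
    rw [mul_sub, mul_one]; exact norm_le_zero_iff.mp h0
  rcases mul_eq_zero.mp h1 with h2 | h2
  · exact h2
  · exact absurd ((hζ.pow_eq_one_iff_dvd i).mp (sub_eq_zero.mp h2)) hi

/-- A Laurent polynomial of degree `q` that is invariant under a rotation of exact order `q` has
only three nonzero coefficients. -/
lemma LaurentRep.norm_le_of_invariant {r : ℚ} {P : Polynomial ℂ} {T : ℂ → ℂ}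
    (h : LaurentRep r.den P T) (hinv : ∀ z, T (z + (r : ℝ)) = T z) (x ε : ℝ) :
    ‖T (pt x ε)‖ ≤ ‖P.coeff 0‖ * Real.exp (2 * π * ε * r.den) + ‖P.coeff r.den‖ +
      ‖P.coeff (2 * r.den)‖ * Real.exp (-2 * π * ε * r.den) := by
  have hq := r.den_pos
  have e1 : T (pt x ε) = ∑ i ∈ ({0, r.den, 2 * r.den} : Finset ℕ),
      P.coeff i * ee (((i : ℂ) - r.den) * pt x ε) := by
    rw [h.eq_sum]
    symm
    refine Finset.sum_subset ?_ ?_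
    · intro i hi
      simp only [Finset.mem_insert, Finset.mem_singleton] at hi
      rw [Finset.mem_range]; omega
    · intro i hi hi'
      rw [h.coeff_eq_zero_of_invariant hinv, zero_mul]
      rintro ⟨k, rfl⟩
      rw [Finset.mem_range] at hi
      have hk : k < 3 := by
        by_contra hk
        have : r.den * 3 ≤ r.den * k := by gcongr; omega
        omega
      interval_cases k <;> simp [mul_comm] at hi'
  have e2 : ∀ i : ℕ, ‖P.coeff i * ee (((i : ℂ) - r.den) * pt x ε)‖ =
      ‖P.coeff i‖ * Real.exp (-2 * π * ε * ((i : ℝ) - r.den)) := by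
    intro i
    rw [norm_mul, show ((i : ℂ) - r.den) = (((i : ℝ) - r.den : ℝ) : ℂ) by push_cast; rfl,
      norm_ee_mul_pt]
  rw [e1, Finset.sum_insert (by simp; omega), Finset.sum_insert (by simp),
    Finset.sum_singleton, ← add_assoc]
  refine (norm_add₃_le).trans (le_of_eq ?_)
  rw [e2, e2, e2]
  simp only [sub_self, mul_zero, Real.exp_zero, mul_one]
  push_cast
  congr 3 <;> ring_nf

lemma it_add_rat (hA : ∀ z, A (z + 1) = A z) (r : ℚ) (n k : ℕ) (z : ℂ) :
    it A r n (z + (k * r.den : ℕ) * (r : ℝ)) = it A r n z := by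
  have : ((k * r.den : ℕ) : ℂ) * ((r : ℝ) : ℂ) = ((k * r.num : ℤ) : ℂ) := by
    have h1 : (r : ℚ) * r.den = r.num := Rat.mul_den_eq_num r
    have h2 : ((r : ℚ) : ℂ) * r.den = r.num := by exact_mod_cast h1
    push_cast
    linear_combination (k : ℂ) * h2
  rw [this, it_add_int hA]

lemma trace_it_add_rat (hA : ∀ z, A (z + 1) = A z) (r : ℚ) (z : ℂ) :
    (it A r r.den (z + (r : ℝ))).trace = (it A r r.den z).trace := by
  obtain ⟨k, hk⟩ : ∃ k, r.den = k + 1 := ⟨r.den - 1, by have := r.den_pos; omega⟩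
  have h1 := it_add_rat hA r 1 1 z
  rw [it_one, it_one, one_mul] at h1
  rw [hk] at h1 ⊢
  rw [it_succ', it, Matrix.trace_mul_comm, add_assoc]
  rw [show z + (((r : ℝ) : ℂ) + k * ((r : ℝ) : ℂ)) = z + ((k + 1 : ℕ) : ℂ) * ((r : ℝ) : ℂ) by
    push_cast; ring, h1]

/-- Blocks with large norm persist under small perturbations of the frequency. -/
lemma exists_good_block_near (hA : ∀ z, A (z + 1) = A z) (hc : Continuous A) {β ε G G' : ℝ} {n : ℕ}
    {S : Set ℕ} (hG : G' < G)
    (h : ∀ x : ℝ, ∃ n₂ ∈ S, G ≤ ‖it A β n (pt (x - n₂ * β) ε)‖) :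
    ∃ η > 0, ∀ b, |b - β| < η → ∀ x : ℝ, ∃ n₂ ∈ S, G' < ‖it A b n (pt (x - n₂ * b) ε)‖ := by
  refine exists_forall_near (P := fun b x => ∃ n₂ ∈ S, G' < ‖it A b n (pt (x - n₂ * b) ε)‖) ?_ ?_
  · rintro b x k ⟨n₂, hn₂, hx⟩
    refine ⟨n₂, hn₂, ?_⟩
    have : pt (x + k - n₂ * b) ε = pt (x - n₂ * b) ε + k := by simp only [pt]; push_cast; ring
    rwa [this, it_add_int hA]
  · intro x
    obtain ⟨n₂, hn₂, hx⟩ := h x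
    have hcont : Continuous fun p : ℝ × ℝ => ‖it A p.1 n (pt (p.2 - n₂ * p.1) ε)‖ :=
      continuous_norm_mat ((continuous_it hc n).comp
        (f := fun p : ℝ × ℝ => (p.1, pt (p.2 - n₂ * p.1) ε))
        (continuous_fst.prodMk ((continuous_pt ε).comp (by fun_prop))))
    filter_upwards [continuousAt_const.eventually_lt hcont.continuousAt (hG.trans_le hx)] with p hp
    exact ⟨n₂, hn₂, hp⟩

/-- A quasi-periodic solution with multiplier of modulus `exp (g q)` is, at its largest
normalized entry, controlled from both ends of a block. -/
lemma exists_block_le_of_eigenvector (hA : ∀ z, A (z + 1) = A z) (r : ℚ) {x₀ ε g : ℝ} {n : ℕ}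
    {S : Set ℕ} (hS : ∀ n₂ ∈ S, n₂ ≤ n) {G : ℝ}
    (h : ∀ x : ℝ, ∃ n₂ ∈ S, G ≤ ‖it A r n (pt (x - n₂ * r) ε)‖)
    {v : Fin 2 → ℂ} (hv : v ≠ 0) {μ : ℂ} (hμ : (it A r r.den (pt x₀ ε)).mulVec v = μ • v)
    (hg : ‖μ‖ = Real.exp (g * r.den)) :
    ∃ n₂ ∈ S, ∃ y : ℝ, G ≤ 2 * (‖it A r n₂ (pt (y - n₂ * r) ε)‖ * Real.exp (g * (n - n₂ : ℕ)) +
      ‖it A r (n - n₂) (pt y ε)‖ * (‖(it A r n₂ (pt (y - n₂ * r) ε)).det‖ *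
        Real.exp (-(g * n₂)))) := by
  have hq := r.den_pos
  set u : ℕ → Fin 2 → ℂ := fun k => (it A r k (pt x₀ ε)).mulVec v with hu
  set w : ℕ → ℝ := fun k => ‖u k‖ * Real.exp (-(g * k)) with hw
  have hper1 : ∀ k, w (k + r.den) = w k := by
    intro k
    have h1 : u (k + r.den) = μ • u k := by
      have h2 := it_add_rat hA r k 1 (pt x₀ ε)
      rw [one_mul] at h2
      simp only [hu]
      rw [it_add, h2, ← Matrix.mulVec_mulVec, hμ, Matrix.mulVec_smul]
    simp only [hw]
    rw [h1, norm_smul, hg, mul_right_comm, ← Real.exp_add, mul_comm]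
    push_cast; ring_nf
  have hper : Function.Periodic w r.den := hper1
  have hwuk : ∀ k, ‖u k‖ = w k * Real.exp (g * k) := by
    intro k
    simp only [hw]
    rw [mul_assoc, ← Real.exp_add, neg_add_cancel, Real.exp_zero, mul_one]
  obtain ⟨k₀, hk₀, hmax⟩ := Finset.exists_max_image (Finset.range r.den) w
    ⟨0, Finset.mem_range.mpr hq⟩
  set k := k₀ + n * r.den with hk
  have hwk : w k = w k₀ := by
    rw [hk]; simpa using hper.nat_mul n k₀
  have hle : ∀ j, w j ≤ w k := by
    intro j
    rw [hwk, ← hper.map_mod_nat j]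
    exact hmax _ (Finset.mem_range.mpr (Nat.mod_lt _ hq))
  have hnk : n ≤ k := by
    rw [hk]
    exact (Nat.le_mul_of_pos_right n hq).trans (Nat.le_add_left _ _)
  have hw0 : 0 < w 0 := by
    simp only [hw, hu, it, Matrix.one_mulVec]
    have := norm_pos_iff.mpr hv
    positivity
  have huk : 0 < ‖u k‖ := by
    rw [hwuk]
    have := hw0.trans_le (hle 0)
    positivity
  obtain ⟨n₂, hn₂, hG⟩ := h (x₀ + k * r)
  have hn₂n := hS n₂ hn₂
  refine ⟨n₂, hn₂, x₀ + k * r, ?_⟩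
  set y := x₀ + k * r with hy
  set P := it A r (n - n₂) (pt y ε) with hP
  set Q := it A r n₂ (pt (y - n₂ * r) ε) with hQ
  have hPQ : it A r n (pt (y - n₂ * r) ε) = P * Q := by
    rw [hP, hQ]
    conv_lhs => rw [← Nat.sub_add_cancel hn₂n, it_add]
    congr 2
    simp only [pt]; push_cast; ring
  have hPu : P.mulVec (u k) = u (k + (n - n₂)) := by
    simp only [hu, hP]
    rw [Matrix.mulVec_mulVec, add_comm k, it_add (A := A) r (n - n₂) k]
    congr 3
    simp only [pt, hy]; push_cast; ring
  have hQu : Q.adjugate.mulVec (u k) = Q.det • u (k - n₂) := by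
    have h1 : u k = Q.mulVec (u (k - n₂)) := by
      simp only [hu, hQ]
      have h2 := it_add (A := A) r n₂ (k - n₂) (pt x₀ ε)
      rw [Nat.add_sub_cancel' (hn₂n.trans hnk)] at h2
      rw [Matrix.mulVec_mulVec, h2]
      congr 3
      rw [Nat.cast_sub (hn₂n.trans hnk)]
      simp only [pt, hy]; push_cast; ring
    rw [h1, Matrix.mulVec_mulVec, Matrix.adjugate_mul, Matrix.smul_mulVec, Matrix.one_mulVec]
  have key := norm_mul_norm_le P Q (u k)
  rw [← hPQ, hPu, hQu, norm_smul] at key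
  have b1 : ‖u (k + (n - n₂))‖ ≤ ‖u k‖ * Real.exp (g * (n - n₂ : ℕ)) := by
    rw [hwuk (k + (n - n₂)), hwuk k, mul_assoc (w k), ← Real.exp_add, Nat.cast_add, mul_add]
    exact mul_le_mul_of_nonneg_right (hle _) (Real.exp_pos _).le
  have b2 : ‖u (k - n₂)‖ ≤ ‖u k‖ * Real.exp (-(g * n₂)) := by
    rw [hwuk (k - n₂), hwuk k, mul_assoc (w k), ← Real.exp_add, Nat.cast_sub (hn₂n.trans hnk), mul_sub,
      sub_eq_add_neg]
    exact mul_le_mul_of_nonneg_right (hle _) (Real.exp_pos _).le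
  refine hG.trans (le_of_mul_le_mul_right (key.trans ?_) huk)
  calc _ ≤ 2 * (‖Q‖ * (‖u k‖ * Real.exp (g * (n - n₂ : ℕ))) +
        ‖P‖ * (‖Q.det‖ * (‖u k‖ * Real.exp (-(g * n₂))))) := by gcongr
    _ = _ := by ring

end ExtendedHarper

namespace ExtendedHarper

variable {A : ℂ → Matrix (Fin 2) (Fin 2) ℂ}

/-- The iterates of the cocycle at height `ε` are, at some time, smaller than `exp (a n)`; by
submultiplicativity the uniform growth rate is then less than `a`. -/
def RateLT (A : ℂ → Matrix (Fin 2) (Fin 2) ℂ) (β ε a : ℝ) : Prop :=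
  ∃ n : ℕ, 1 ≤ n ∧ ∀ x, ‖it A β n (pt x ε)‖ < Real.exp (a * n)

lemma RateLT.exists_growth_bound {β ε a : ℝ} (h : RateLT A β ε a) (hA : ∀ z, A (z + 1) = A z)
    (hc : Continuous A) :
    ∃ K η : ℝ, 1 ≤ K ∧ 0 < η ∧ ∀ b, |b - β| < η → ∀ (l : ℕ) (x : ℝ),
      ‖it A b l (pt x ε)‖ ≤ K * Real.exp (a * l) := by
  obtain ⟨n, hn, h⟩ := h
  exact ExtendedHarper.exists_growth_bound hA hc hn h

/-- Eigenvalues of the iterates over a full period of a rational frequency near `β` are either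
large or small. -/
lemma exists_eigenvalue_dichotomy (hA : ∀ z, A (z + 1) = A z) (hc : Continuous A)
    {β ε Λ κ ν ω d K' η' : ℝ} (hκ : 0 < κ) (hω : 0 < ω) (hων : 4 * κ ≤ ω * ν)
    (hblock : ∀ n₀ : ℕ, ∃ n : ℕ, n₀ ≤ n ∧ ∀ x : ℝ, ∃ n₂ : ℕ, ν * n ≤ n₂ ∧ n₂ ≤ (1 - ν) * n ∧
      Real.exp ((Λ - κ) * n) ≤ ‖it A β n (pt (x - n₂ * β) ε)‖)
    (hrate : RateLT A β ε (Λ + κ)) (hη' : 0 < η') (hK' : 1 ≤ K')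
    (hdet : ∀ b, |b - β| < η' → ∀ (l : ℕ) (x : ℝ),
      ‖(it A b l (pt x ε)).det‖ ≤ K' * Real.exp (d * l)) :
    ∃ η > 0, ∀ r : ℚ, |r - β| < η → ∀ (x₀ : ℝ) (μ : ℂ) (v : Fin 2 → ℂ), v ≠ 0 →
      (it A r r.den (pt x₀ ε)).mulVec v = μ • v →
      ‖μ‖ < Real.exp ((d - Λ + ω) * r.den) ∨ Real.exp ((Λ - ω) * r.den) < ‖μ‖ := by
  obtain ⟨K, η₁, hK, hη₁, hgrow⟩ := hrate.exists_growth_bound hA hc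
  obtain ⟨n₀, hn₀⟩ := eventually_atTop.mp (eventually_mul_pow_le_exp hκ (2 * K * (1 + K') + 1) 0)
  obtain ⟨n, hn, hb⟩ := hblock (max n₀ 1)
  have hn1 : (1 : ℝ) ≤ n := by exact_mod_cast (le_max_right _ _).trans hn
  have hexp := hn₀ n ((le_max_left _ _).trans hn)
  rw [pow_zero, mul_one] at hexp
  have hν : 0 < ν := by
    by_contra h0
    nlinarith
  obtain ⟨η₂, hη₂, hnear⟩ := exists_good_block_near hA hc (G := Real.exp ((Λ - κ) * n))
    (G' := Real.exp ((Λ - 2 * κ) * n)) (S := {n₂ : ℕ | ν * n ≤ n₂ ∧ n₂ ≤ (1 - ν) * n})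
    (Real.exp_lt_exp.mpr (by nlinarith)) (fun x => by
      obtain ⟨n₂, h1, h2, h3⟩ := hb x
      exact ⟨n₂, ⟨h1, h2⟩, h3⟩)
  refine ⟨min η' (min η₁ η₂), by positivity, fun r hr x₀ μ v hv hμ => ?_⟩
  by_contra hcon
  push Not at hcon
  obtain ⟨hlow, hup⟩ := hcon
  have hq : (0 : ℝ) < r.den := by exact_mod_cast r.den_pos
  have hr' : |(r : ℝ) - β| < η' := hr.trans_le (min_le_left _ _)
  have hr₁ : |(r : ℝ) - β| < η₁ := hr.trans_le ((min_le_right _ _).trans (min_le_left _ _))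
  have hr₂ : |(r : ℝ) - β| < η₂ := hr.trans_le ((min_le_right _ _).trans (min_le_right _ _))
  have hμ0 : 0 < ‖μ‖ := (Real.exp_pos _).trans_le hlow
  set g := Real.log ‖μ‖ / r.den with hg
  have hgμ : ‖μ‖ = Real.exp (g * r.den) := by
    rw [hg, div_mul_cancel₀ _ hq.ne', Real.exp_log hμ0]
  rw [hgμ, Real.exp_le_exp] at hlow hup
  have hglow := le_of_mul_le_mul_right hlow hq
  have hgup := le_of_mul_le_mul_right hup hq
  have hSn : ∀ n₂ ∈ {n₂ : ℕ | ν * n ≤ n₂ ∧ n₂ ≤ (1 - ν) * n}, n₂ ≤ n := by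
    rintro n₂ ⟨-, h2⟩
    have : (n₂ : ℝ) ≤ n := h2.trans (by nlinarith)
    exact_mod_cast this
  obtain ⟨n₂, hn₂, y, hy⟩ := exists_block_le_of_eigenvector hA r hSn
    (fun x => (hnear r hr₂ x).imp fun _ h => ⟨h.1, h.2.le⟩) hv hμ hgμ
  have hn₂n := hSn n₂ hn₂
  obtain ⟨hS1, hS2⟩ := hn₂
  have hn₁ : ((n - n₂ : ℕ) : ℝ) = n - n₂ := Nat.cast_sub hn₂n
  have hn₁0 : ν * n ≤ ((n : ℝ) - n₂) := by linarith
  have hn₂0 : (0 : ℝ) ≤ n₂ := Nat.cast_nonneg _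
  have hνn : 4 * κ * n ≤ ω * (ν * n) := by nlinarith
  have hνn0 : 0 ≤ ν * n := by positivity
  have t1 : ‖it A r n₂ (pt (y - n₂ * r) ε)‖ * Real.exp (g * (n - n₂ : ℕ)) ≤
      K * Real.exp ((Λ - 3 * κ) * n) := by
    calc _ ≤ K * Real.exp ((Λ + κ) * n₂) * Real.exp (g * (n - n₂ : ℕ)) := by
          gcongr; exact hgrow r hr₁ _ _
      _ = K * Real.exp ((Λ + κ) * n₂ + g * (n - n₂)) := by rw [mul_assoc, ← Real.exp_add, hn₁]
      _ ≤ _ := by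
          gcongr
          have a1 : g * ((n : ℝ) - n₂) ≤ (Λ - ω) * (n - n₂) :=
            mul_le_mul_of_nonneg_right hgup (by linarith)
          have a2 : ω * (ν * n) ≤ ω * (n - n₂) := by gcongr
          nlinarith
  have t2 : ‖it A r (n - n₂) (pt y ε)‖ * (‖(it A r n₂ (pt (y - n₂ * r) ε)).det‖ *
        Real.exp (-(g * n₂))) ≤ K * K' * Real.exp ((Λ - 3 * κ) * n) := by
    calc _ ≤ K * Real.exp ((Λ + κ) * (n - n₂ : ℕ)) * (K' * Real.exp (d * n₂) *
          Real.exp (-(g * n₂))) := by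
          gcongr
          · exact hgrow r hr₁ _ _
          · exact hdet r hr' _ _
      _ = K * K' * Real.exp ((Λ + κ) * (n - n₂) + (d - g) * n₂) := by
          rw [Real.exp_add, sub_mul d, sub_eq_add_neg (d * _), Real.exp_add (d * _), hn₁]; ring
      _ ≤ _ := by
          gcongr
          have a1 : (d - g) * n₂ ≤ (Λ - ω) * n₂ :=
            mul_le_mul_of_nonneg_right (by linarith) hn₂0
          have a2 : ω * (ν * n) ≤ ω * n₂ := by gcongr
          nlinarith
  have h3 : Real.exp ((Λ - 2 * κ) * n) = Real.exp (κ * n) * Real.exp ((Λ - 3 * κ) * n) := by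
    rw [← Real.exp_add]; ring_nf
  have h4 := Real.exp_pos ((Λ - 3 * κ) * n)
  rw [h3] at hy
  nlinarith

lemma IsLaurent.trace_it (hL : ∀ i j, IsLaurent 1 (fun z => A z i j)) (b : ℝ) (n : ℕ) :
    IsLaurent n (fun z => (it A b n z).trace) := by
  simp only [Matrix.trace_fin_two]
  exact (isLaurent_it hL b n 0 0).add (isLaurent_it hL b n 1 1)

lemma norm_trace_le (M : Matrix (Fin 2) (Fin 2) ℂ) : ‖M.trace‖ ≤ 2 * ‖M‖ := by
  rw [Matrix.trace_fin_two, two_mul]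
  exact (norm_add_le _ _).trans (add_le_add (norm_entry_le _ _ _) (norm_entry_le _ _ _))

/-- The trace over a full period of a rational frequency at height `ε₁` is controlled by the growth
on the real line and far away from it. -/
lemma norm_trace_it_le (hA : ∀ z, A (z + 1) = A z) (hL : ∀ i j, IsLaurent 1 (fun z => A z i j))
    {r : ℚ} {ε₁ ε' a a₀ K : ℝ} (hε₁ : 0 ≤ ε₁)
    (hp : ∀ x, ‖it A r r.den (pt x ε')‖ ≤ K * Real.exp ((a + 2 * π * ε') * r.den))
    (hm : ∀ x, ‖it A r r.den (pt x (-ε'))‖ ≤ K * Real.exp ((a + 2 * π * ε') * r.den))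
    (h0 : ∀ x, ‖it A r r.den (pt x 0)‖ ≤ K * Real.exp (a₀ * r.den)) (x : ℝ) :
    ‖(it A r r.den (pt x ε₁)).trace‖ ≤
      2 * K * (2 * Real.exp ((a + 2 * π * ε₁) * r.den) + Real.exp (a₀ * r.den)) := by
  obtain ⟨P, hP⟩ := IsLaurent.trace_it hL r r.den
  have hpi := Real.pi_pos
  have hq : (0 : ℝ) ≤ r.den := Nat.cast_nonneg _
  have hK : 0 ≤ K := by
    have := (norm_nonneg _).trans (h0 0)
    exact nonneg_of_mul_nonneg_left this (Real.exp_pos _)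
  have hT : ∀ {B ε : ℝ}, (∀ x, ‖it A r r.den (pt x ε)‖ ≤ B) →
      ∀ x, ‖(it A r r.den (pt x ε)).trace‖ ≤ 2 * B := fun h x =>
    (norm_trace_le _).trans (mul_le_mul_of_nonneg_left (h x) two_pos.le)
  have c0 := hP.norm_coeff_le (hT hp) 0
  have cq := hP.norm_coeff_le (hT h0) r.den
  have c2 := hP.norm_coeff_le (hT hm) (2 * r.den)
  simp only [mul_zero, zero_mul, Real.exp_zero, mul_one] at cq
  rw [← mul_assoc] at c0 c2
  have b0 := mul_exp_le_of_mul_exp_le (s' := 2 * π * ε₁ * r.den)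
    (t' := (a + 2 * π * ε₁) * r.den) c0 (by push_cast; linarith) (by positivity)
  have b2 := mul_exp_le_of_mul_exp_le (s' := -2 * π * ε₁ * r.den)
    (t' := (a + 2 * π * ε₁) * r.den) c2 (by
      have : 0 ≤ π * ε₁ * r.den := by positivity
      push_cast; linarith) (by positivity)
  have := hP.norm_le_of_invariant (trace_it_add_rat hA r) x ε₁
  linarith

lemma RateLT.mono {β ε a a' : ℝ} (h : RateLT A β ε a) (haa' : a ≤ a') : RateLT A β ε a' := by
  obtain ⟨n, hn, h⟩ := h
  exact ⟨n, hn, fun x => (h x).trans_le (by gcongr)⟩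

lemma exists_of_not_rateLT {β ε a : ℝ} (h : ¬ RateLT A β ε a) {n : ℕ} (hn : 1 ≤ n) :
    ∃ x, Real.exp (a * n) ≤ ‖it A β n (pt x ε)‖ := by
  by_contra hx
  push Not at hx
  exact h ⟨n, hn, hx⟩

set_option maxHeartbeats 1000000 in
/-- Rational approximation shows that the growth rate does not increase from the real line to a
small positive height, provided that the determinants grow at a strictly smaller rate and that the
growth far away from the real line is almost minimal. -/
lemma rate_le_rate_zero {β : ℝ} (hβ : Irrational β) (hA : ∀ z, A (z + 1) = A z)
    (hc : Continuous A) (hL : ∀ i j, IsLaurent 1 (fun z => A z i j)) {ε₁ ε' m₀ δ Λ₀ Λ₁ : ℝ}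
    (hε₁ : 0 < ε₁) (hε₁δ : 100 * ε₁ ≤ δ) (hε' : ε₁ + δ ≤ ε')
    (hfp : RateLT A β ε' (m₀ + δ / 8 + 2 * π * ε'))
    (hfm : RateLT A β (-ε') (m₀ + δ / 8 + 2 * π * ε'))
    (h0 : ∀ a, Λ₀ < a → RateLT A β 0 a) (hm : ∀ a, Λ₁ < a → RateLT A β (-ε₁) a)
    (hp : ∀ a, Λ₁ < a → RateLT A β ε₁ a) (hp' : ∀ a, a < Λ₁ → ¬ RateLT A β ε₁ a)
    (hΛ : m₀ + δ ≤ Λ₁)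
    (hdet : ∀ κ : ℝ, 0 < κ → ∃ K η : ℝ, 1 ≤ K ∧ 0 < η ∧ ∀ b, |b - β| < η → ∀ (l : ℕ) (x : ℝ),
      ‖(it A b l (pt x ε₁)).det‖ ≤ K * Real.exp ((2 * m₀ + 4 * π * ε₁ + κ) * l))
    (hdet' : ∀ᶠ n : ℕ in atTop, ∀ b : ℝ, ∃ x : ℝ,
      Real.exp ((2 * m₀ - δ / 2) * n) ≤ ‖(it A b n (pt x ε₁)).det‖) : Λ₁ ≤ Λ₀ := by
  by_contra hlt
  push Not at hlt
  have hpi := Real.pi_pos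
  have hδ : 0 < δ := by linarith
  have hπε : 4 * π * ε₁ ≤ δ / 6 := by nlinarith [Real.pi_lt_four]
  have hπε0 : 0 < 4 * π * ε₁ := by positivity
  have hεε : 0 < ε' - ε₁ := by linarith
  set ν := δ / (64 * (π * (ε' - ε₁))) with hν
  have hν0 : 0 < ν := by positivity
  have hνe : ν * (64 * (π * (ε' - ε₁))) = δ := by rw [hν]; field_simp
  set ω := min ((Λ₁ - Λ₀) / 4) (δ / 8) with hω
  have hω0 : 0 < ω := by have := sub_pos.mpr hlt; positivity
  have hω1 : ω ≤ (Λ₁ - Λ₀) / 4 := min_le_left _ _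
  have hω2 : ω ≤ δ / 8 := min_le_right _ _
  set κ := min (ω * ν / 8) (min (ε₁ * ν) (ω / 8)) with hκ
  have hκ0 : 0 < κ := by positivity
  have hκ1 : κ ≤ ω * ν / 8 := min_le_left _ _
  have hκ2 : κ ≤ ε₁ * ν := (min_le_right _ _).trans (min_le_left _ _)
  have hκ3 : κ ≤ ω / 8 := (min_le_right _ _).trans (min_le_right _ _)
  obtain ⟨Km, ηm, hKm1, hηm, hKm⟩ := (hm (Λ₁ + κ) (by linarith)).exists_growth_bound hA hc
  obtain ⟨Kf, ηf, hKf1, hηf, hKf⟩ := hfp.exists_growth_bound hA hc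
  obtain ⟨Kn, ηn, hKn1, hηn, hKn⟩ := hfm.exists_growth_bound hA hc
  obtain ⟨K₀, η₀, hK₀1, hη₀, hK₀⟩ := (h0 (Λ₀ + κ) (by linarith)).exists_growth_bound hA hc
  obtain ⟨K', η', hK'1, hη', hK'⟩ := hdet κ hκ0
  have hββ : ∀ {η : ℝ}, 0 < η → |β - β| < η := fun h => by simpa using h
  set K := Km + Kf + Kn + K₀ with hK
  have hKmle : Km ≤ K := by linarith
  have hKfle : Kf ≤ K := by linarith
  have hKnle : Kn ≤ K := by linarith
  have hK₀le : K₀ ≤ K := by linarith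
  have hK0 : 0 ≤ K := by linarith
  set sp := 1 - 16 * ν with hsp
  set sm := 3 * κ / (4 * π * ε₁) with hsm
  have hsme : sm * (4 * π * ε₁) = 3 * κ := by rw [hsm]; field_simp
  have hsm0 : 0 ≤ sm := by positivity
  have hsmν : sm ≤ 8 * ν := by
    rw [hsm, div_le_iff₀ hπε0]
    nlinarith [Real.pi_gt_three, mul_pos hε₁ hν0]
  have hsp0 : 0 ≤ sp := by
    have : 16 * ν * (4 * (π * (ε' - ε₁))) ≤ 1 * (4 * (π * (ε' - ε₁))) := by
      nlinarith [Real.pi_gt_three, mul_nonneg hpi.le (by linarith : 0 ≤ ε' - ε₁ - δ)]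
    have := le_of_mul_le_mul_right this (by positivity)
    linarith
  have hblock := exists_good_block (ε := ε₁) (εm := -ε₁) (εp := ε') (am := Λ₁ + κ)
    (ap := m₀ + δ / 8 + 2 * π * ε') (sm := sm) (sp := sp) (K := K) (Λ := Λ₁) (κ := κ) (ν := ν)
    hβ hL hκ0 hν0 (by linarith) (by linarith) hsm0 hsp0 (by linarith) hK0
    (fun n x => (hKm β (hββ hηm) n x).trans (by gcongr))
    (fun n x => (hKf β (hββ hηf) n x).trans (by gcongr)) (by nlinarith)
    (by
      rw [hsp]
      have e : 2 * π * (1 - 16 * ν) * (ε' - ε₁) =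
        2 * π * ε' - 4 * π * ε₁ / 2 - ν * (64 * (π * (ε' - ε₁))) / 2 := by ring
      rw [e, hνe]
      linarith)
    (fun n hn => exists_of_not_rateLT (hp' _ (by linarith)) hn)
  obtain ⟨η, hη, hdich⟩ := exists_eigenvalue_dichotomy hA hc hκ0 hω0 (by linarith) hblock
    (hp _ (by linarith)) hη' hK'1 hK'
  set d := 2 * m₀ + 4 * π * ε₁ + κ with hd
  obtain ⟨Q, hQ⟩ := eventually_atTop.mp (hdet'.and ((eventually_mul_pow_le_exp hω0 (12 * K + 1) 0).and
    ((eventually_mul_pow_le_exp hδ K' 0).and (eventually_mul_pow_le_exp hδ 2 0))))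
  obtain ⟨r, hrQ, -, hr⟩ := exists_rat_near hβ Q
    (η := min η (min (min ηf ηn) (min η₀ η'))) (by positivity)
  rw [abs_sub_comm] at hr
  simp only [lt_min_iff] at hr
  obtain ⟨hrη, ⟨hrf, hrn⟩, hr₀, hr'⟩ := hr
  obtain ⟨hlow, e1, e2, e3⟩ := hQ r.den hrQ
  rw [pow_zero, mul_one] at e1 e2 e3
  obtain ⟨x₀, hx₀⟩ := hlow r
  have hq : (0 : ℝ) ≤ r.den := Nat.cast_nonneg _
  have htr := le_two_mul_norm_trace (M := it A r r.den (pt x₀ ε₁))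
    (ρ := Real.exp ((d - Λ₁ + ω) * r.den)) (R := Real.exp ((Λ₁ - ω) * r.den)) (by
      calc _ ≤ Real.exp (δ * r.den) * Real.exp ((d - Λ₁ + ω) * r.den) := by gcongr
        _ ≤ _ := by rw [← Real.exp_add, ← add_mul]; gcongr; linarith)
    (hdich r hrη x₀) (by
      refine le_trans ?_ hx₀
      rw [← Real.exp_nat_mul, ← mul_assoc]
      push_cast
      gcongr
      linarith) (by
      refine (hK' r hr' _ _).trans ?_
      rw [← Real.exp_nat_mul, ← mul_assoc]
      calc _ ≤ Real.exp (δ * r.den) * Real.exp (d * r.den) := by gcongr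
        _ ≤ _ := by
            rw [← Real.exp_add, ← add_mul]; push_cast; gcongr; linarith) (Real.exp_pos _).le
  have htr' := norm_trace_it_le hA hL (r := r) (ε₁ := ε₁) (ε' := ε') (a := m₀ + δ / 8)
    (a₀ := Λ₀ + κ) (K := K) hε₁.le (fun x => (hKf r hrf _ x).trans (by gcongr))
    (fun x => (hKn r hrn _ x).trans (by gcongr)) (fun x => (hK₀ r hr₀ _ x).trans (by gcongr)) x₀
  have f1 : Real.exp ((m₀ + δ / 8 + 2 * π * ε₁) * r.den) ≤ Real.exp ((Λ₁ - 2 * ω) * r.den) := by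
    gcongr; linarith
  have f2 : Real.exp ((Λ₀ + κ) * r.den) ≤ Real.exp ((Λ₁ - 2 * ω) * r.den) := by
    gcongr; linarith
  have f3 : Real.exp ((Λ₁ - ω) * r.den) =
      Real.exp (ω * r.den) * Real.exp ((Λ₁ - 2 * ω) * r.den) := by
    rw [← Real.exp_add]; ring_nf
  have f4 := Real.exp_pos ((Λ₁ - 2 * ω) * r.den)
  have f5 : ‖(it A r r.den (pt x₀ ε₁)).trace‖ ≤ 2 * K * (3 * Real.exp ((Λ₁ - 2 * ω) * r.den)) :=
    htr'.trans (mul_le_mul_of_nonneg_left (by linarith) (by positivity))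
  rw [f3] at htr
  nlinarith

end ExtendedHarper

namespace ExtendedHarper

section Rates

variable {A : ℂ → Matrix (Fin 2) (Fin 2) ℂ}

lemma exists_rate (hA : ∀ z, A (z + 1) = A z) (hc : Continuous A) {β ε a₀ : ℝ}
    (h : ¬ RateLT A β ε a₀) :
    ∃ Λ, a₀ ≤ Λ ∧ (∀ a, Λ < a → RateLT A β ε a) ∧ ∀ a, a < Λ → ¬ RateLT A β ε a := by
  have hbdd : ∀ a ∈ {a | RateLT A β ε a}, a₀ ≤ a := by
    intro a ha
    by_contra hlt
    exact h (RateLT.mono ha (not_le.mp hlt).le)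
  have hne : {a | RateLT A β ε a}.Nonempty := by
    obtain ⟨C, hC1, hC⟩ := exists_bound_line hA hc ε
    refine ⟨Real.log (2 * C) + 1, 1, le_rfl, fun x => ?_⟩
    refine (norm_it_le hC1 hC β 1 x).trans_lt ?_
    rw [pow_one, ← Real.log_lt_iff_lt_exp (by linarith)]
    push_cast
    linarith
  refine ⟨sInf {a | RateLT A β ε a}, le_csInf hne hbdd, fun a ha => ?_, fun a ha ha' => ?_⟩
  · obtain ⟨a', ha', hlt⟩ := exists_lt_of_csInf_lt hne ha
    exact RateLT.mono ha' hlt.le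
  · exact absurd (csInf_le ⟨a₀, hbdd⟩ ha') (not_le.mpr ha)

lemma IsLaurent.norm_le_of_two_lines {n : ℕ} {F : ℂ → ℂ} (h : IsLaurent n F) {ε B : ℝ}
    (hε : 0 ≤ ε) (hp : ∀ x, ‖F (pt x ε)‖ ≤ B) (hm : ∀ x, ‖F (pt x (-ε))‖ ≤ B) (x : ℝ) :
    ‖F (pt x 0)‖ ≤ (2 * n + 1) * B := by
  obtain ⟨P, hP⟩ := h
  have hpi := Real.pi_pos
  have hcoeff : ∀ i, ‖P.coeff i‖ ≤ B := by
    intro i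
    rcases le_total (n : ℝ) i with hi | hi
    · refine le_trans ?_ (hP.norm_coeff_le hm i)
      refine le_mul_of_one_le_right (norm_nonneg _) (Real.one_le_exp ?_)
      have : 0 ≤ 2 * π * ε * ((i : ℝ) - n) := mul_nonneg (by positivity) (by linarith)
      linarith
    · refine le_trans ?_ (hP.norm_coeff_le hp i)
      refine le_mul_of_one_le_right (norm_nonneg _) (Real.one_le_exp ?_)
      have : 0 ≤ 2 * π * ε * ((n : ℝ) - i) := mul_nonneg (by positivity) (by linarith)
      linarith
  rw [hP.eq_sum]
  refine (norm_sum_le _ _).trans ((Finset.sum_le_sum (g := fun _ => B) fun i _ => ?_).trans ?_)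
  · rw [norm_mul, show ((i : ℂ) - n) = (((i : ℝ) - n : ℝ) : ℂ) by push_cast; rfl, norm_ee_mul_pt]
    simpa using hcoeff i
  · rw [Finset.sum_const, Finset.card_range, nsmul_eq_mul]
    push_cast
    exact le_rfl

lemma RateLT.zero_of_two_lines (hA : ∀ z, A (z + 1) = A z) (hc : Continuous A)
    (hL : ∀ i j, IsLaurent 1 (fun z => A z i j)) {β ε a a' : ℝ} (hε : 0 ≤ ε)
    (hp : RateLT A β ε a) (hm : RateLT A β (-ε) a) (haa' : a < a') : RateLT A β 0 a' := by
  obtain ⟨Kp, ηp, hKp1, hηp, hKp⟩ := hp.exists_growth_bound hA hc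
  obtain ⟨Km, ηm, hKm1, hηm, hKm⟩ := hm.exists_growth_bound hA hc
  set K := max Kp Km with hK
  have hK0 : 0 < K := by have := le_max_left Kp Km; linarith
  obtain ⟨n, hn, hn1⟩ := ((eventually_mul_pow_le_exp (sub_pos.mpr haa') (8 * K) 1).and
    (eventually_ge_atTop 1)).exists
  rw [pow_one] at hn
  refine ⟨n, hn1, fun x => ?_⟩
  have hentry : ∀ i j, ‖it A β n (pt x 0) i j‖ ≤ (2 * n + 1) * (K * Real.exp (a * n)) := by
    intro i j
    refine (isLaurent_it hL β n i j).norm_le_of_two_lines hε (fun x => ?_) (fun x => ?_) x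
    · refine (norm_entry_le _ _ _).trans ((hKp β (by simpa using hηp) n x).trans ?_)
      gcongr; exact le_max_left _ _
    · refine (norm_entry_le _ _ _).trans ((hKm β (by simpa using hηm) n x).trans ?_)
      gcongr; exact le_max_right _ _
  refine (norm_mat_le hentry).trans_lt ?_
  have h1 : Real.exp (a' * n) = Real.exp ((a' - a) * n) * Real.exp (a * n) := by
    rw [← Real.exp_add]; ring_nf
  have h2 : 2 * ((2 * n + 1) * K) < 8 * K * ((n : ℝ) + 1) := by
    nlinarith [mul_nonneg hK0.le (Nat.cast_nonneg (α := ℝ) n)]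
  rw [h1, ← mul_assoc, ← mul_assoc, mul_assoc 2]
  exact mul_lt_mul_of_pos_right (h2.trans_le hn) (Real.exp_pos _)

end Rates

variable {l1 l2 l3 β : ℝ} {E : ℂ}

lemma RateLT.harperA_neg {ε a : ℝ} (h : RateLT (harperA l1 l2 l3 β E) β ε a) :
    RateLT (harperA l1 l2 l3 β E) β (-ε) a := by
  obtain ⟨n, hn, h⟩ := h
  obtain ⟨k, rfl⟩ : ∃ k, n = k + 1 := ⟨n - 1, by omega⟩
  refine ⟨k + 1, hn, fun x => ?_⟩
  have h1 := norm_it_harperA_neg (l1 := l1) (l2 := l2) (l3 := l3) (β := β) (E := E) k β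
    (-x - k * β) ε
  rw [show -(-x - k * β) - k * β = x by ring] at h1
  rw [h1]
  exact h _

lemma exists_norm_det_it_pt_le (hβ : Irrational β) (hm : 0 < max l1 l3) (h1 : 0 ≤ l1) (h2 : 0 ≤ l2)
    (h3 : 0 ≤ l3) (h : l2 ≤ l1 + l3) {ε κ : ℝ} (hε : 0 ≤ ε) (hκ : 0 < κ) :
    ∃ K η : ℝ, 1 ≤ K ∧ 0 < η ∧ ∀ b, |b - β| < η → ∀ (l : ℕ) (x : ℝ),
      ‖(it (harperA l1 l2 l3 β E) b l (pt x ε)).det‖ ≤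
        K * Real.exp ((2 * Real.log (max l1 l3) + 4 * π * ε + κ) * l) := by
  obtain ⟨K, η, hK, hη, hU⟩ := exists_norm_det_it_le (E := E) hβ hm h1 h2 h3 h
    (κ := κ / 2) (by positivity)
  refine ⟨(1 + 8 / κ) * K, η, ?_, hη, fun b hb l x => ?_⟩
  · have : 0 < 8 / κ := by positivity
    nlinarith
  have hl : (0 : ℝ) ≤ l := Nat.cast_nonneg _
  refine (norm_det_it_le_of_line isLaurent_harperA (ε := 0)
    (fun x => by simpa only [pt_zero] using hU b hb l x) x ε).trans ?_
  have e1 : (4 * l + 1 : ℝ) ≤ (1 + 8 / κ) * Real.exp (κ / 2 * l) := by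
    have a1 := Real.add_one_le_exp (κ / 2 * l)
    have a2 : 0 ≤ κ / 2 * l := by positivity
    have a3 : 8 / κ * (κ / 2 * l) = 4 * l := by field_simp; ring
    have a4 : 0 < 8 / κ := by positivity
    nlinarith
  have e2 : |0 - ε| = ε := by rw [zero_sub, abs_neg, abs_of_nonneg hε]
  rw [e2]
  calc _ ≤ (1 + 8 / κ) * Real.exp (κ / 2 * l) * (K *
        Real.exp ((2 * Real.log (max l1 l3) + κ / 2) * l) * Real.exp (4 * π * l * ε)) := by gcongr
    _ = (1 + 8 / κ) * K * (Real.exp (κ / 2 * l) *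
        Real.exp ((2 * Real.log (max l1 l3) + κ / 2) * l) * Real.exp (4 * π * l * ε)) := by ring
    _ = _ := by rw [← Real.exp_add, ← Real.exp_add]; ring_nf

lemma eventually_le_norm_det_it_pt (hm : 0 < max l1 l3) (h1 : 0 ≤ l1) (h2 : 0 ≤ l2)
    (h3 : 0 ≤ l3) (h : l2 ≤ l1 + l3) {ε δ : ℝ} (hε : 0 ≤ ε) (hδ : 4 * π * ε < δ) :
    ∀ᶠ n : ℕ in atTop, ∀ b : ℝ, ∃ x : ℝ, Real.exp ((2 * Real.log (max l1 l3) - δ) * n) ≤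
      ‖(it (harperA l1 l2 l3 β E) b n (pt x ε)).det‖ := by
  filter_upwards [eventually_mul_pow_le_exp (sub_pos.mpr hδ) 5 1] with n hn b
  rw [pow_one] at hn
  by_contra hcon
  push Not at hcon
  obtain ⟨x, hx⟩ := exists_le_norm_det_it (β := β) (E := E) hm h1 h2 h3 h b n
  have h4 := norm_det_it_le_of_line isLaurent_harperA (fun x => (hcon x).le) x 0
  rw [pt_zero, sub_zero, abs_of_nonneg hε] at h4
  have h5 := hx.trans h4
  have e1 : Real.exp (2 * Real.log (max l1 l3) * n) = Real.exp ((δ - 4 * π * ε) * n) *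
      (Real.exp ((2 * Real.log (max l1 l3) - δ) * n) * Real.exp (4 * π * n * ε)) := by
    rw [← Real.exp_add, ← Real.exp_add]; ring_nf
  rw [e1] at h5
  have h6 := le_of_mul_le_mul_right h5 (by positivity)
  have : (0 : ℝ) ≤ n := Nat.cast_nonneg _
  linarith

set_option maxHeartbeats 400000 in
/-- If the uniform growth rate on the real line exceeds `log (max λ₁ λ₃)` then every orbit segment
contains a long block with nearly maximal growth. -/
lemma exists_good_block_harperA (hβ : Irrational β) (hm : 0 < max l1 l3) (h1 : 0 ≤ l1) (h2 : 0 ≤ l2)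
    (h3 : 0 ≤ l3) (h : l2 ≤ l1 + l3) (h13 : 1 ≤ l1 + l3) {δ : ℝ} (hδ : 0 < δ)
    (hbig : ∀ n : ℕ, 1 ≤ n → ∃ x : ℝ, Real.exp ((Real.log (max l1 l3) + δ) * n) ≤
      ‖it (harperA l1 l2 l3 β E) β n x‖) :
    ∃ Λ, Real.log (max l1 l3) + δ ≤ Λ ∧ ∃ κ₀ > 0, ∀ κ, 0 < κ → κ ≤ κ₀ →
      RateLT (harperA l1 l2 l3 β E) β 0 (Λ + κ) ∧
      ∀ n₀ : ℕ, ∃ n : ℕ, n₀ ≤ n ∧ ∀ x : ℝ, ∃ n₂ : ℕ, 1 / 16 * n ≤ (n₂ : ℝ) ∧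
        (n₂ : ℝ) ≤ (1 - 1 / 16) * n ∧
        Real.exp ((Λ - κ) * n) ≤ ‖it (harperA l1 l2 l3 β E) β n (pt (x - n₂ * β) 0)‖ := by
  set A := harperA l1 l2 l3 β E with hAdef
  set m₀ := Real.log (max l1 l3) with hm₀
  have hpi := Real.pi_pos
  have hA : ∀ z, A (z + 1) = A z := harperA_add_one
  have hc : Continuous A := continuous_harperA
  have hL : ∀ i j, IsLaurent 1 (fun z => A z i j) := isLaurent_harperA
  have hnot : ¬ RateLT A β 0 (m₀ + δ) := by
    rintro ⟨n, hn, hx⟩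
    obtain ⟨x, hx'⟩ := hbig n hn
    have := hx x
    rw [pt_zero] at this
    linarith
  obtain ⟨Λ₀, hΛ₀, h0, h0'⟩ := exists_rate hA hc hnot
  set ε₁ := δ / 100 with hε₁
  have hε₁0 : 0 < ε₁ := by positivity
  have hπε : 4 * π * ε₁ ≤ δ / 6 := by nlinarith [Real.pi_lt_four]
  have hsub : ∀ a, RateLT A β ε₁ a → Λ₀ ≤ a := by
    intro a ha
    by_contra hlt
    push Not at hlt
    obtain ⟨a', h1, h2⟩ := exists_between hlt
    exact h0' a' h2 (RateLT.zero_of_two_lines hA hc hL hε₁0.le ha (RateLT.harperA_neg ha) h1)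
  obtain ⟨Λ₁, hΛ₁, hp, hp'⟩ := exists_rate (a₀ := Λ₀ - 1) hA hc (β := β) (ε := ε₁) (fun hr => by
    have := hsub _ hr; linarith)
  have hΛ₁₀ : Λ₀ ≤ Λ₁ := le_of_forall_gt_imp_ge_of_dense fun a ha => hsub a (hp a ha)
  obtain ⟨ε', hε', hfar⟩ := exists_norm_it_lt_far (l2 := l2) (β := β) (E := E) hm h1 h3 h13
    (κ := δ / 8) (by positivity) (ε₁ + δ)
  have hle : Λ₁ ≤ Λ₀ := rate_le_rate_zero (m₀ := m₀) (δ := δ) hβ hA hc hL hε₁0 (by linarith) hε' hfar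
    (RateLT.harperA_neg hfar) h0 (fun a ha => (hp a ha).harperA_neg) hp hp' (hΛ₀.trans hΛ₁₀)
    (fun κ hκ => exists_norm_det_it_pt_le hβ hm h1 h2 h3 h hε₁0.le hκ)
    (eventually_le_norm_det_it_pt hm h1 h2 h3 h hε₁0.le (by linarith))
  refine ⟨Λ₀, hΛ₀, ε₁ / 4, by positivity, fun κ hκ hκε => ⟨h0 _ (by linarith), fun n₀ => ?_⟩⟩
  have hr : RateLT A β ε₁ (Λ₀ + κ) := hp _ (by linarith)
  obtain ⟨Kp, ηp, hKp1, hηp, hKp⟩ := hr.exists_growth_bound hA hc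
  obtain ⟨Km, ηm, hKm1, hηm, hKm⟩ := (RateLT.harperA_neg hr).exists_growth_bound hA hc
  set s := 3 * κ / (2 * π * ε₁) with hs
  have hse : s * (2 * π * ε₁) = 3 * κ := by rw [hs]; field_simp
  have hs4 : s ≤ 1 / 4 := by
    rw [hs, div_le_iff₀ (by positivity)]
    nlinarith [Real.pi_gt_three]
  exact exists_good_block (ε := 0) (εm := -ε₁) (εp := ε₁) (am := Λ₀ + κ) (ap := Λ₀ + κ) (sm := s)
    (sp := s) (K := max Kp Km) (Λ := Λ₀) (κ := κ) (ν := 1 / 16) hβ hL hκ (by norm_num) (by linarith)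
    hε₁0.le (by positivity) (by positivity) (by linarith) (by positivity)
    (fun n x => (hKm β (by simpa using hηm) n x).trans (by gcongr; exact le_max_right _ _))
    (fun n x => (hKp β (by simpa using hηp) n x).trans (by gcongr; exact le_max_left _ _))
    (by linarith) (by linarith)
    (fun n hn => exists_of_not_rateLT (h0' _ (by linarith)) hn) n₀

end ExtendedHarper

namespace ExtendedHarper

lemma norm_mulVec_le (M : Matrix (Fin 2) (Fin 2) ℂ) (v : Fin 2 → ℂ) :
    ‖M.mulVec v‖ ≤ 2 * ‖M‖ * ‖v‖ := by
  refine (pi_norm_le_iff_of_nonneg (by positivity)).mpr fun i => ?_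
  have e : M.mulVec v i = M i 0 * v 0 + M i 1 * v 1 := by
    simp [Matrix.mulVec, dotProduct, Fin.sum_univ_two]
  have h : ∀ j, ‖M i j * v j‖ ≤ ‖M‖ * ‖v‖ := fun j => by
    rw [norm_mul]
    exact mul_le_mul (norm_entry_le M i j) (norm_le_pi_norm v j) (by positivity) (by positivity)
  rw [e]
  linarith [norm_add_le (M i 0 * v 0) (M i 1 * v 1), h 0, h 1]

lemma norm_adjugate_mat (M : Matrix (Fin 2) (Fin 2) ℂ) : ‖M.adjugate‖ = ‖M‖ := by
  rw [norm_mat_eq, norm_mat_eq, Matrix.adjugate_fin_two]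
  simp only [Matrix.of_apply, Matrix.cons_val_zero, Matrix.cons_val_one, Matrix.cons_val', norm_neg,
    Matrix.cons_val_fin_one]
  congr 1
  ring

/-- Propagation of an approximate orbit `M j u_j ≈ a_j u_{j+1}` with errors `e_j`. -/
lemma norm_mulVec_le_of_step {M R : ℕ → Matrix (Fin 2) (Fin 2) ℂ} {a : ℕ → ℂ}
    {u e : ℕ → Fin 2 → ℂ} {B : ℝ} (hB : 1 ≤ B) (hM : ∀ j, ‖M j‖ ≤ B) (ha : ∀ j, ‖a j‖ ≤ B)
    (hR0 : R 0 = 1) (hR : ∀ j, R (j + 1) = M j * R j)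
    (hu : ∀ j, (M j).mulVec (u j) = a j • u (j + 1) - e j) (n : ℕ) :
    ‖(R n).mulVec (u 0)‖ ≤ (∏ j ∈ Finset.range n, ‖a j‖) * ‖u n‖ +
      (2 * B) ^ n * ∑ j ∈ Finset.range n, ‖e j‖ := by
  have key : ‖(R n).mulVec (u 0) - (∏ j ∈ Finset.range n, a j) • u n‖ ≤
      (2 * B) ^ n * ∑ j ∈ Finset.range n, ‖e j‖ := by
    induction n with
    | zero => simp [hR0]
    | succ n ih =>
      set p := ∏ j ∈ Finset.range n, a j with hp
      have hpn : ‖p‖ ≤ (2 * B) ^ (n + 1) := by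
        rw [hp, norm_prod]
        calc _ ≤ ∏ _j ∈ Finset.range n, (2 * B) :=
              Finset.prod_le_prod (fun j _ => norm_nonneg _) fun j _ => (ha j).trans (by linarith)
          _ = (2 * B) ^ n := by simp
          _ ≤ _ := pow_le_pow_right₀ (by linarith) (by omega)
      have e1 : (R (n + 1)).mulVec (u 0) - (∏ j ∈ Finset.range (n + 1), a j) • u (n + 1) =
          (M n).mulVec ((R n).mulVec (u 0) - p • u n) - p • e n := by
        rw [hR, ← Matrix.mulVec_mulVec, Matrix.mulVec_sub, Matrix.mulVec_smul, hu,
          Finset.prod_range_succ, smul_sub, smul_smul]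
        abel
      rw [e1, Finset.sum_range_succ, mul_add]
      refine (norm_sub_le _ _).trans (add_le_add ((norm_mulVec_le _ _).trans ?_) ?_)
      · calc _ ≤ 2 * B * ((2 * B) ^ n * ∑ j ∈ Finset.range n, ‖e j‖) :=
              mul_le_mul (by linarith [hM n]) ih (norm_nonneg _) (by linarith)
          _ = _ := by rw [pow_succ']; ring
      · rw [norm_smul]
        gcongr
  have h := norm_sub_norm_le ((R n).mulVec (u 0)) ((∏ j ∈ Finset.range n, a j) • u n)
  rw [norm_smul, norm_prod] at h
  linarith

variable {l1 l2 l3 β E θ : ℝ} {ψ φ : ℤ → ℂ}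

/-- `φ = (H - E) ψ` for the extended Harper operator with phase `θ`. -/
def IsResidual (l1 l2 l3 β E θ : ℝ) (ψ φ : ℤ → ℂ) : Prop :=
  ∀ k : ℤ, φ k = ((2 * Real.cos (2 * π * (θ + β * k)) : ℝ) : ℂ) * ψ k +
    harperC l1 l2 l3 β ((θ + β * k : ℝ) : ℂ) * ψ (k + 1) +
    (starRingEnd ℂ) (harperC l1 l2 l3 β ((θ + β * (k - 1) : ℝ) : ℂ)) * ψ (k - 1) - E * ψ k

lemma IsResidual.mulVec_eq (h : IsResidual l1 l2 l3 β E θ ψ φ) (k : ℤ) :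
    (harperA l1 l2 l3 β E ((θ + β * k : ℝ) : ℂ)).mulVec ![ψ k, ψ (k - 1)] =
      harperC l1 l2 l3 β ((θ + β * k : ℝ) : ℂ) • ![ψ (k + 1), ψ (k + 1 - 1)] - ![φ k, 0] := by
  have hk := h k
  rw [conj_harperC] at hk
  have e : (((θ + β * k : ℝ) : ℂ) - β) = ((θ + β * (k - 1) : ℝ) : ℂ) := by push_cast; ring
  ext i
  fin_cases i
  · simp [harperA, hk, Matrix.mulVec, dotProduct, Fin.sum_univ_two, e, -Complex.ofReal_add,
      -Complex.ofReal_mul]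
    push_cast
    ring
  · simp [harperA, Matrix.mulVec, dotProduct, Fin.sum_univ_two]

lemma IsResidual.adjugate_mulVec_eq (h : IsResidual l1 l2 l3 β E θ ψ φ) (k : ℤ) :
    (harperA l1 l2 l3 β E ((θ + β * k : ℝ) : ℂ)).adjugate.mulVec ![ψ (k + 1), ψ k] =
      harperCt l1 l2 l3 β ((θ + β * (k - 1) : ℝ) : ℂ) • ![ψ k, ψ (k - 1)] - ![0, φ k] := by
  have hk := h k
  rw [conj_harperC] at hk
  have e : (((θ + β * k : ℝ) : ℂ) - β) = ((θ + β * (k - 1) : ℝ) : ℂ) := by push_cast; ring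
  ext i
  fin_cases i
  · simp [harperA, Matrix.mulVec, dotProduct, Fin.sum_univ_two, e, -Complex.ofReal_add,
      -Complex.ofReal_mul, Matrix.adjugate_fin_two]
  · simp [harperA, hk, Matrix.mulVec, dotProduct, Fin.sum_univ_two, e, -Complex.ofReal_add,
      -Complex.ofReal_mul, Matrix.adjugate_fin_two]
    push_cast
    ring

lemma norm_vec_le {a b : ℂ} {S : ℝ} (ha : ‖a‖ ≤ S) (hb : ‖b‖ ≤ S) : ‖![a, b]‖ ≤ S := by
  refine (pi_norm_le_iff_of_nonneg ((norm_nonneg a).trans ha)).mpr fun i => ?_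
  fin_cases i
  · exact ha
  · exact hb

lemma norm_harperC_le (x : ℝ) :
    ‖harperC l1 l2 l3 β x‖ ≤ ‖harperA l1 l2 l3 β E x‖ := by
  simpa [harperA] using norm_entry_le (harperA l1 l2 l3 β E x) 1 0

lemma IsResidual.norm_forward_le (h : IsResidual l1 l2 l3 β E θ ψ φ) {B : ℝ} (hB : 1 ≤ B)
    (hA : ∀ x : ℝ, ‖harperA l1 l2 l3 β E x‖ ≤ B) (k : ℤ) (n : ℕ) :
    ‖(it (harperA l1 l2 l3 β E) β n ((θ + β * k : ℝ) : ℂ)).mulVec ![ψ k, ψ (k - 1)]‖ ≤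
      (∏ j ∈ Finset.range n, ‖harperC l1 l2 l3 β ((θ + β * k + j * β : ℝ))‖) *
        ‖![ψ (k + n), ψ (k + n - 1)]‖ + (2 * B) ^ n * ∑ j ∈ Finset.range n, ‖φ (k + j)‖ := by
  have hx : ∀ j : ℕ, θ + β * k + j * β = θ + β * ((k + j : ℤ) : ℝ) := fun j => by push_cast; ring
  have := norm_mulVec_le_of_step (M := fun j : ℕ => harperA l1 l2 l3 β E ((θ + β * k + j * β : ℝ)))
    (R := fun j => it (harperA l1 l2 l3 β E) β j ((θ + β * k : ℝ) : ℂ))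
    (a := fun j : ℕ => harperC l1 l2 l3 β ((θ + β * k + j * β : ℝ)))
    (u := fun j : ℕ => ![ψ (k + j), ψ (k + j - 1)]) (e := fun j : ℕ => ![φ (k + j), 0]) hB
    (fun j => hA _) (fun j => (norm_harperC_le _).trans (hA _)) rfl
    (fun j => by rw [it_succ']; push_cast; rfl)
    (fun j => by
      simp only [hx]
      rw [h.mulVec_eq]
      push_cast
      rw [add_assoc k]) n
  simp only [Nat.cast_zero, add_zero] at this
  refine this.trans ?_
  gcongr
  exact norm_vec_le le_rfl (by simp)

lemma IsResidual.norm_backward_le (h : IsResidual l1 l2 l3 β E θ ψ φ) {B : ℝ} (hB : 1 ≤ B)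
    (hA : ∀ x : ℝ, ‖harperA l1 l2 l3 β E x‖ ≤ B) (k : ℤ) (n : ℕ) :
    ‖(it (harperA l1 l2 l3 β E) β n ((θ + β * k - n * β : ℝ) : ℂ)).adjugate.mulVec
        ![ψ k, ψ (k - 1)]‖ ≤
      (∏ j ∈ Finset.range n, ‖harperC l1 l2 l3 β ((θ + β * k - n * β - β + j * β : ℝ))‖) *
        ‖![ψ (k - n), ψ (k - n - 1)]‖ +
        (2 * B) ^ n * ∑ j ∈ Finset.range n, ‖φ (k - j - 1)‖ := by
  have hx : ∀ j : ℕ, θ + β * k - (j + 1 : ℕ) * β = θ + β * ((k - j - 1 : ℤ) : ℝ) := fun j => by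
    push_cast; ring
  have := norm_mulVec_le_of_step
    (M := fun j : ℕ => (harperA l1 l2 l3 β E ((θ + β * k - (j + 1 : ℕ) * β : ℝ))).adjugate)
    (R := fun j : ℕ => (it (harperA l1 l2 l3 β E) β j ((θ + β * k - j * β : ℝ) : ℂ)).adjugate)
    (a := fun j : ℕ => harperCt l1 l2 l3 β ((θ + β * k - (j + 1 : ℕ) * β - β : ℝ)))
    (u := fun j : ℕ => ![ψ (k - j), ψ (k - j - 1)]) (e := fun j : ℕ => ![0, φ (k - j - 1)]) hB
    (fun j => by rw [norm_adjugate_mat]; exact hA _)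
    (fun j => by rw [norm_harperCt]; exact (norm_harperC_le _).trans (hA _)) (by simp [it])
    (fun j => by
      rw [← Matrix.adjugate_mul_distrib, it]
      congr 3
      push_cast
      ring)
    (fun j => by
      have e := h.adjugate_mulVec_eq (k - j - 1)
      rw [sub_add_cancel] at e
      simp only [hx]
      rw [e]
      push_cast
      rw [sub_sub (k : ℤ) j 1]
      congr 3
      ring) n
  simp only [Nat.cast_zero, sub_zero] at this
  refine this.trans ?_
  have e2 : ∏ j ∈ Finset.range n, ‖harperCt l1 l2 l3 β ((θ + β * k - (j + 1 : ℕ) * β - β : ℝ))‖ =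
      ∏ j ∈ Finset.range n, ‖harperC l1 l2 l3 β ((θ + β * k - n * β - β + j * β : ℝ))‖ := by
    rw [← Finset.prod_range_reflect]
    refine Finset.prod_congr rfl fun j hj => ?_
    rw [norm_harperCt]
    have hj' := Finset.mem_range.mp hj
    have : ((n - 1 - j + 1 : ℕ) : ℝ) = n - j := by
      rw [show n - 1 - j + 1 = n - j by omega, Nat.cast_sub hj'.le]
    rw [this]
    congr 3
    ring
  rw [e2]
  gcongr
  exact norm_vec_le (by simp) le_rfl

set_option maxHeartbeats 800000 in
/-- Exponential decay across good blocks: every value of `ψ` is controlled by a small multiple of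
neighbouring values, up to the residual. -/
lemma exists_local_estimate (hβ : Irrational β) (hm : 0 < max l1 l3) (h1 : 0 ≤ l1) (h2 : 0 ≤ l2)
    (h3 : 0 ≤ l3) (h : l2 ≤ l1 + l3) (h13 : 1 ≤ l1 + l3) {δ : ℝ} (hδ : 0 < δ)
    (hbig : ∀ n : ℕ, 1 ≤ n → ∃ x : ℝ, Real.exp ((Real.log (max l1 l3) + δ) * n) ≤
      ‖it (harperA l1 l2 l3 β E) β n x‖) (θ : ℝ) :
    ∃ (N : ℕ) (s C : ℝ), 0 ≤ s ∧ 0 ≤ C ∧ (2 * N + 1) * s ≤ 1 / 2 ∧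
      ∀ ψ φ : ℤ → ℂ, IsResidual l1 l2 l3 β E θ ψ φ → ∀ k : ℤ,
        ‖ψ k‖ ≤ ∑ j ∈ Finset.Icc (-(N : ℤ)) N, (s * ‖ψ (k + j)‖ + C * ‖φ (k + j)‖) := by
  obtain ⟨Λ, hΛ, κ₀, hκ₀, hblock⟩ := exists_good_block_harperA hβ hm h1 h2 h3 h h13 hδ hbig
  set m₀ := Real.log (max l1 l3) with hm₀
  set A := harperA l1 l2 l3 β E with hAdef
  set κ := min κ₀ (δ / 64) with hκ
  have hκ0 : 0 < κ := lt_min hκ₀ (by positivity)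
  have hκδ : κ ≤ δ / 64 := min_le_right _ _
  obtain ⟨hrate, hn⟩ := hblock κ hκ0 (min_le_left _ _)
  obtain ⟨K₁, η₁, hK₁, hη₁, hgrow⟩ := hrate.exists_growth_bound harperA_add_one continuous_harperA
  obtain ⟨K₂, η₂, hK₂, hη₂, hprod⟩ := exists_prod_harperC_le (β := β) hβ hm h1 h2 h3 h hκ0
  obtain ⟨B, hB, hAB⟩ := exists_bound_line (A := A) harperA_add_one continuous_harperA 0
  replace hgrow := hgrow β (by simpa using hη₁)
  replace hprod := hprod β (by simpa using hη₂)
  simp only [pt_zero] at hgrow hAB hn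
  obtain ⟨n₀, hn₀⟩ := eventually_atTop.mp
    (eventually_mul_pow_le_exp (κ := δ / 32) (by positivity) (24 * (K₁ * K₂)) 1)
  obtain ⟨n, hn₀n, hgood⟩ := hn n₀
  have hsmall := hn₀ n hn₀n
  rw [pow_one] at hsmall
  set g := Real.exp ((Λ - κ) * n) with hg
  set U := K₁ * Real.exp (|Λ + κ| * n) with hU
  have hg0 : 0 < g := Real.exp_pos _
  have hU0 : 0 ≤ U := by positivity
  refine ⟨n + 1, 4 * (K₁ * K₂) * Real.exp (-(δ / 32) * n), 4 * U * ((2 * B) ^ n * n) / g,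
    by positivity, by positivity, ?_, fun ψ φ hres k => ?_⟩
  · have e : Real.exp (-(δ / 32) * n) * Real.exp (δ / 32 * n) = 1 := by
      rw [← Real.exp_add, neg_mul, neg_add_cancel, Real.exp_zero]
    have : (24 * (K₁ * K₂) * (n + 1)) * Real.exp (-(δ / 32) * n) ≤ 1 := by
      calc _ ≤ Real.exp (δ / 32 * n) * Real.exp (-(δ / 32) * n) := by gcongr
        _ = 1 := by rw [mul_comm, e]
    have h0 : 0 ≤ K₁ * K₂ * Real.exp (-(δ / 32) * n) := by positivity
    push_cast
    nlinarith [mul_nonneg h0 (Nat.cast_nonneg (α := ℝ) n)]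
  rw [Finset.sum_add_distrib, ← Finset.mul_sum, ← Finset.mul_sum]
  set S := ∑ j ∈ Finset.Icc (-((n + 1 : ℕ) : ℤ)) (n + 1 : ℕ), ‖ψ (k + j)‖ with hS
  set F := ∑ j ∈ Finset.Icc (-((n + 1 : ℕ) : ℤ)) (n + 1 : ℕ), ‖φ (k + j)‖ with hF
  have hmem : ∀ (f : ℤ → ℂ) (i : ℤ), k - (n + 1) ≤ i → i ≤ k + (n + 1) →
      ‖f i‖ ≤ ∑ j ∈ Finset.Icc (-((n + 1 : ℕ) : ℤ)) (n + 1 : ℕ), ‖f (k + j)‖ := by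
    intro f i hi1 hi2
    have := Finset.single_le_sum (f := fun j => ‖f (k + j)‖) (fun j _ => norm_nonneg _)
      (show i - k ∈ Finset.Icc (-((n + 1 : ℕ) : ℤ)) (n + 1 : ℕ) by
        rw [Finset.mem_Icc]; push_cast; omega)
    simpa using this
  have hF0 : 0 ≤ F := Finset.sum_nonneg fun _ _ => norm_nonneg _
  have hS0 : 0 ≤ S := Finset.sum_nonneg fun _ _ => norm_nonneg _
  obtain ⟨n₂, hn₂l, hn₂u, hlarge⟩ := hgood (θ + β * k)
  have hn₂n : n₂ ≤ n := by
    have : (n₂ : ℝ) ≤ n := hn₂u.trans (by nlinarith [Nat.cast_nonneg (α := ℝ) n])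
    exact_mod_cast this
  obtain ⟨n₁, rfl⟩ := Nat.exists_eq_add_of_le' hn₂n
  have hv : ‖ψ k‖ ≤ ‖![ψ k, ψ (k - 1)]‖ := norm_le_pi_norm ![ψ k, ψ (k - 1)] 0
  set v : Fin 2 → ℂ := ![ψ k, ψ (k - 1)] with hvdef
  set P := it A β n₁ ((θ + β * k : ℝ) : ℂ) with hP
  set Q := it A β n₂ ((θ + β * k - n₂ * β : ℝ) : ℂ) with hQ
  have hPQ : it A β (n₁ + n₂) ((θ + β * k - n₂ * β : ℝ) : ℂ) = P * Q := by
    rw [it_add, hP, hQ]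
    congr 2
    push_cast; ring
  rw [hPQ] at hlarge
  have hfw : ‖P.mulVec v‖ ≤ K₂ * Real.exp ((m₀ + κ) * n₁) * S +
      (2 * B) ^ (n₁ + n₂) * ((n₁ + n₂ : ℕ) * F) := by
    refine (hres.norm_forward_le hB hAB k n₁).trans ?_
    gcongr
    · exact hprod _ _
    · exact norm_vec_le (hmem ψ _ (by omega) (by push_cast; omega))
        (hmem ψ _ (by omega) (by push_cast; omega))
    · linarith
    · omega
    · calc _ ≤ ∑ j ∈ Finset.range n₁, F := Finset.sum_le_sum fun j hj =>
            hmem φ _ (by omega) (by have := Finset.mem_range.mp hj; push_cast; omega)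
        _ = n₁ * F := by simp
        _ ≤ _ := by gcongr; omega
  have hbw : ‖Q.adjugate.mulVec v‖ ≤ K₂ * Real.exp ((m₀ + κ) * n₂) * S +
      (2 * B) ^ (n₁ + n₂) * ((n₁ + n₂ : ℕ) * F) := by
    refine (hres.norm_backward_le hB hAB k n₂).trans ?_
    gcongr
    · exact hprod _ _
    · exact norm_vec_le (hmem ψ _ (by push_cast; omega) (by push_cast; omega))
        (hmem ψ _ (by push_cast; omega) (by push_cast; omega))
    · linarith
    · calc _ ≤ ∑ j ∈ Finset.range n₂, F := Finset.sum_le_sum fun j hj =>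
            hmem φ _ (by have := Finset.mem_range.mp hj; push_cast; omega) (by push_cast; omega)
        _ = n₂ * F := by simp
        _ ≤ _ := by gcongr
  have hUle : ∀ i : ℕ, i ≤ n₁ + n₂ → K₁ * Real.exp ((Λ + κ) * i) ≤ U := by
    intro i hi
    have : (i : ℝ) ≤ (n₁ + n₂ : ℕ) := by exact_mod_cast hi
    rw [hU]
    gcongr
    exact le_abs_self _
  have hPn := hgrow n₁ (θ + β * k)
  have hQn := hgrow n₂ (θ + β * k - n₂ * β)
  have hexp : ∀ i j : ℕ, i + j = n₁ + n₂ → 1 / 16 * ((n₁ + n₂ : ℕ) : ℝ) ≤ i →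
      K₁ * Real.exp ((Λ + κ) * j) * (K₂ * Real.exp ((m₀ + κ) * i)) ≤
        K₁ * K₂ * Real.exp (-(δ / 32) * (n₁ + n₂ : ℕ)) * g := by
    intro i j hij hi
    have hij' : (i : ℝ) + j = (n₁ + n₂ : ℕ) := by exact_mod_cast hij
    calc _ = K₁ * K₂ * Real.exp ((Λ + κ) * j + (m₀ + κ) * i) := by rw [Real.exp_add]; ring
      _ ≤ K₁ * K₂ * Real.exp (-(δ / 32) * (n₁ + n₂ : ℕ) + (Λ - κ) * (n₁ + n₂ : ℕ)) := by
        refine mul_le_mul_of_nonneg_left (Real.exp_le_exp.mpr ?_) (by positivity)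
        rw [← hij'] at hi ⊢
        have hi0 : (0 : ℝ) ≤ i := Nat.cast_nonneg _
        have hj0 : (0 : ℝ) ≤ j := Nat.cast_nonneg _
        nlinarith
      _ = _ := by rw [Real.exp_add]; ring
  have hx1 := hexp n₁ n₂ rfl (by push_cast at hn₂u ⊢; linarith)
  have hx2 := hexp n₂ n₁ (add_comm _ _) hn₂l
  have hmain := norm_mul_norm_le P Q v
  set s₀ := K₁ * K₂ * Real.exp (-(δ / 32) * (n₁ + n₂ : ℕ)) with hs₀
  set R := (2 * B) ^ (n₁ + n₂) * ((n₁ + n₂ : ℕ) : ℝ) with hR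
  have hR0 : 0 ≤ R := by positivity
  have hQt : ‖Q‖ * ‖P.mulVec v‖ ≤ s₀ * g * S + U * (R * F) := by
    calc _ ≤ ‖Q‖ * (K₂ * Real.exp ((m₀ + κ) * n₁) * S + (2 * B) ^ (n₁ + n₂) *
            ((n₁ + n₂ : ℕ) * F)) := by gcongr
      _ = ‖Q‖ * (K₂ * Real.exp ((m₀ + κ) * n₁)) * S + ‖Q‖ * (R * F) := by rw [hR]; ring
      _ ≤ _ := by
        refine add_le_add (mul_le_mul_of_nonneg_right ?_ hS0)
          (mul_le_mul_of_nonneg_right (hQn.trans (hUle _ (by omega))) (by positivity))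
        exact (mul_le_mul_of_nonneg_right hQn (by positivity)).trans hx1
  have hPt : ‖P‖ * ‖Q.adjugate.mulVec v‖ ≤ s₀ * g * S + U * (R * F) := by
    calc _ ≤ ‖P‖ * (K₂ * Real.exp ((m₀ + κ) * n₂) * S + (2 * B) ^ (n₁ + n₂) *
            ((n₁ + n₂ : ℕ) * F)) := by gcongr
      _ = ‖P‖ * (K₂ * Real.exp ((m₀ + κ) * n₂)) * S + ‖P‖ * (R * F) := by rw [hR]; ring
      _ ≤ _ := by
        refine add_le_add (mul_le_mul_of_nonneg_right ?_ hS0)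
          (mul_le_mul_of_nonneg_right (hPn.trans (hUle _ (by omega))) (by positivity))
        exact (mul_le_mul_of_nonneg_right hPn (by positivity)).trans hx2
  have hfin : g * ‖v‖ ≤ g * (4 * s₀ * S + 4 * U * R / g * F) := by
    have e : g * (4 * s₀ * S + 4 * U * R / g * F) = 4 * (s₀ * g * S + U * (R * F)) := by
      field_simp
    rw [e]
    have : g * ‖v‖ ≤ ‖P * Q‖ * ‖v‖ := by gcongr
    linarith
  have hfin' := hv.trans (le_of_mul_le_mul_left hfin hg0)
  rw [hs₀, ← mul_assoc] at hfin'
  exact hfin'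

end ExtendedHarper

namespace ExtendedHarper

lemma summable_norm_rpow_add (f : lp (fun _ : ℤ => ℂ) 2) (j : ℤ) :
    Summable fun k : ℤ => ‖f (k + j)‖ ^ (2 : ℝ≥0∞).toReal :=
  (Equiv.addRight j).summable_iff.mpr ((lp.memℓp f).summable (by simp))

/-- The sequence `k ↦ ‖f (k + j)‖`. -/
def absShift (f : lp (fun _ : ℤ => ℂ) 2) (j : ℤ) : lp (fun _ : ℤ => ℝ) 2 :=
  ⟨fun k => ‖f (k + j)‖, (memℓp_gen_iff (by simp)).mpr (by
    simpa only [norm_norm] using summable_norm_rpow_add f j)⟩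

lemma absShift_apply (f : lp (fun _ : ℤ => ℂ) 2) (j k : ℤ) : absShift f j k = ‖f (k + j)‖ := rfl

lemma norm_absShift (f : lp (fun _ : ℤ => ℂ) 2) (j : ℤ) : ‖absShift f j‖ = ‖f‖ := by
  rw [lp.norm_eq_tsum_rpow (by simp), lp.norm_eq_tsum_rpow (by simp)]
  congr 1
  simp only [absShift_apply, norm_norm]
  exact (Equiv.addRight j).tsum_eq fun k => ‖f k‖ ^ (2 : ℝ≥0∞).toReal

/-- A pointwise local estimate with small coefficients gives a global `ℓ²` estimate. -/
lemma norm_le_of_local_estimate {f g : lp (fun _ : ℤ => ℂ) 2} {N : ℕ} {s C : ℝ} (hs : 0 ≤ s)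
    (hC : 0 ≤ C) (hsmall : (2 * N + 1) * s ≤ 1 / 2)
    (h : ∀ k : ℤ, ‖f k‖ ≤ ∑ j ∈ Finset.Icc (-(N : ℤ)) N, (s * ‖f (k + j)‖ + C * ‖g (k + j)‖)) :
    ‖f‖ ≤ 2 * ((2 * N + 1) * C) * ‖g‖ := by
  set y : lp (fun _ : ℤ => ℝ) 2 :=
    ∑ j ∈ Finset.Icc (-(N : ℤ)) N, (s • absShift f j + C • absShift g j) with hy
  have hyk : ∀ k, y k = ∑ j ∈ Finset.Icc (-(N : ℤ)) N, (s * ‖f (k + j)‖ + C * ‖g (k + j)‖) := by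
    intro k
    rw [hy, lp.coeFn_sum, Finset.sum_apply]
    rfl
  have h1 : ‖f‖ ≤ ‖y‖ := by
    refine lp.norm_mono (by simp) fun k => ?_
    rw [hyk]
    exact (h k).trans (Real.le_norm_self _)
  have h2 : ‖y‖ ≤ (2 * N + 1) * (s * ‖f‖ + C * ‖g‖) := by
    refine (norm_sum_le _ _).trans ?_
    calc _ ≤ ∑ _j ∈ Finset.Icc (-(N : ℤ)) N, (s * ‖f‖ + C * ‖g‖) :=
          Finset.sum_le_sum fun j _ => by
            refine (norm_add_le _ _).trans ?_
            rw [norm_smul, norm_smul, norm_absShift, norm_absShift, Real.norm_of_nonneg hs,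
              Real.norm_of_nonneg hC]
      _ = _ := by
        have : ((N : ℤ) + 1 - -(N : ℤ)).toNat = 2 * N + 1 := by omega
        rw [Finset.sum_const, Int.card_Icc, this, nsmul_eq_mul]
        push_cast
        ring
  nlinarith [mul_le_mul_of_nonneg_right hsmall (norm_nonneg f)]

variable {l1 l2 l3 β E θ : ℝ} {H : lp (fun _ : ℤ => ℂ) 2 →L[ℂ] lp (fun _ : ℤ => ℂ) 2}

lemma isResidual_of_apply
    (hH : ∀ (ψ : lp (fun _ : ℤ => ℂ) 2) (k : ℤ),
      H ψ k = ((2 * Real.cos (2 * π * (θ + β * k)) : ℝ) : ℂ) * ψ k +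
        harperC l1 l2 l3 β ((θ + β * k : ℝ) : ℂ) * ψ (k + 1) +
        (starRingEnd ℂ) (harperC l1 l2 l3 β ((θ + β * (k - 1) : ℝ) : ℂ)) * ψ (k - 1))
    (ψ : lp (fun _ : ℤ => ℂ) 2) :
    IsResidual l1 l2 l3 β E θ ψ ((H - algebraMap ℂ _ (E : ℂ)) ψ : lp (fun _ : ℤ => ℂ) 2) := by
  intro k
  rw [← hH]
  rfl

/-- The coordinates of `(H - E) ψ` are inner products with `(H - E)` applied to the basis. -/
lemma apply_eq_inner
    (hH : ∀ (ψ : lp (fun _ : ℤ => ℂ) 2) (k : ℤ),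
      H ψ k = ((2 * Real.cos (2 * π * (θ + β * k)) : ℝ) : ℂ) * ψ k +
        harperC l1 l2 l3 β ((θ + β * k : ℝ) : ℂ) * ψ (k + 1) +
        (starRingEnd ℂ) (harperC l1 l2 l3 β ((θ + β * (k - 1) : ℝ) : ℂ)) * ψ (k - 1))
    (ψ : lp (fun _ : ℤ => ℂ) 2) (k : ℤ) :
    (H - algebraMap ℂ _ (E : ℂ)) ψ k =
      inner ℂ ((H - algebraMap ℂ _ (E : ℂ)) (lp.single 2 k 1)) ψ := by
  set w : ℤ → ℝ := fun k => 2 * Real.cos (2 * π * (θ + β * k)) - E with hw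
  set c : ℤ → ℂ := fun k => harperC l1 l2 l3 β ((θ + β * k : ℝ) : ℂ) with hc
  have hT : ∀ (χ : lp (fun _ : ℤ => ℂ) 2) (i : ℤ), (H - algebraMap ℂ _ (E : ℂ)) χ i =
      w i * χ i + c i * χ (i + 1) + (starRingEnd ℂ) (c (i - 1)) * χ (i - 1) := by
    intro χ i
    rw [isResidual_of_apply hH χ i, hw, hc]
    push_cast
    ring
  have hsingle : (H - algebraMap ℂ _ (E : ℂ)) (lp.single 2 k 1) =
      (w k : ℂ) • lp.single 2 k (1 : ℂ) + c (k - 1) • lp.single 2 (k - 1) (1 : ℂ) +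
        (starRingEnd ℂ) (c k) • lp.single 2 (k + 1) (1 : ℂ) := by
    ext i
    rw [hT]
    simp only [lp.coeFn_add, lp.coeFn_smul, Pi.add_apply, Pi.smul_apply, lp.coeFn_single,
      Pi.single_apply, smul_eq_mul]
    rcases eq_or_ne i k with rfl | h0
    · simp [show i ≠ i - 1 by omega]
    rcases eq_or_ne i (k - 1) with rfl | h1
    · simp [show k - 1 - 1 ≠ k by omega, show k - 1 ≠ k + 1 by omega]
    rcases eq_or_ne i (k + 1) with rfl | h2
    · simp [show k + 1 + 1 ≠ k by omega, show k + 1 ≠ k - 1 by omega]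
    · simp [h0, h1, h2, show i + 1 ≠ k by omega, show i - 1 ≠ k by omega]
  rw [hT, hsingle]
  simp only [inner_add_left, inner_smul_left, lp.inner_single_left, Complex.conj_ofReal,
    RCLike.conj_conj]
  simp
  ring

lemma isUnit_sub_of_bound
    (hH : ∀ (ψ : lp (fun _ : ℤ => ℂ) 2) (k : ℤ),
      H ψ k = ((2 * Real.cos (2 * π * (θ + β * k)) : ℝ) : ℂ) * ψ k +
        harperC l1 l2 l3 β ((θ + β * k : ℝ) : ℂ) * ψ (k + 1) +
        (starRingEnd ℂ) (harperC l1 l2 l3 β ((θ + β * (k - 1) : ℝ) : ℂ)) * ψ (k - 1))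
    {C : ℝ} (hC : 0 ≤ C) (hb : ∀ ψ, ‖ψ‖ ≤ C * ‖(H - algebraMap ℂ _ (E : ℂ)) ψ‖) :
    IsUnit (H - algebraMap ℂ _ (E : ℂ)) := by
  rw [ContinuousLinearMap.isUnit_iff_bijective,
    ContinuousLinearMap.bijective_iff_dense_range_and_antilipschitz]
  refine ⟨?_, ⟨C, hC⟩, ContinuousLinearMap.antilipschitz_of_bound _ hb⟩
  rw [Submodule.topologicalClosure_eq_top_iff, Submodule.eq_bot_iff]
  intro x hx
  have h0 : (H - algebraMap ℂ _ (E : ℂ)) x = 0 := by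
    ext k
    rw [apply_eq_inner hH]
    exact hx _ ⟨_, rfl⟩
  have := hb x
  rw [h0, norm_zero, mul_zero] at this
  exact norm_le_zero_iff.mp this

end ExtendedHarper

/-- For irrational `β` and coupling `λ` in region III
(`max {1, λ₂} ≤ λ₁ + λ₃`), for every real energy `E` in the spectrum of the extended Harper
operator, the Lyapunov exponent of the transfer-matrix cocycle equals `log (max λ₁ λ₃)`
(equivalently, the Lyapunov exponent `L(β, B^E)` vanishes on the spectrum in region III). -/
theorem extendedHarper_lyapunov_regionIII
    (β lam1 lam2 lam3 θ : ℝ) (hβ : Irrational β)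
    (h1 : 0 ≤ lam1) (h2 : 0 ≤ lam2) (h3 : 0 ≤ lam3)
    (hpos : 0 < lam1 ∨ 0 < lam2 ∨ 0 < lam3)
    (hIII : max 1 lam2 ≤ lam1 + lam3)
    (H : lp (fun _ : ℤ => ℂ) 2 →L[ℂ] lp (fun _ : ℤ => ℂ) 2)
    (hH : ∀ (ψ : lp (fun _ : ℤ => ℂ) 2) (k : ℤ),
      H ψ k = ((2 * Real.cos (2 * π * (θ + β * k)) : ℝ) : ℂ) * ψ k +
        harperC lam1 lam2 lam3 β ((θ + β * k : ℝ) : ℂ) * ψ (k + 1) +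
        (starRingEnd ℂ) (harperC lam1 lam2 lam3 β ((θ + β * (k - 1) : ℝ) : ℂ)) * ψ (k - 1))
    (E : ℝ) (hE : (E : ℂ) ∈ spectrum ℂ H) :
    lyapunov β (fun x : ℝ => harperA lam1 lam2 lam3 β (E : ℂ) (x : ℂ)) =
      ((Real.log (max lam1 lam3) : ℝ) : EReal) := by
  have hsum : 1 ≤ lam1 + lam3 := (le_max_left _ _).trans hIII
  have hm : 0 < max lam1 lam3 := by
    rw [lt_max_iff]
    by_contra! hcon
    linarith [hcon.1, hcon.2]
  have h213 : lam2 ≤ lam1 + lam3 := (le_max_right _ _).trans hIII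
  refine le_antisymm ?_ (ExtendedHarper.le_lyapunov hm h1 h2 h3 h213)
  by_contra! hlt
  obtain ⟨δ, hδ, hbig⟩ := ExtendedHarper.exists_rate_of_lt_lyapunov hlt
  obtain ⟨N, s, C, hs, hC, hsmall, hloc⟩ :=
    ExtendedHarper.exists_local_estimate hβ hm h1 h2 h3 h213 hsum hδ hbig θ
  have hunit := ExtendedHarper.isUnit_sub_of_bound (E := E) hH
    (C := 2 * ((2 * N + 1) * C)) (by positivity) fun ψ =>
      ExtendedHarper.norm_le_of_local_estimate hs hC hsmall
        (hloc _ _ (ExtendedHarper.isResidual_of_apply hH ψ))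
  rw [← IsUnit.neg_iff, neg_sub] at hunit
  exact spectrum.mem_iff.mp hE hunit
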